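/- Let (K, ρ) be a finite dimensional compact metric space, and for each n ≥ 1 let ρ_n be the distance on Kⁿ defined by ρ_n((x₀,…,x_{n−1}), (y₀,…,y_{n−1})) = max_{0≤i<n} ρ(x_i, y_i). Then there exists δ > 0 such that for every n ≥ 1, widim_δ(Kⁿ, ρ_n) ≥ n·(dim K − 1). -/

import Mathlib

open Filter Set
open scoped ENNReal

namespace MeanDimPaper

variable {X : Type*} [TopologicalSpace X]

/-- `α` is an open cover of `X`. -/
def IsOpenCover (α : Set (Set X)) : Prop :=
  (∀ U ∈ α, IsOpen U) ∧ ⋃₀ α = Set.univ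

/-- The order of a cover `α`: the maximum `n ≥ 0` such that there exist `n + 1`
pairwise distinct members of `α` with nonempty common intersection. -/
noncomputable def ord (α : Set (Set X)) : ℕ∞ :=
  ⨆ n ∈ {n : ℕ | ∃ f : Fin (n + 1) → Set X,
      Function.Injective f ∧ (∀ i, f i ∈ α) ∧ (⋂ i, f i).Nonempty}, (n : ℕ∞)

/-- `β` refines `α`: every member of `β` is contained in some member of `α`. -/
def Refines (β α : Set (Set X)) : Prop := ∀ V ∈ β, ∃ U ∈ α, V ⊆ U

/-- `D(α)`: the minimum of `ord β` over open covers `β` refining `α`. -/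
noncomputable def covD (α : Set (Set X)) : ℕ∞ :=
  ⨅ β ∈ {β : Set (Set X) | IsOpenCover β ∧ Refines β α}, ord β

/-- Topological (covering) dimension: the supremum of `D(α)` over open covers `α`. -/
noncomputable def topDim (X : Type*) [TopologicalSpace X] : ℕ∞ :=
  ⨆ α ∈ {α : Set (Set X) | IsOpenCover α}, covD α

/-- Diameter of a set with respect to a distance function `d`. -/
noncomputable def diamD (d : X → X → ℝ) (U : Set X) : ℝ :=
  sSup {r | ∃ x ∈ U, ∃ y ∈ U, r = d x y}

/-- Mesh of a cover: the supremum of the diameters of its members. -/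
noncomputable def mesh (d : X → X → ℝ) (α : Set (Set X)) : ℝ :=
  sSup (diamD d '' α)

/-- `widim_ε(X, d)`: the minimum of `D(α)` over open covers `α` with `mesh(α, d) < ε`. -/
noncomputable def widim (ε : ℝ) (d : X → X → ℝ) : ℕ∞ :=
  ⨅ α ∈ {α : Set (Set X) | IsOpenCover α ∧ mesh d α < ε}, covD α

/-- `d` is a metric on `X` compatible with the topology of `X`. -/
structure IsCompatMetric {X : Type*} [TopologicalSpace X] (d : X → X → ℝ) : Prop where
  refl : ∀ x, d x x = 0
  eq_of : ∀ x y, d x y = 0 → x = y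
  symm : ∀ x y, d x y = d y x
  triangle : ∀ x y z, d x z ≤ d x y + d y z
  isOpen_iff : ∀ U : Set X, IsOpen U ↔ ∀ x ∈ U, ∃ ε > 0, ∀ y, d x y < ε → y ∈ U

/-- The dynamical distance `d_n(x, y) = max_{0 ≤ i < n} d(Tⁱ x, Tⁱ y)`. -/
noncomputable def dynDist (d : X → X → ℝ) (T : X → X) (n : ℕ) (x y : X) : ℝ :=
  sSup {r | ∃ i < n, r = d (T^[i] x) (T^[i] y)}

/-- Mean dimension `mdim(X, T)` computed with the metric `d`:
`lim_{ε → 0} lim_{n → ∞} widim_ε(X, d_n) / n`.  The inner limit exists (by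
subadditivity of `n ↦ widim_ε(X, d_n)`) so it coincides with the liminf, and the inner
quantity is monotone as `ε` decreases, so the limit as `ε → 0` is the supremum over
`ε > 0`. -/
noncomputable def mdim (T : X → X) (d : X → X → ℝ) : ℝ≥0∞ :=
  ⨆ (ε : ℝ) (_ : 0 < ε),
    Filter.liminf (fun n : ℕ => (widim ε (dynDist d T n) : ℝ≥0∞) / (n : ℝ≥0∞)) Filter.atTop

/-- The full shift `σ` on the alphabet `K`: `σ((xₙ)ₙ) = (xₙ₊₁)ₙ`. -/
def shift (K : Type*) : (ℤ → K) → ℤ → K := fun x n => x (n + 1)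

end MeanDimPaper

universe u

namespace WD

section Lists

variable {R : Type*} [CommRing R] {α β : Type*}

/-- Ordered chains: formal combinations of lists of points. -/
abbrev Ch (R : Type*) [CommRing R] (α : Type*) := List α →₀ R

/-- Prepend a vertex. -/
noncomputable def pre (x : α) : Ch R α →ₗ[R] Ch R α := Finsupp.lmapDomain R R (List.cons x)

@[simp] lemma pre_single (x : α) (l : List α) (a : R) :
    pre x (Finsupp.single l a) = Finsupp.single (x :: l) a := by
  simp [pre]

/-- Boundary of a list. -/
noncomputable def bdL : List α → Ch R α
  | [] => 0
  | x :: l => Finsupp.single l 1 - pre x (bdL l)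

/-- Boundary of a chain. -/
noncomputable def bd : Ch R α →ₗ[R] Ch R α := Finsupp.linearCombination R bdL

@[simp] lemma bd_single (l : List α) (a : R) : bd (Finsupp.single l a) = a • bdL l := by
  simp [bd]

/-- two linear maps on chains agree if they do on lists -/
lemma ch_ext {M : Type*} [AddCommGroup M] [Module R M] {f g : Ch R α →ₗ[R] M}
    (h : ∀ l, f (Finsupp.single l 1) = g (Finsupp.single l 1)) : f = g := by
  apply Finsupp.lhom_ext
  intro l a
  have := h l
  rw [← mul_one a, ← smul_eq_mul, ← Finsupp.smul_single, map_smul, map_smul, this]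

lemma bd_pre (x : α) (c : Ch R α) : bd (pre x c) = c - pre x (bd c) := by
  have : (bd ∘ₗ pre x : Ch R α →ₗ[R] Ch R α) = LinearMap.id - pre x ∘ₗ bd := by
    apply ch_ext; intro l; simp [bdL]
  exact congrArg (fun f => f c) this

lemma bd_bdL (l : List α) : bd (bdL l : Ch R α) = 0 := by
  induction l with
  | nil => simp [bdL]
  | cons x l ih => simp [bdL, bd_pre, ih]

lemma bd_bd (c : Ch R α) : bd (bd c) = 0 := by
  have : (bd ∘ₗ bd : Ch R α →ₗ[R] Ch R α) = 0 := by
    apply ch_ext; intro l; simp [bd_bdL]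
  exact congrArg (fun f => f c) this

/-- Evaluation of a cochain on a chain. -/
noncomputable def ev (f : List α → R) : Ch R α →ₗ[R] R := Finsupp.linearCombination R f

@[simp] lemma ev_single (f : List α → R) (l : List α) (a : R) :
    ev f (Finsupp.single l a) = a * f l := by
  simp [ev]

lemma ev_pre (f : List α → R) (x : α) (c : Ch R α) :
    ev f (pre x c) = ev (fun l => f (x :: l)) c := by
  have : (ev f ∘ₗ pre x : Ch R α →ₗ[R] R) = ev (fun l => f (x :: l)) := by
    apply ch_ext; intro l; simp
  exact congrArg (fun f => f c) this

lemma ev_sub (f g : List α → R) (c : Ch R α) : ev (fun l => f l - g l) c = ev f c - ev g c := by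
  have : (ev (fun l => f l - g l) : Ch R α →ₗ[R] R) = ev f - ev g := by
    apply ch_ext; intro l; simp
  exact congrArg (fun f => f c) this

lemma ev_mul (a : R) (f : List α → R) (c : Ch R α) : ev (fun l => a * f l) c = a * ev f c := by
  have : (ev (fun l => a * f l) : Ch R α →ₗ[R] R) = a • ev f := by
    apply ch_ext; intro l; simp
  exact congrArg (fun f => f c) this

/-- chains supported on a set of lists -/
abbrev Sup (R : Type*) [CommRing R] {α : Type*} (S : Set (List α)) : Submodule R (Ch R α) :=
  Finsupp.supported R R S

lemma single_mem_sup {S : Set (List α)} {l : List α} (h : l ∈ S) (a : R) :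
    Finsupp.single l a ∈ Sup R S := Finsupp.single_mem_supported R a h

lemma sup_mono {S T : Set (List α)} {c : Ch R α} (hc : c ∈ Sup R S) (h : ∀ l ∈ S, l ∈ T) :
    c ∈ Sup R T := Finsupp.supported_mono (R := R) (M := R) h hc

/-- induction for supported chains -/
lemma sup_induction {S : Set (List α)} {p : Ch R α → Prop} {c : Ch R α} (hc : c ∈ Sup R S)
    (h0 : p 0) (hadd : ∀ a b, p a → p b → p (a + b))
    (hs : ∀ l ∈ S, ∀ a : R, p (Finsupp.single l a)) : p c := by
  rw [← Finsupp.sum_single c, Finsupp.sum]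
  refine Finset.sum_induction _ p hadd h0 ?_
  intro l hl
  exact hs l ((Finsupp.mem_supported R c).1 hc hl) _

lemma map_mem_of_single {M : Type*} [AddCommGroup M] [Module R M] {S : Set (List α)}
    (f : Ch R α →ₗ[R] M) (N : Submodule R M) (h : ∀ l ∈ S, f (Finsupp.single l 1) ∈ N)
    {c : Ch R α} (hc : c ∈ Sup R S) : f c ∈ N := by
  refine sup_induction (p := fun c => f c ∈ N) hc (by simp) (fun a b ha hb => ?_) (fun l hl a => ?_)
  · rw [map_add]; exact N.add_mem ha hb
  · rw [← mul_one a, ← smul_eq_mul, ← Finsupp.smul_single, map_smul]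
    exact N.smul_mem _ (h l hl)

lemma map_congr_of_single {M : Type*} [AddCommGroup M] [Module R M] {S : Set (List α)}
    (f g : Ch R α →ₗ[R] M) (h : ∀ l ∈ S, f (Finsupp.single l 1) = g (Finsupp.single l 1))
    {c : Ch R α} (hc : c ∈ Sup R S) : f c = g c := by
  have := map_mem_of_single (f - g) ⊥ (fun l hl => by simp [h l hl]) hc
  simpa [sub_eq_zero] using this

lemma ev_eq_zero {S : Set (List α)} {f : List α → R} (h : ∀ l ∈ S, f l = 0)
    {c : Ch R α} (hc : c ∈ Sup R S) : ev f c = 0 := by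
  have := map_mem_of_single (ev f) ⊥ (fun l hl => by simp [h l hl]) hc
  simpa using this

lemma ev_congr {S : Set (List α)} {f g : List α → R} (h : ∀ l ∈ S, f l = g l)
    {c : Ch R α} (hc : c ∈ Sup R S) : ev f c = ev g c :=
  map_congr_of_single _ _ (fun l hl => by simp [h l hl]) hc

lemma pre_mem {S T : Set (List α)} {x : α} (h : ∀ l ∈ S, x :: l ∈ T)
    {c : Ch R α} (hc : c ∈ Sup R S) : pre x c ∈ Sup R T :=
  map_mem_of_single _ _ (fun l hl => by
    rw [pre_single]; exact single_mem_sup (h l hl) 1) hc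

lemma bdL_mem (l : List α) :
    (bdL l : Ch R α) ∈ Sup R {l' | l'.Sublist l ∧ l'.length + 1 = l.length} := by
  induction l with
  | nil => simp [bdL]
  | cons x l ih =>
    rw [bdL]
    refine Submodule.sub_mem _ (single_mem_sup ?_ 1) (pre_mem ?_ ih)
    · simp
    · rintro l' ⟨h1, h2⟩
      exact ⟨h1.cons_cons x, by simp [h2]⟩

lemma bd_mem {S T : Set (List α)}
    (h : ∀ l ∈ S, ∀ l' : List α, l'.Sublist l → l'.length + 1 = l.length → l' ∈ T)
    {c : Ch R α} (hc : c ∈ Sup R S) : bd c ∈ Sup R T :=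
  map_mem_of_single _ _ (fun l hl => by
    rw [bd_single, one_smul]
    exact sup_mono (bdL_mem l) (fun l' hl' => h l hl l' hl'.1 hl'.2)) hc

/-- cast of coefficients -/
lemma ev_bdL_cast {F : Type*} [CommRing F] (f : List α → ℤ) (l : List α) :
    ev (fun l => (f l : F)) (bdL l) = ((ev f (bdL l) : ℤ) : F) := by
  induction l generalizing f with
  | nil => simp [bdL]
  | cons x l ih => 
    simp only [bdL, map_sub, ev_single, ev_pre, one_mul, Int.cast_sub]
    rw [ih (fun l => f (x :: l))]

/-- push-forward -/
noncomputable def mp (f : α → β) : Ch R α →ₗ[R] Ch R β := Finsupp.lmapDomain R R (List.map f)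

@[simp] lemma mp_single (f : α → β) (l : List α) (a : R) :
    mp f (Finsupp.single l a) = Finsupp.single (l.map f) a := by
  simp [mp]

lemma mp_pre (f : α → β) (x : α) (c : Ch R α) : mp f (pre x c) = pre (f x) (mp f c) := by
  have : (mp f ∘ₗ pre x : Ch R α →ₗ[R] Ch R β) = pre (f x) ∘ₗ mp f := by
    apply ch_ext; intro l; simp
  exact congrArg (fun f => f c) this

lemma mp_bdL (f : α → β) (l : List α) : mp f (bdL l : Ch R α) = bdL (l.map f) := by
  induction l with
  | nil => simp [bdL]
  | cons x l ih => simp [bdL, mp_pre, ih]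

lemma mp_bd (f : α → β) (c : Ch R α) : mp f (bd c) = bd (mp f c) := by
  have : (mp f ∘ₗ bd : Ch R α →ₗ[R] Ch R β) = bd ∘ₗ mp f := by
    apply ch_ext; intro l; simp [mp_bdL]
  exact congrArg (fun f => f c) this

lemma ev_mp (f : α → β) (g : List β → R) (c : Ch R α) :
    ev g (mp f c) = ev (fun l => g (l.map f)) c := by
  have : (ev g ∘ₗ mp f : Ch R α →ₗ[R] R) = ev (fun l => g (l.map f)) := by
    apply ch_ext; intro l; simp
  exact congrArg (fun f => f c) this

end Lists

section Alt

variable {R : Type*} [CommRing R] {α β : Type*} [LinearOrder α] [LinearOrder β]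

/-- signed insertion -/
noncomputable def insL (x : α) : List α → Ch R α
  | [] => Finsupp.single [x] 1
  | y :: l => if x < y then Finsupp.single (x :: y :: l) 1
      else if x = y then 0 else - pre y (insL x l)

noncomputable def ins (x : α) : Ch R α →ₗ[R] Ch R α := Finsupp.linearCombination R (insL x)

@[simp] lemma ins_single (x : α) (l : List α) (a : R) :
    ins x (Finsupp.single l a) = a • insL x l := by simp [ins]

/-- alternation: sort with sign, zero if there is a repetition -/
noncomputable def altL : List α → Ch R α
  | [] => Finsupp.single [] 1
  | x :: l => ins x (altL l)

noncomputable def alt : Ch R α →ₗ[R] Ch R α := Finsupp.linearCombination R altL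

@[simp] lemma alt_single (l : List α) (a : R) :
    alt (Finsupp.single l a) = a • altL l := by simp [alt]

lemma alt_pre (x : α) (c : Ch R α) : alt (pre x c) = ins x (alt c) := by
  have : (alt ∘ₗ pre x : Ch R α →ₗ[R] Ch R α) = ins x ∘ₗ alt := by
    apply ch_ext; intro l; simp [altL]
  exact congrArg (fun f => f c) this

lemma ins_pre_of_lt {x y : α} (h : y < x) (c : Ch R α) :
    ins x (pre y c) = - pre y (ins x c) := by
  have : (ins x ∘ₗ pre y : Ch R α →ₗ[R] Ch R α) = (-(pre y ∘ₗ ins x : Ch R α →ₗ[R] Ch R α)) := by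
    apply ch_ext; intro l; simp [insL, not_lt.2 h.le, h.ne']
  exact congrArg (fun f => f c) this

lemma ins_pre_self {x : α} (c : Ch R α) : ins x (pre x c) = 0 := by
  have : (ins x ∘ₗ pre x : Ch R α →ₗ[R] Ch R α) = 0 := by
    apply ch_ext; intro l; simp [insL]
  exact congrArg (fun f => f c) this

lemma ins_pre_of_gt {x y : α} (h : x < y) (c : Ch R α) :
    ins x (pre y c) = pre x (pre y c) := by
  have : (ins x ∘ₗ pre y : Ch R α →ₗ[R] Ch R α) = pre x ∘ₗ pre y := by
    apply ch_ext; intro l; simp [insL, h]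
  exact congrArg (fun f => f c) this

lemma ins_eq_pre {x : α} {c : Ch R α} (hc : c ∈ Sup R {l : List α | ∀ y ∈ l, x < y}) :
    ins x c = pre x c := by
  refine map_congr_of_single _ _ ?_ hc
  intro l hl
  cases l with
  | nil => simp [insL]
  | cons y l => simp [insL, hl y (by simp)]

lemma insL_mem (x : α) (l : List α) :
    (insL x l : Ch R α) ∈ Sup R {l' | l'.Perm (x :: l) ∧ (l.Pairwise (· < ·) → l'.Pairwise (· < ·))} := by
  induction l with
  | nil => exact single_mem_sup (by simp) 1
  | cons y l ih =>
    rw [insL]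
    split_ifs with h1 h2
    · apply single_mem_sup
      refine ⟨List.Perm.refl _, fun h => ?_⟩
      rw [List.pairwise_cons] at h
      refine List.pairwise_cons.2 ⟨?_, List.pairwise_cons.2 h⟩
      intro z hz
      rcases List.mem_cons.1 hz with rfl | hz
      · exact h1
      · exact h1.trans (h.1 z hz)
    · exact Submodule.zero_mem _
    · refine Submodule.neg_mem _ (pre_mem ?_ ih)
      rintro l' ⟨h3, h4⟩
      refine ⟨(h3.cons y).trans (List.Perm.swap _ _ _), fun h => ?_⟩
      rw [List.pairwise_cons] at h
      refine List.pairwise_cons.2 ⟨?_, h4 h.2⟩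
      intro z hz
      have := h3.mem_iff.1 hz
      rcases List.mem_cons.1 this with rfl | hz
      · exact lt_of_le_of_ne (not_lt.1 h1) (Ne.symm h2)
      · exact h.1 z hz

lemma altL_mem (l : List α) :
    (altL l : Ch R α) ∈ Sup R {l' | l'.Perm l ∧ l'.Pairwise (· < ·)} := by
  induction l with
  | nil => exact single_mem_sup (by simp) 1
  | cons x l ih =>
    rw [altL]
    refine map_mem_of_single _ _ ?_ ih
    rintro l' ⟨h1, h2⟩
    rw [ins_single, one_smul]
    refine Finsupp.supported_mono ?_ (insL_mem x l')
    rintro l'' ⟨h3, h4⟩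
    exact ⟨h3.trans (h1.cons x), h4 h2⟩

lemma altL_eq_zero {l : List α} (h : ¬ l.Nodup) : (altL l : Ch R α) = 0 := by
  have h1 := altL_mem (R := R) l
  have : {l' : List α | l'.Perm l ∧ l'.Pairwise (· < ·)} = ∅ := by
    ext l'
    simp only [Set.mem_ofPred_eq, Set.mem_empty_iff_false, iff_false, not_and]
    intro h2 h3
    exact h (h2.nodup_iff.1 (h3.imp (fun h => h.ne)))
  rw [this] at h1
  simpa using h1

lemma altL_sorted {l : List α} (h : l.Pairwise (· < ·)) : (altL l : Ch R α) = Finsupp.single l 1 := by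
  induction l with
  | nil => rfl
  | cons x l ih =>
    rw [List.pairwise_cons] at h
    rw [altL, ih h.2, ins_eq_pre (single_mem_sup (by exact h.1) 1), pre_single]

lemma bd_insL (x : α) (l : List α) (h : l.Pairwise (· < ·)) :
    bd (insL x l : Ch R α) = Finsupp.single l 1 - ins x (bdL l) := by
  induction l with
  | nil => simp [insL, bdL]
  | cons y l ih =>
    rw [List.pairwise_cons] at h
    have hsub : (bdL l : Ch R α) ∈ Sup R {l' | ∀ z ∈ l', y < z} :=
      sup_mono (bdL_mem l) (fun l' hl' z hz => h.1 z (hl'.1.subset hz))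
    rcases lt_trichotomy x y with h1 | h1 | h1
    · have h4 : (bdL (y :: l) : Ch R α) ∈ Sup R {l' | ∀ z ∈ l', x < z} := by
        refine sup_mono (bdL_mem (y :: l)) (fun l' hl' z hz => ?_)
        rcases List.mem_cons.1 (hl'.1.subset hz) with rfl | h5
        · exact h1
        · exact h1.trans (h.1 z h5)
      rw [ins_eq_pre h4, insL, if_pos h1, bd_single, one_smul, bdL]
    · subst h1
      have : (Finsupp.single l 1 : Ch R α) ∈ Sup R {l' | ∀ z ∈ l', x < z} :=
        single_mem_sup (by exact h.1) 1
      rw [insL, if_neg (lt_irrefl _), if_pos rfl, bdL, map_sub, ins_pre_self,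
        ins_eq_pre this, pre_single]
      simp
    · rw [insL, if_neg (not_lt.2 h1.le), if_neg h1.ne', map_neg, bd_pre, ih h.2, bdL, map_sub,
        map_sub, ins_pre_of_lt h1, ins_single, one_smul, pre_single]
      abel

lemma bd_ins (x : α) {c : Ch R α} (hc : c ∈ Sup R {l : List α | l.Pairwise (· < ·)}) :
    bd (ins x c) = c - ins x (bd c) := by
  have := map_congr_of_single (bd ∘ₗ ins x) (LinearMap.id - ins x ∘ₗ bd)
    (fun l hl => by simp [bd_insL x l hl]) hc
  exact this

lemma bd_altL (l : List α) : bd (altL l : Ch R α) = alt (bdL l) := by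
  induction l with
  | nil => simp [altL, bdL]
  | cons x l ih =>
    rw [altL, bd_ins x (sup_mono (altL_mem l) (fun l' hl' => hl'.2)), ih, bdL,
      map_sub, alt_pre, alt_single, one_smul]

lemma bd_alt (c : Ch R α) : bd (alt c) = alt (bd c) := by
  have : (bd ∘ₗ alt : Ch R α →ₗ[R] Ch R α) = alt ∘ₗ bd := by
    apply ch_ext; intro l; simp [bd_altL]
  exact congrArg (fun f => f c) this

lemma ins_insL_self (x : α) (l : List α) : ins x (insL x l : Ch R α) = 0 := by
  induction l with
  | nil => simp [insL]
  | cons y l ih =>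
    rcases lt_trichotomy x y with h1 | h1 | h1
    · simp [insL, h1]
    · simp [insL, h1]
    · rw [insL, if_neg (not_lt.2 h1.le), if_neg h1.ne', map_neg, ins_pre_of_lt h1, ih]
      simp

lemma ins_insL_of_lt {x y : α} (h : x < y) (l : List α) :
    ins x (insL y l : Ch R α) = - ins y (insL x l) := by
  induction l with
  | nil => simp [insL, h, not_lt.2 h.le, h.ne']
  | cons z l ih =>
    rcases lt_trichotomy y z with h1 | h1 | h1
    · simp [insL, h1, h.trans h1, h, not_lt.2 h.le, h.ne']
    · subst h1
      simp [insL, h, not_lt.2 h.le, h.ne']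
    · rw [insL, if_neg (not_lt.2 h1.le), if_neg h1.ne', map_neg]
      rcases lt_trichotomy x z with h2 | h2 | h2
      · rw [ins_pre_of_gt h2, insL, if_pos h2, ins_single, one_smul, insL,
          if_neg (not_lt.2 h.le), if_neg h.ne', insL, if_neg (not_lt.2 h1.le), if_neg h1.ne']
        simp
      · subst h2
        rw [ins_pre_self, insL, if_neg (lt_irrefl _), if_pos rfl]; simp
      · rw [ins_pre_of_lt h2, ih, insL, if_neg (not_lt.2 h2.le), if_neg h2.ne', map_neg, map_neg,
          ins_pre_of_lt h1]

lemma ins_ins_self (x : α) (c : Ch R α) : ins x (ins x c) = 0 := by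
  have : (ins x ∘ₗ ins x : Ch R α →ₗ[R] Ch R α) = 0 := by
    apply ch_ext; intro l; simp [ins_insL_self]
  exact congrArg (fun f => f c) this

lemma ins_ins (x y : α) (c : Ch R α) : ins x (ins y c) = - ins y (ins x c) := by
  have key : ∀ x y : α, x < y → ∀ c : Ch R α, ins x (ins y c) = - ins y (ins x c) := by
    intro x y h c
    have : (ins x ∘ₗ ins y : Ch R α →ₗ[R] Ch R α) = (-(ins y ∘ₗ ins x : Ch R α →ₗ[R] Ch R α)) := by
      apply ch_ext; intro l; simp [ins_insL_of_lt h]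
    exact congrArg (fun f => f c) this
  rcases lt_trichotomy x y with h | h | h
  · exact key x y h c
  · subst h; simp [ins_ins_self]
  · rw [key y x h c]; simp

lemma alt_mp_insL (f : α → β) (x : α) (l : List α) :
    alt (mp f (insL x l : Ch R α)) = ins (f x) (altL (l.map f)) := by
  induction l with
  | nil => simp [insL, altL]
  | cons y l ih =>
    rw [insL]
    split_ifs with h1 h2
    · simp [altL]
    · subst h2; simp [altL, ins_ins_self]
    · rw [map_neg, map_neg, mp_pre, alt_pre, ih, List.map_cons, altL, ins_ins]; simp

lemma alt_mp_ins (f : α → β) (x : α) (c : Ch R α) :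
    alt (mp f (ins x c)) = ins (f x) (alt (mp f c)) := by
  have : (alt ∘ₗ mp f ∘ₗ ins x : Ch R α →ₗ[R] Ch R β) = ins (f x) ∘ₗ alt ∘ₗ mp f := by
    apply ch_ext; intro l; simp [alt_mp_insL]
  exact congrArg (fun f => f c) this

lemma alt_mp_altL (f : α → β) (l : List α) :
    alt (mp f (altL l : Ch R α)) = altL (l.map f) := by
  induction l with
  | nil => simp [altL]
  | cons x l ih => rw [altL, alt_mp_ins, ih, List.map_cons, altL]

end Alt

end WD

namespace WD

section EZ

variable {R : Type*} [CommRing R] {α β : Type*}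

lemma sup_inter {S T : Set (List α)} {c : Ch R α} (h1 : c ∈ Sup R S) (h2 : c ∈ Sup R T) :
    c ∈ Sup R (S ∩ T) := by
  rw [Finsupp.mem_supported] at *
  exact Set.subset_inter h1 h2

/-- Eilenberg Zilber product of two lists (shuffles). -/
noncomputable def ez : List α → List β → Ch R (α × β)
  | [], _ => 0
  | _ :: _, [] => 0
  | x :: σ, y :: τ => pre (x, y) (Finsupp.single [] (if σ = [] ∧ τ = [] then 1 else 0)
      + ez σ (y :: τ) + (-1 : R) ^ σ.length • ez (x :: σ) τ)
  termination_by σ τ => σ.length + τ.length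

/-- bilinear extension -/
noncomputable def ezz : Ch R α →ₗ[R] Ch R β →ₗ[R] Ch R (α × β) :=
  Finsupp.linearCombination R (fun σ => Finsupp.linearCombination R (ez σ))

@[simp] lemma ezz_single (σ : List α) (τ : List β) (a b : R) :
    ezz (Finsupp.single σ a) (Finsupp.single τ b) = a • b • ez σ τ := by
  simp [ezz]

lemma bil_ext {M : Type*} [AddCommGroup M] [Module R M]
    {f g : Ch R α →ₗ[R] Ch R β →ₗ[R] M}
    (h : ∀ σ τ, f (Finsupp.single σ 1) (Finsupp.single τ 1)
      = g (Finsupp.single σ 1) (Finsupp.single τ 1)) : f = g := by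
  apply ch_ext; intro σ
  apply ch_ext; intro τ
  exact h σ τ

/-- coefficient at the empty list -/
noncomputable def cof : Ch R α →ₗ[R] R := Finsupp.lapply []

/-- grading sign -/
noncomputable def sg : Ch R α →ₗ[R] Ch R α :=
  Finsupp.linearCombination R (fun l => Finsupp.single l ((-1) ^ l.length))

@[simp] lemma sg_single (l : List α) (a : R) :
    sg (Finsupp.single l a) = a • Finsupp.single l ((-1) ^ l.length) := by simp [sg]

lemma sg_pre (x : α) (c : Ch R α) : sg (pre x c) = - pre x (sg c) := by
  have : (sg ∘ₗ pre x : Ch R α →ₗ[R] Ch R α) = (-(pre x ∘ₗ sg : Ch R α →ₗ[R] Ch R α)) := by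
    apply ch_ext; intro l; simp [pow_succ]
  exact congrArg (fun f => f c) this

lemma sg_bdL (l : List α) : sg (bdL l : Ch R α) = -((-1 : R) ^ l.length • bdL l) := by
  induction l with
  | nil => simp [bdL]
  | cons x l ih =>
    simp only [bdL, map_sub, sg_single, one_smul, sg_pre, ih, List.length_cons, pow_succ,
      map_neg, map_smul, neg_neg, smul_sub, Finsupp.smul_single, smul_eq_mul]
    simp [sub_eq_add_neg, add_comm]

@[simp] lemma cof_single_nil (a : R) : cof (Finsupp.single ([] : List α) a) = a := by simp [cof]

@[simp] lemma cof_single_cons (x : α) (l : List α) (a : R) :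
    cof (Finsupp.single (x :: l) a) = 0 := by simp [cof]

@[simp] lemma cof_pre (x : α) (c : Ch R α) : cof (pre x c) = 0 := by
  have : (cof ∘ₗ pre x : Ch R α →ₗ[R] R) = 0 := by
    apply ch_ext; intro l; simp
  exact congrArg (fun f => f c) this

lemma ezz_pre (x : α) (y : β) (c : Ch R α) (d : Ch R β) :
    ezz (pre x c) (pre y d) = pre (x, y) (Finsupp.single [] (cof c * cof d)
      + ezz c (pre y d) + ezz (pre x (sg c)) d) := by
  have : ((ezz ∘ₗ pre x).compl₂ (pre y) : Ch R α →ₗ[R] Ch R β →ₗ[R] Ch R (α × β))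
    = (((LinearMap.mul R R).compl₁₂ cof cof).compr₂ (Finsupp.lsingle [])
      + ezz.compl₂ (pre y) + ezz ∘ₗ pre x ∘ₗ sg).compr₂ (pre (x, y)) := by
    apply bil_ext; intro σ τ
    simp only [LinearMap.compl₂_apply, LinearMap.comp_apply, pre_single, ezz_single, one_smul,
      LinearMap.compr₂_apply, LinearMap.add_apply, LinearMap.compl₁₂_apply, LinearMap.mul_apply',
      sg_single, ez, Finsupp.lsingle_apply]
    congr 3
    cases σ <;> cases τ <;> simp
  exact congrArg (fun f => f c d) this

lemma bd_ez (σ : List α) (τ : List β) : bd (ez σ τ : Ch R (α × β))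
    = ezz (bdL σ) (Finsupp.single τ 1) - (-1 : R) ^ σ.length • ezz (Finsupp.single σ 1) (bdL τ)
      + Finsupp.single [] (cof (bdL σ : Ch R α) * cof (bdL τ : Ch R β)) := by
  have hnil1 : ∀ d : Ch R β, ezz (Finsupp.single ([] : List α) 1) d = 0 := by
    intro d
    have : (ezz (Finsupp.single ([] : List α) (1 : R)) : Ch R β →ₗ[R] Ch R (α × β)) = 0 := by
      apply ch_ext; intro τ; simp [ez]
    rw [this]; rfl
  have hnil2 : ∀ c : Ch R α, ezz c (Finsupp.single ([] : List β) 1) = 0 := by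
    intro c
    have : (ezz.flip (Finsupp.single ([] : List β) (1 : R)) : Ch R α →ₗ[R] Ch R (α × β)) = 0 := by
      apply ch_ext; intro σ; cases σ <;> simp [ez]
    exact congrArg (fun f => f c) this
  induction hn : σ.length + τ.length using Nat.strong_induction_on generalizing σ τ with
  | _ n ih =>
  cases σ with
  | nil => simp [bdL, ez, hnil1]
  | cons x σ =>
  cases τ with
  | nil => simp [bdL, ez, hnil2]
  | cons y τ =>
    have h1 := ih (σ.length + (y :: τ).length) (by simp at hn ⊢; omega) σ (y :: τ) rfl
    have h2 := ih ((x :: σ).length + τ.length) (by simp at hn ⊢; omega) (x :: σ) τ rfl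
    have e1 : (Finsupp.single (y :: τ) 1 : Ch R β) = pre y (Finsupp.single τ 1) := by simp
    have e2 : (Finsupp.single (x :: σ) 1 : Ch R α) = pre x (Finsupp.single σ 1) := by simp
    have hc : (Finsupp.single [] (if σ = [] ∧ τ = [] then 1 else 0) : Ch R (α × β))
      = Finsupp.single [] (cof (Finsupp.single σ 1 : Ch R α) * cof (Finsupp.single τ 1 : Ch R β)) := by
      cases σ <;> cases τ <;> simp
    have hb1 : (bdL (x :: σ) : Ch R α) = Finsupp.single σ 1 - pre x (bdL σ) := rfl
    have hb2 : (bdL (y :: τ) : Ch R β) = Finsupp.single τ 1 - pre y (bdL τ) := rfl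
    have k1 : (ezz (pre x (bdL σ)) (pre y (Finsupp.single τ 1)) : Ch R (α × β))
      = pre (x, y) (Finsupp.single [] (cof (bdL σ : Ch R α) * cof (Finsupp.single τ 1 : Ch R β))
      + ezz (bdL σ) (pre y (Finsupp.single τ 1))
      - (-1 : R) ^ σ.length • ezz (pre x (bdL σ)) (Finsupp.single τ 1)) := by
      rw [ezz_pre, sg_bdL, map_neg, map_smul, map_neg, map_smul, LinearMap.neg_apply,
        LinearMap.smul_apply, ← sub_eq_add_neg]
    have k2 : (ezz (pre x (Finsupp.single σ 1)) (pre y (bdL τ)) : Ch R (α × β))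
      = pre (x, y) (Finsupp.single [] (cof (Finsupp.single σ 1 : Ch R α) * cof (bdL τ : Ch R β))
      + ezz (Finsupp.single σ 1) (pre y (bdL τ))
      + (-1 : R) ^ σ.length • ezz (pre x (Finsupp.single σ 1)) (bdL τ)) := by
      have : sg (Finsupp.single σ 1 : Ch R α) = (-1 : R) ^ σ.length • Finsupp.single σ 1 := by
        simp
      rw [ezz_pre, this, map_smul, map_smul, LinearMap.smul_apply]
    have e3 : (ez σ (y :: τ) : Ch R (α × β)) = ezz (Finsupp.single σ 1) (pre y (Finsupp.single τ 1)) := by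
      simp
    have e4 : (ez (x :: σ) τ : Ch R (α × β)) = ezz (pre x (Finsupp.single σ 1)) (Finsupp.single τ 1) := by
      simp
    have e0 : ∀ a : R, bd (Finsupp.single [] a : Ch R (α × β)) = 0 := by intro a; simp [bdL]
    have hss : ((-1 : R) ^ σ.length) * ((-1 : R) ^ σ.length) = 1 := by
      rw [← mul_pow]; simp
    simp only [hb1, hb2, e1, e2, e3, e4, map_sub, LinearMap.sub_apply, cof_pre, sub_zero, k1, k2,
      List.length_cons, pow_succ] at h1 h2 ⊢
    rw [ez, hc, bd_pre]
    simp only [map_add bd, map_smul bd, e0, e3, e4, h1, h2]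
    generalize ((-1 : R) ^ σ.length) = s at *
    simp only [map_add, map_sub, map_smul, smul_add, smul_sub, smul_smul, hss, one_smul, mul_neg,
      mul_one, neg_smul, sub_neg_eq_add, zero_add]
    generalize (pre (x, y) : Ch R (α × β) →ₗ[R] Ch R (α × β)) _ = a1
    generalize (pre (x, y) : Ch R (α × β) →ₗ[R] Ch R (α × β)) _ = a2
    generalize (pre (x, y) : Ch R (α × β) →ₗ[R] Ch R (α × β)) _ = a3
    generalize (pre (x, y) : Ch R (α × β) →ₗ[R] Ch R (α × β)) _ = a4
    generalize (pre (x, y) : Ch R (α × β) →ₗ[R] Ch R (α × β)) _ = a5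
    generalize (pre (x, y) : Ch R (α × β) →ₗ[R] Ch R (α × β)) _ = a6
    generalize (pre (x, y) : Ch R (α × β) →ₗ[R] Ch R (α × β)) _ = a7
    generalize ezz (Finsupp.single σ (1 : R)) (pre y (Finsupp.single τ (1 : R))) = a8
    generalize ezz (pre x (Finsupp.single σ (1 : R))) (Finsupp.single τ (1 : R)) = a9
    generalize (Finsupp.single ([] : List (α × β)) _ : Ch R (α × β)) = a10
    rw [neg_mul, hss, neg_smul, one_smul]
    generalize s • a2 = b2
    generalize s • a3 = b3
    generalize s • a5 = b5
    generalize s • a7 = b7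
    generalize s • a9 = b9
    clear * -
    abel

lemma ez_mem (σ : List α) (τ : List β) : (ez σ τ : Ch R (α × β)) ∈
    Sup R {l | l.length + 1 = σ.length + τ.length ∧ (∀ p ∈ l, p.1 ∈ σ ∧ p.2 ∈ τ) ∧
      ∀ x, σ.head? = some x → ∃ y l', l = (x, y) :: l'} := by
  induction hn : σ.length + τ.length using Nat.strong_induction_on generalizing σ τ with
  | _ n ih =>
  cases σ with
  | nil => rw [ez]; exact Submodule.zero_mem _
  | cons x σ =>
  cases τ with
  | nil => rw [ez]; exact Submodule.zero_mem _
  | cons y τ =>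
    have h1 := ih (σ.length + (y :: τ).length) (by simp at hn ⊢; omega) σ (y :: τ) rfl
    have h2 := ih ((x :: σ).length + τ.length) (by simp at hn ⊢; omega) (x :: σ) τ rfl
    simp only [List.length_cons] at hn
    rw [ez, map_add, map_add]
    refine Submodule.add_mem _ (Submodule.add_mem _ ?_ (pre_mem ?_ h1)) ?_
    rotate_left 2
    rw [map_smul]
    refine Submodule.smul_mem _ _ (pre_mem ?_ h2)
    rotate_left
    · split_ifs with h
      · obtain ⟨rfl, rfl⟩ := h
        rw [pre_single]; apply single_mem_sup
        simp at hn
        simp [← hn]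
      · simp
    · rintro l ⟨a, b, -⟩
      simp only [List.length_cons] at a
      refine ⟨by simp only [List.length_cons]; omega, ?_, ?_⟩
      · intro p hp
        rcases List.mem_cons.1 hp with rfl | hp
        · simp
        · exact ⟨List.mem_cons_of_mem _ (b p hp).1, (b p hp).2⟩
      · intro x' hx'; simp at hx'; subst hx'; exact ⟨y, l, rfl⟩
    · rintro l ⟨a, b, -⟩
      simp only [List.length_cons] at a
      refine ⟨by simp only [List.length_cons]; omega, ?_, ?_⟩
      · intro p hp
        rcases List.mem_cons.1 hp with rfl | hp
        · simp
        · exact ⟨(b p hp).1, List.mem_cons_of_mem _ (b p hp).2⟩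
      · intro x' hx'; simp at hx'; subst hx'; exact ⟨y, l, rfl⟩

lemma ez_one (x : α) (τ : List β) (h : τ ≠ []) :
    (ez [x] τ : Ch R (α × β)) = Finsupp.single (τ.map (fun y => (x, y))) 1 := by
  induction τ with
  | nil => exact absurd rfl h
  | cons y τ ih =>
    rw [ez, ez]
    by_cases h : τ = []
    · subst h; simp [ez]
    · rw [ih h]; simp [h]

/-- cross product of cochains -/
def cr (k : ℕ) (f : List α → R) (g : List β → R) (X : List (α × β)) : R :=
  f ((X.take (k + 1)).map Prod.fst) * g ((X.drop k).map Prod.snd)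

lemma cr_pre (k : ℕ) (f : List α → R) (g : List β → R) (z : α × β) (c : Ch R (α × β)) :
    ev (cr (k + 1) f g) (pre z c) = ev (cr k (fun l => f (z.1 :: l)) g) c := by
  rw [ev_pre]; congr 1

lemma cr_ez (k : ℕ) (f : List α → R) (hf : ∀ l₁ x l₂, f (l₁ ++ x :: x :: l₂) = 0)
    (g : List β → R) (σ : List α) (hσ : σ.length = k + 1) (τ : List β) (hτ : τ ≠ []) :
    ev (cr k f g) (ez σ τ) = f σ * g τ := by
  induction k generalizing f σ τ with
  | zero =>
    obtain ⟨x, rfl⟩ := List.length_eq_one_iff.1 hσ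
    rw [ez_one x τ hτ]
    cases τ with
    | nil => exact absurd rfl hτ
    | cons y τ => simp [cr]
  | succ k ih =>
    cases σ with
    | nil => simp at hσ
    | cons x σ =>
    cases τ with
    | nil => exact absurd rfl hτ
    | cons y τ =>
      have hσ' : σ.length = k + 1 := by simpa using hσ
      have hne : σ ≠ [] := by rintro rfl; simp at hσ'
      rw [ez, cr_pre]
      have h1 := ih (fun l => f (x :: l)) (fun l₁ z l₂ => hf (x :: l₁) z l₂) σ hσ' (y :: τ) (by simp)
      have h2 : ev (cr k (fun l => f (x :: l)) g) (ez (x :: σ) τ) = 0 := by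
        refine ev_eq_zero ?_ (ez_mem (x :: σ) τ)
        rintro l ⟨-, -, h⟩
        obtain ⟨y, l', rfl⟩ := h x rfl
        have := hf [] x
        simp only [List.nil_append] at this
        simp [cr, this]
      simp only [map_add, map_smul, h1, h2]
      simp [hne]

lemma cr_bd (k : ℕ) (f : List α → R) (g : List β → R) (X : List (α × β)) (hX : k + 2 ≤ X.length) :
    ev (cr k f g) (bdL X) =
      ev f (bdL ((X.take (k + 2)).map Prod.fst)) * g ((X.drop (k + 1)).map Prod.snd)
      + (-1) ^ k * (f ((X.take (k + 1)).map Prod.fst) * ev g (bdL ((X.drop k).map Prod.snd))) := by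
  induction k generalizing f X with
  | zero =>
    match X, hX with
    | z :: w :: X, _ =>
      rw [bdL, map_sub, ev_pre]
      have : ev (fun l => cr 0 f g (z :: l)) (bdL (w :: X))
        = f [z.1] * ev (fun l => g (z.2 :: l)) (bdL ((w :: X).map Prod.snd)) := by
        rw [← mp_bdL, ev_mp, ← ev_mul]
        simp [cr]
      rw [this]
      simp only [ev_single, zero_add, List.map_cons, bdL, List.take_succ_cons,
        List.take_zero, List.drop_succ_cons, List.drop_zero, List.map_nil, map_sub, ev_pre]
      simp [cr]
      ring
  | succ k ih =>
    match X, hX with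
    | z :: X, hX =>
      have hX' : k + 2 ≤ X.length := by simpa using hX
      rw [bdL, map_sub, cr_pre, ih _ _ hX']
      simp only [ev_single, List.take_succ_cons, List.drop_succ_cons, List.map_cons, one_mul]
      rw [show (bdL (z.1 :: List.map Prod.fst (List.take (k+2) X)) : Ch R α)
        = Finsupp.single (List.map Prod.fst (List.take (k+2) X)) 1 
          - pre z.1 (bdL (List.map Prod.fst (List.take (k+2) X))) from rfl, map_sub, ev_pre]
      simp only [cr, ev_single, one_mul]
      ring

lemma cr_ezz (k : ℕ) (f : List α → R) (hf : ∀ l₁ x l₂, f (l₁ ++ x :: x :: l₂) = 0)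
    (g : List β → R) {c : Ch R α} {d : Ch R β} (hc : c ∈ Sup R {l | l.length = k + 1})
    (hd : d ∈ Sup R {l | l ≠ []}) : ev (cr k f g) (ezz c d) = ev f c * ev g d := by
  refine map_congr_of_single (ev (cr k f g) ∘ₗ ezz.flip d) ((LinearMap.mul R R).flip (ev g d) ∘ₗ ev f)
    (fun σ hσ => ?_) hc
  refine map_congr_of_single (ev (cr k f g) ∘ₗ ezz (Finsupp.single σ 1)) 
    ((LinearMap.mul R R) (ev f (Finsupp.single σ 1)) ∘ₗ ev g) (fun τ hτ => ?_) hd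
  simp [cr_ez k f hf g σ hσ τ hτ]

lemma ezz_mem {S : Set (List α)} {T : Set (List β)} {U : Set (List (α × β))}
    (h : ∀ σ ∈ S, ∀ τ ∈ T, ∀ l : List (α × β), l.length + 1 = σ.length + τ.length →
      (∀ p ∈ l, p.1 ∈ σ ∧ p.2 ∈ τ) → l ∈ U) {c : Ch R α} {d : Ch R β} (hc : c ∈ Sup R S)
    (hd : d ∈ Sup R T) : ezz c d ∈ Sup R U := by
  refine map_mem_of_single (ezz.flip d) _ (fun σ hσ => ?_) hc
  refine map_mem_of_single (ezz (Finsupp.single σ 1)) _ (fun τ hτ => ?_) hd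
  rw [ezz_single, one_smul, one_smul]
  exact sup_mono (ez_mem σ τ) (fun l hl => h σ hσ τ hτ l hl.1 hl.2.1)

lemma bd_ezz_mem {S S' : Set (List α)} {T T' : Set (List β)} {U : Set (List (α × β))}
    (hU : [] ∈ U) {k : ℕ} {c : Ch R α} {d : Ch R β}
    (h : ∀ σ ∈ S, ∀ τ ∈ T', ∀ l : List (α × β), l.length + 1 = σ.length + τ.length →
      (∀ p ∈ l, p.1 ∈ σ ∧ p.2 ∈ τ) → l ∈ U) 
    (h' : ∀ σ ∈ S', ∀ τ ∈ T, ∀ l : List (α × β), l.length + 1 = σ.length + τ.length →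
      (∀ p ∈ l, p.1 ∈ σ ∧ p.2 ∈ τ) → l ∈ U) 
    (hc : c ∈ Sup R S) (hck : c ∈ Sup R {l | l.length = k}) (hc' : bd c ∈ Sup R S')
    (hd : d ∈ Sup R T) (hd' : bd d ∈ Sup R T') : bd (ezz c d) ∈ Sup R U := by
  have key : bd (ezz c d) = ezz (bd c) d - (-1 : R) ^ k • ezz c (bd d)
      + Finsupp.single [] (cof (bd c) * cof (bd d)) := by
    refine map_congr_of_single (bd ∘ₗ ezz.flip d) (ezz.flip d ∘ₗ bd - (-1 : R) ^ k • ezz.flip (bd d)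
      + Finsupp.lsingle [] ∘ₗ (LinearMap.mul R R).flip (cof (bd d)) ∘ₗ cof ∘ₗ bd) (fun σ hσ => ?_) hck
    have hσ' : σ.length = k := hσ
    have : (bd ∘ₗ ezz (Finsupp.single σ 1) : Ch R β →ₗ[R] Ch R (α × β)) = 
      ezz (bdL σ) - (-1 : R) ^ k • ezz (Finsupp.single σ 1) ∘ₗ bd
      + Finsupp.lsingle [] ∘ₗ (LinearMap.mul R R) (cof (bdL σ)) ∘ₗ cof ∘ₗ bd := by
      apply ch_ext; intro τ
      simp [bd_ez, hσ']
    have := congrArg (fun f => f d) this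
    simpa [mul_comm] using this
  rw [key]
  refine Submodule.add_mem _ (Submodule.sub_mem _ (ezz_mem h' hc' hd) 
    (Submodule.smul_mem _ _ (ezz_mem h hc hd'))) (single_mem_sup hU _)

end EZ
end WD

namespace WD

/-- lists of small diameter -/
def Small {X : Type*} [PseudoMetricSpace X] (ε : ℝ) (l : List X) : Prop :=
  ∀ x ∈ l, ∀ y ∈ l, dist x y < ε

lemma map_zero_of_single {R : Type*} [CommRing R] {α M : Type*} [AddCommGroup M] [Module R M]
    {S : Set (List α)} (f : Ch R α →ₗ[R] M) (h : ∀ l ∈ S, f (Finsupp.single l 1) = 0)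
    {c : Ch R α} (hc : c ∈ Sup R S) : f c = 0 :=
  map_congr_of_single f 0 (fun l hl => by rw [h l hl]; rfl) hc

section Homotopy

variable {R : Type*} [CommRing R] {X : Type*} [LinearOrder X]

/-- cone homotopy between the identity and `alt ∘ mp φ`, by degree -/
noncomputable def hom (φ : X → X) : ℕ → List X → Ch R X
  | 0, _ => 0
  | _ + 1, [] => 0
  | d + 1, x :: l => pre x (Finsupp.single (x :: l) 1 - altL ((x :: l).map φ)
      - Finsupp.linearCombination R (hom φ d) (bdL (x :: l)))

lemma bd_hom (φ : X → X) (d : ℕ) (σ : List X) (hσ : σ.length = d) :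
    bd (hom φ d σ : Ch R X) = Finsupp.single σ 1 - altL (σ.map φ)
      - Finsupp.linearCombination R (hom φ (d - 1)) (bdL σ) := by
  induction d generalizing σ with
  | zero =>
    rw [List.length_eq_zero_iff] at hσ
    subst hσ
    simp [hom, bdL, altL]
  | succ d ih =>
    cases σ with
    | nil => simp at hσ
    | cons x l =>
      rw [hom, bd_pre]
      have key : bd (Finsupp.single (x :: l) (1 : R) - altL ((x :: l).map φ)
        - Finsupp.linearCombination R (hom φ d) (bdL (x :: l))) = 0 := by
        have h1 : bd (Finsupp.linearCombination R (hom φ d) (bdL (x :: l)) : Ch R X)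
          = bdL (x :: l) - alt (mp φ (bdL (x :: l)))
            - Finsupp.linearCombination R (hom φ (d - 1)) (bd (bdL (x :: l))) := by
          refine map_congr_of_single (bd ∘ₗ Finsupp.linearCombination R (hom φ d))
            (LinearMap.id - alt ∘ₗ mp φ - Finsupp.linearCombination R (hom φ (d - 1)) ∘ₗ bd)
            (fun τ hτ => ?_) (bdL_mem (x :: l))
          have : τ.length = d := by
            have := hτ.2
            simp only [List.length_cons] at this hσ; omega
          simp [ih τ this]
        rw [map_sub, map_sub, h1, bd_bdL, bd_altL, mp_bdL, bd_single]
        simp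
      rw [key]
      simp

lemma hom_mem (φ : X → X) (d : ℕ) (σ : List X) :
    (hom φ d σ : Ch R X) ∈ Sup R {l | l.length = σ.length + 1 ∧ ∀ x ∈ l, x ∈ σ ∨ ∃ y ∈ σ, x = φ y} := by
  induction d generalizing σ with
  | zero => rw [hom]; exact Submodule.zero_mem _
  | succ d ih =>
    cases σ with
    | nil => rw [hom]; exact Submodule.zero_mem _
    | cons x l =>
      rw [hom]
      have : (Finsupp.single (x :: l) 1 - altL ((x :: l).map φ)
        - Finsupp.linearCombination R (hom φ d) (bdL (x :: l)) : Ch R X) ∈ 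
        Sup R {l' | l'.length = l.length + 1 ∧ ∀ z ∈ l', z ∈ (x :: l) ∨ ∃ y ∈ (x :: l), z = φ y} := by
        refine Submodule.sub_mem _ (Submodule.sub_mem _ ?_ ?_) ?_
        · apply single_mem_sup
          exact ⟨rfl, fun z hz => Or.inl hz⟩
        · refine sup_mono (altL_mem _) ?_
          rintro l' ⟨h1, -⟩
          refine ⟨by simpa using h1.length_eq, fun z hz => Or.inr ?_⟩
          have := h1.mem_iff.1 hz
          obtain ⟨y, hy, rfl⟩ := List.mem_map.1 this
          exact ⟨y, hy, rfl⟩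
        · refine map_mem_of_single _ _ ?_ (bdL_mem (x :: l))
          rintro τ ⟨h1, h2⟩
          rw [Finsupp.linearCombination_single, one_smul]
          refine sup_mono (ih τ) ?_
          rintro l' ⟨h3, h4⟩
          refine ⟨by simp only [List.length_cons] at h2; omega, fun z hz => ?_⟩
          rcases h4 z hz with h | ⟨y, hy, h⟩
          · exact Or.inl (h1.subset h)
          · exact Or.inr ⟨y, h1.subset hy, h⟩
      refine pre_mem ?_ this
      rintro l' ⟨h1, h2⟩
      refine ⟨by simp [h1], ?_⟩
      intro z hz
      rcases List.mem_cons.1 hz with rfl | hz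
      · exact Or.inl (by simp)
      · exact h2 z hz

end Homotopy

set_option maxHeartbeats 2000000 in
/-- the essential final argument: a relative cocycle pairing nontrivially with arbitrarily fine
relative cycles forces all fine covers to have large order. -/
lemma cover_order {R : Type*} [CommRing R] [Nontrivial R] {X : Type*} [MetricSpace X] [CompactSpace X]
    {ι : Type*} (B B' : ι → Set X) (N : ℕ) (ε : ℝ) (hε : 0 < ε) (ω : List X → R)
    (hBB : ∀ i, ∀ x ∈ B i, ∀ y, dist x y < ε → y ∈ B' i)
    (ha : ∀ l : List X, l.length = N + 2 → Small ε l → ev ω (bdL l) = 0)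
    (hb : ∀ l : List X, l.length = N + 1 → Small ε l → ∀ i, (∀ x ∈ l, x ∈ B' i) → ω l = 0)
    (hc : ∀ ρ > 0, ∃ z ∈ Sup R {l : List X | l.length = N + 1 ∧ Small ρ l},
      bd z ∈ Sup R {l : List X | l = [] ∨ ∃ i, ∀ x ∈ l, x ∈ B i} ∧ ev ω z = 1)
    (γ : Set (Set X)) (hγ : (∀ U ∈ γ, IsOpen U) ∧ ⋃₀ γ = Set.univ)
    (hmesh : ∀ U ∈ γ, ∀ x ∈ U, ∀ y ∈ U, dist x y < ε / 4) :
    ∃ f : Fin (N + 1) → Set X,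
      Function.Injective f ∧ (∀ i, f i ∈ γ) ∧ (⋂ i, f i).Nonempty := by
  classical
  by_contra hno
  obtain ⟨r, hr, hrU⟩ := lebesgue_number_lemma_of_metric_sUnion (s := Set.univ) isCompact_univ hγ.1 
    (by rw [hγ.2])
  choose U hU hrU using fun x => hrU x (Set.mem_univ x)
  have hxU : ∀ x, x ∈ U x := fun x => hrU x (Metric.mem_ball_self hr)
  have hch : ∃ q : Set X → X, ∀ V : Set X, V.Nonempty → q V ∈ V := by
    rcases isEmpty_or_nonempty X with h | h
    · obtain ⟨z, hz, -, hz2⟩ := hc 1 one_pos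
      exfalso
      have : ev ω z = 0 := ev_eq_zero (S := {l : List X | l.length = N + 1 ∧ Small 1 l}) (by
        rintro l ⟨hl, -⟩
        cases l with
        | nil => simp at hl
        | cons x l => exact h.elim x) hz
      rw [hz2] at this
      exact one_ne_zero this
    · refine ⟨fun V => if h : V.Nonempty then h.some else Classical.arbitrary X, fun V hV => ?_⟩
      simp only [hV, dif_pos]
      exact hV.some_mem
  obtain ⟨q, hq⟩ := hch
  let φ : X → X := fun x => q (U x)
  have hφU : ∀ x, φ x ∈ U x := fun x => hq _ ⟨x, hxU x⟩
  have hφd : ∀ x, dist x (φ x) < ε / 4 := fun x => hmesh _ (hU x) _ (hxU x) _ (hφU x)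
  obtain ⟨lo⟩ : Nonempty (LinearOrder X) := ⟨(exists_wellFoundedLT X).choose⟩
  obtain ⟨z, hz, hbz, hωz⟩ := hc (min r (ε / 4)) (lt_min hr (by linarith))
  -- alt vanishes
  have hnodup : ∀ l : List X, l.length = N + 1 → Small r l → ¬ (l.map φ).Nodup := by
    intro l hl hs hnd
    apply hno
    have hlen : (l.map φ).length = N + 1 := by simp [hl]
    refine ⟨fun i => U (l.get (i.cast hl.symm)), ?_, fun i => hU _, ?_⟩
    · intro i j hij
      have h1 : φ (l.get (i.cast hl.symm)) = φ (l.get (j.cast hl.symm)) := by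
        simp only [φ]; rw [show U (l.get (i.cast hl.symm)) = U (l.get (j.cast hl.symm)) from hij]
      have h2 := List.Nodup.injective_get hnd
      have h3 : (l.map φ).get (i.cast hlen.symm) = (l.map φ).get (j.cast hlen.symm) := by
        simpa using h1
      have := h2 h3
      simpa using this
    · refine ⟨l.get ((0 : Fin (N + 1)).cast hl.symm), Set.mem_iInter.2 fun i => ?_⟩
      apply hrU
      rw [Metric.mem_ball]
      exact hs _ (List.get_mem _ _) _ (List.get_mem _ _)
  -- smallness of homotopies
  have hsm : ∀ σ l : List X, Small (min r (ε / 4)) σ → (∀ x ∈ l, x ∈ σ ∨ ∃ y ∈ σ, x = φ y) → Small ε l := by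
    intro σ l hσ hl
    have hcl : ∀ x ∈ l, ∃ y ∈ σ, dist x y < ε / 4 := by
      intro x hx
      rcases hl x hx with h | ⟨y, hy, rfl⟩
      · exact ⟨x, h, by simp; linarith⟩
      · exact ⟨y, hy, by rw [dist_comm]; exact hφd y⟩
    intro x hx y hy
    obtain ⟨x', hx', h1⟩ := hcl x hx
    obtain ⟨y', hy', h2⟩ := hcl y hy
    have h3 := hσ x' hx' y' hy'
    have h4 := min_le_right r (ε / 4)
    have h5 := dist_triangle4 x x' y' y
    rw [dist_comm y' y] at h5
    linarith
  let H : ℕ → Ch R X →ₗ[R] Ch R X := fun d => Finsupp.linearCombination R (hom φ d)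
  have e1 : bd (H (N + 1) z) = z - alt (mp φ z) - H N (bd z) := by
    refine map_congr_of_single (bd ∘ₗ H (N + 1)) (LinearMap.id - alt ∘ₗ mp φ - H N ∘ₗ bd) 
      (fun σ hσ => ?_) hz
    simp [H, bd_hom φ (N + 1) σ hσ.1]
  have e2 : alt (mp φ z) = 0 := by
    refine map_zero_of_single (alt ∘ₗ mp φ) (fun σ hσ => ?_) hz
    have : ¬ (σ.map φ).Nodup := hnodup σ hσ.1 
      (fun x hx y hy => lt_of_lt_of_le (hσ.2 x hx y hy) (min_le_left _ _))
    simp [altL_eq_zero this]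
  have e3 : ev ω (bd (H (N + 1) z)) = 0 := by
    refine map_zero_of_single (ev ω ∘ₗ bd ∘ₗ H (N + 1)) (fun σ hσ => ?_) hz
    simp only [H, LinearMap.comp_apply, Finsupp.linearCombination_single, one_smul]
    refine map_zero_of_single (S := {l : List X | l.length = σ.length + 1 ∧ ∀ x ∈ l, x ∈ σ ∨ ∃ y ∈ σ, x = φ y})
      (ev ω ∘ₗ bd) (fun τ hτ => ?_) (hom_mem φ (N + 1) σ)
    have := ha τ (by rw [hτ.1, hσ.1]) (hsm σ τ hσ.2 hτ.2)
    simp [this]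
  have e4 : ev ω (H N (bd z)) = 0 := by
    have hm : bd z ∈ Sup R {l : List X | l.length = N ∧ Small (min r (ε / 4)) l} := by
      refine bd_mem ?_ hz
      rintro l ⟨h1, h2⟩ l' h3 h4
      exact ⟨by omega, fun x hx y hy => h2 x (h3.subset hx) y (h3.subset hy)⟩
    refine map_zero_of_single (ev ω ∘ₗ H N) (fun σ hσ => ?_) (sup_inter hbz hm)
    obtain ⟨h1, h2, h3⟩ := hσ
    simp only [H, LinearMap.comp_apply, Finsupp.linearCombination_single, one_smul]
    rcases h1 with rfl | ⟨i, h1⟩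
    · cases N <;> simp [hom]
    · refine ev_eq_zero ?_ (hom_mem φ N σ)
      rintro τ ⟨h4, h5⟩
      refine hb τ (by rw [h4, h2]) (hsm σ τ h3 h5) i ?_
      intro x hx
      rcases h5 x hx with h | ⟨y, hy, rfl⟩
      · exact hBB i x (h1 x h) x (by simpa using hε)
      · exact hBB i y (h1 y hy) _ (by have := hφd y; linarith)
  have := congrArg (ev ω) e1
  rw [map_sub, map_sub, e2, e3, e4, hωz] at this
  simp at this

/-- cochain on powers -/
def omn {R : Type*} [CommRing R] {K : Type*} (k : ℕ) (ω : List K → R) : (n : ℕ) → List (Fin n → K) → R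
  | 0, _ => 1
  | n + 1, l => cr k ω (omn k ω n) (l.map (fun x => (x 0, Fin.tail x)))

lemma pow_step {R : Type*} [CommRing R] {K : Type*} [MetricSpace K]
    (A A' : Set K) (k : ℕ) (ε : ℝ) (hε : 0 < ε) (ω : List K → R)
    (hn : ∀ l₁ x l₂, ω (l₁ ++ x :: x :: l₂) = 0)
    (ha : ∀ l : List K, l.length = k + 2 → Small ε l → ev ω (bdL l) = 0)
    (hb : ∀ l : List K, l.length = k + 1 → Small ε l → (∀ x ∈ l, x ∈ A') → ω l = 0)
    (hc : ∀ ρ > 0, ∃ z ∈ Sup R {l : List K | l.length = k + 1 ∧ Small ρ l},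
      bd z ∈ Sup R {l : List K | ∀ x ∈ l, x ∈ A} ∧ ev ω z = 1) (n : ℕ) :
    (∀ l : List (Fin n → K), l.length = n * k + 2 → Small ε l → ev (omn k ω n) (bdL l) = 0) ∧
    (∀ l : List (Fin n → K), l.length = n * k + 1 → Small ε l → ∀ i, (∀ x ∈ l, x i ∈ A') →
      omn k ω n l = 0) ∧
    (∀ ρ > 0, ∃ z ∈ Sup R {l : List (Fin n → K) | l.length = n * k + 1 ∧ Small ρ l},
      bd z ∈ Sup R {l : List (Fin n → K) | l = [] ∨ ∃ i, ∀ x ∈ l, x i ∈ A} ∧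
      ev (omn k ω n) z = 1) := by
  induction n with
  | zero =>
    refine ⟨fun l hl _ => ?_, fun l _ _ i => i.elim0, fun ρ hρ => 
      ⟨Finsupp.single [Fin.elim0] 1, ?_, ?_, ?_⟩⟩
    · have hl : l.length = 2 := by simpa using hl
      obtain ⟨x, y, rfl⟩ := List.length_eq_two.1 hl
      simp [bdL, omn]
    · apply single_mem_sup
      refine ⟨by simp, ?_⟩
      intro x hx y hy
      simp only [List.mem_singleton] at hx hy
      rw [hx, hy, dist_self]; exact hρ
    · rw [bd_single, one_smul]
      simp only [bdL, map_zero, sub_zero]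
      exact single_mem_sup (Or.inl rfl) 1
    · simp [omn]
  | succ n ih =>
    obtain ⟨ia, ib, ic⟩ := ih
    have hlen : (n + 1) * k = k + n * k := by ring
    have sm1 : ∀ l : List (Fin (n + 1) → K), Small ε l → 
        ∀ l' : List (Fin (n + 1) → K), l'.Sublist l → Small ε (l'.map (fun x => x 0)) := by
      intro l hl l' hs x hx y hy
      rw [List.mem_map] at hx; obtain ⟨x, hx, rfl⟩ := hx
      rw [List.mem_map] at hy; obtain ⟨y, hy, rfl⟩ := hy
      exact lt_of_le_of_lt (dist_le_pi_dist x y 0) (hl x (hs.subset hx) y (hs.subset hy))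
    have sm2 : ∀ l : List (Fin (n + 1) → K), Small ε l → 
        ∀ l' : List (Fin (n + 1) → K), l'.Sublist l → Small ε (l'.map (fun x => Fin.tail x)) := by
      intro l hl l' hs x hx y hy
      rw [List.mem_map] at hx; obtain ⟨x, hx, rfl⟩ := hx
      rw [List.mem_map] at hy; obtain ⟨y, hy, rfl⟩ := hy
      refine lt_of_le_of_lt ?_ (hl x (hs.subset hx) y (hs.subset hy))
      exact (dist_pi_le_iff dist_nonneg).2 fun i => dist_le_pi_dist x y i.succ
    refine ⟨fun l hl hs => ?_, fun l hl hs i hi => ?_, fun ρ hρ => ?_⟩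
    · have : ev (omn k ω (n + 1)) (bdL l) = ev (cr k ω (omn k ω n)) 
        (bdL (l.map (fun x => (x 0, Fin.tail x)))) := by
        rw [← mp_bdL, ev_mp]; rfl
      rw [this, cr_bd _ _ _ _ (by simp; omega)]
      simp only [← List.map_take, ← List.map_drop, List.map_map]
      have h1 := ha ((l.take (k + 2)).map (fun x => x 0)) (by simp; omega) (sm1 l hs _ (List.take_sublist _ _))
      have h2 := ia ((l.drop k).map (fun x => Fin.tail x)) (by simp; omega) (sm2 l hs _ (List.drop_sublist _ _))
      have e1 : (Prod.fst ∘ fun x : Fin (n + 1) → K => (x 0, Fin.tail x)) = fun x => x 0 := rfl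
      have e2 : (Prod.snd ∘ fun x : Fin (n + 1) → K => (x 0, Fin.tail x)) = fun x => Fin.tail x := rfl
      rw [e1, e2, h1, h2]; simp
    · have e1 : (Prod.fst ∘ fun x : Fin (n + 1) → K => (x 0, Fin.tail x)) = fun x => x 0 := rfl
      have e2 : (Prod.snd ∘ fun x : Fin (n + 1) → K => (x 0, Fin.tail x)) = fun x => Fin.tail x := rfl
      simp only [omn, cr, ← List.map_take, ← List.map_drop, List.map_map, e1, e2]
      refine Fin.cases (motive := fun i => (∀ x ∈ l, x i ∈ A') → _) (fun hi => ?_) (fun i hi => ?_) i hi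
      · rw [hb _ (by simp; omega) (sm1 l hs _ (List.take_sublist _ _)), zero_mul]
        intro x hx
        rw [List.mem_map] at hx; obtain ⟨x, hx, rfl⟩ := hx
        exact hi x ((List.take_sublist _ _).subset hx)
      · rw [ib _ (by simp; omega) (sm2 l hs _ (List.drop_sublist _ _)) i, mul_zero]
        intro x hx
        rw [List.mem_map] at hx; obtain ⟨x, hx, rfl⟩ := hx
        exact hi x ((List.drop_sublist _ _).subset hx)
    · obtain ⟨z, hz1, hz2, hz3⟩ := hc ρ hρ
      obtain ⟨w, hw1, hw2, hw3⟩ := ic ρ hρ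
      let J : K × (Fin n → K) → (Fin (n + 1) → K) := fun p => Fin.cons p.1 p.2
      refine ⟨mp J (ezz z w), ?_, ?_, ?_⟩
      · have := ezz_mem (U := {l | l.length = (n + 1) * k + 1 ∧ Small ρ (l.map J)}) (by
          rintro σ ⟨h1, h2⟩ τ ⟨h3, h4⟩ l h5 h6
          refine ⟨by omega, ?_⟩
          intro x hx y hy
          rw [List.mem_map] at hx; obtain ⟨x, hx, rfl⟩ := hx
          rw [List.mem_map] at hy; obtain ⟨y, hy, rfl⟩ := hy
          refine (dist_pi_lt_iff hρ).2 fun i => ?_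
          refine Fin.cases ?_ (fun i => ?_) i
          · simpa [J] using h2 _ (h6 x hx).1 _ (h6 y hy).1
          · simpa [J] using lt_of_le_of_lt (dist_le_pi_dist x.2 y.2 i) (h4 _ (h6 x hx).2 _ (h6 y hy).2)) 
          hz1 hw1
        refine map_mem_of_single _ _ (fun l hl => ?_) this
        rw [mp_single]
        apply single_mem_sup
        exact ⟨by simpa using hl.1, hl.2⟩
      · rw [← mp_bd]
        have := bd_ezz_mem (k := k + 1) (U := {l | l = [] ∨ ∃ i, ∀ x ∈ l.map J, x i ∈ A}) (Or.inl rfl) 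
          (by
            rintro σ - τ hτ l h5 h6
            rcases hτ with rfl | ⟨i, hi⟩
            · left
              cases l with
              | nil => rfl
              | cons p l => simpa using (h6 p (by simp)).2
            · right
              refine ⟨i.succ, fun x hx => ?_⟩
              rw [List.mem_map] at hx; obtain ⟨x, hx, rfl⟩ := hx
              simpa [J] using hi _ (h6 x hx).2) 
          (by
            rintro σ hσ τ - l h5 h6
            right
            refine ⟨0, fun x hx => ?_⟩
            rw [List.mem_map] at hx; obtain ⟨x, hx, rfl⟩ := hx
            simpa [J] using hσ _ (h6 x hx).1) 
          hz1 (sup_mono hz1 (fun l hl => hl.1)) hz2 hw1 hw2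
        refine map_mem_of_single _ _ (fun l hl => ?_) this
        rw [mp_single]
        apply single_mem_sup
        rcases hl with rfl | hl
        · left; rfl
        · right; exact hl
      · rw [ev_mp]
        have : (fun l : List (K × (Fin n → K)) => omn k ω (n + 1) (l.map J)) = cr k ω (omn k ω n) := by
          funext l
          simp only [omn, List.map_map]
          congr 1
          have : ((fun x : Fin (n + 1) → K => (x 0, Fin.tail x)) ∘ J) = id := by
            funext p; simp [J]
          rw [this, List.map_id]
        rw [this, cr_ezz k ω hn _ (sup_mono hz1 (fun l hl => hl.1)) (sup_mono hw1 (fun l hl => ?_)), hz3, hw3, one_mul]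
        rintro rfl
        simp at hl

lemma pow_cover {R : Type*} [CommRing R] [Nontrivial R] {K : Type*} [MetricSpace K] [CompactSpace K]
    (A A' : Set K) (k : ℕ) (ε : ℝ) (hε : 0 < ε) (ω : List K → R)
    (hAA : ∀ x ∈ A, ∀ y, dist x y < ε → y ∈ A')
    (hn : ∀ l₁ x l₂, ω (l₁ ++ x :: x :: l₂) = 0)
    (ha : ∀ l : List K, l.length = k + 2 → Small ε l → ev ω (bdL l) = 0)
    (hb : ∀ l : List K, l.length = k + 1 → Small ε l → (∀ x ∈ l, x ∈ A') → ω l = 0)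
    (hc : ∀ ρ > 0, ∃ z ∈ Sup R {l : List K | l.length = k + 1 ∧ Small ρ l},
      bd z ∈ Sup R {l : List K | ∀ x ∈ l, x ∈ A} ∧ ev ω z = 1) (n : ℕ) 
    (γ : Set (Set (Fin n → K))) (hγ : (∀ U ∈ γ, IsOpen U) ∧ ⋃₀ γ = Set.univ)
    (hmesh : ∀ U ∈ γ, ∀ x ∈ U, ∀ y ∈ U, dist x y < ε / 4) :
    ∃ f : Fin (n * k + 1) → Set (Fin n → K),
      Function.Injective f ∧ (∀ i, f i ∈ γ) ∧ (⋂ i, f i).Nonempty := by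
  obtain ⟨h1, h2, h3⟩ := pow_step A A' k ε hε ω hn ha hb hc n
  refine cover_order (fun i : Fin n => {x : Fin n → K | x i ∈ A})
    (fun i : Fin n => {x : Fin n → K | x i ∈ A'}) (n * k) ε hε
    (omn k ω n) ?_ h1 h2 h3 γ hγ hmesh
  intro i x hx y hxy
  exact hAA _ hx _ (lt_of_le_of_lt (dist_le_pi_dist x y i) hxy)

end WD

namespace WD

/-- the target label list -/
def tgt (m : ℕ) : List (Fin (m + 1)) := (List.finRange m).map Fin.castSucc

/-- the basic label cochain -/
noncomputable def eL (m : ℕ) (l : List (Fin (m + 1))) : ℤ := (altL l : Ch ℤ (Fin (m + 1))) (tgt m)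

/-- the pulled back top cocycle -/
noncomputable def uL {K : Type*} (m : ℕ) (lam : K → Fin (m + 1)) (l : List K) : ℤ :=
  ev (eL m) (bdL (l.map lam))

lemma ev_alt {R : Type*} [CommRing R] {α : Type*} [LinearOrder α] (c : List α → R) (d : Ch R α) :
    ev (fun l => ev c (altL l)) d = ev c (alt d) := by
  have : (ev (fun l => ev c (altL l)) : Ch R α →ₗ[R] R) = ev c ∘ₗ alt := by
    apply ch_ext; intro l; simp
  exact congrArg (fun f => f d) this

lemma ev_eL (m : ℕ) (c : Ch ℤ (Fin (m + 1))) : ev (eL m) c = alt c (tgt m) := by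
  have : (ev (eL m) : Ch ℤ (Fin (m + 1)) →ₗ[ℤ] ℤ) = Finsupp.lapply (tgt m) ∘ₗ alt := by
    apply ch_ext; intro l; simp [eL]
  exact congrArg (fun f => f c) this

lemma ev_uL {K : Type*} (m : ℕ) (lam : K → Fin (m + 1)) (c : Ch ℤ K) :
    ev (uL m lam) c = ev (eL m) (bd (mp lam c)) := by
  have : (ev (uL m lam) : Ch ℤ K →ₗ[ℤ] ℤ) = ev (eL m) ∘ₗ bd ∘ₗ mp lam := by
    apply ch_ext; intro l; simp [uL]
  exact congrArg (fun f => f c) this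

lemma uL_eq {K : Type*} (m : ℕ) (lam : K → Fin (m + 1)) (l : List K) :
    uL m lam l = bd (altL (l.map lam)) (tgt m) := by
  rw [uL, ev_eL, bd_altL]

lemma uL_zero {K : Type*} (m : ℕ) (lam : K → Fin (m + 1)) (l : List K) (h : ¬ (l.map lam).Nodup) :
    uL m lam l = 0 := by
  rw [uL_eq, altL_eq_zero h]; simp

lemma uL_alt {K : Type*} [LinearOrder K] (m : ℕ) (lam : K → Fin (m + 1)) (l : List K) :
    ev (uL m lam) (altL l) = uL m lam l := by
  rw [ev_uL, ev_eL, ← bd_alt, alt_mp_altL, uL_eq]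

lemma uL_bd {K : Type*} (m : ℕ) (lam : K → Fin (m + 1)) (l : List K) :
    ev (uL m lam) (bdL l) = 0 := by
  rw [ev_uL, mp_bdL, bd_bdL]; simp

lemma not_nodup_of_miss {K : Type*} (m : ℕ) (lam : K → Fin (m + 1)) (l : List K)
    (hl : l.length = m + 1) (j : Fin (m + 1)) (h : ∀ x ∈ l, lam x ≠ j) : ¬ (l.map lam).Nodup := by
  intro hnd
  have h1 : (l.map lam).toFinset.card = m + 1 := by
    rw [List.toFinset_card_of_nodup hnd]; simp [hl]
  have h2 : (l.map lam).toFinset = Finset.univ := by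
    apply Finset.eq_univ_of_card; simp [h1]
  have h3 : j ∈ (l.map lam).toFinset := by rw [h2]; simp
  simp only [List.mem_toFinset, List.mem_map] at h3
  obtain ⟨x, hx, hj⟩ := h3
  exact h x hx hj

/-- factorization of functionals through linear maps -/
lemma factor_dual {F V W : Type*} [Field F] [AddCommGroup V] [Module F V] [AddCommGroup W] [Module F W]
    (S : Submodule F V) (D : V →ₗ[F] W) (w : V →ₗ[F] F) (h : ∀ z ∈ S, D z = 0 → w z = 0) :
    ∃ b : W →ₗ[F] F, ∀ z ∈ S, b (D z) = w z := by
  let D' : S →ₗ[F] W := D ∘ₗ S.subtype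
  have hw : w ∘ₗ S.subtype ∈ (LinearMap.ker D').dualAnnihilator := by
    rw [Submodule.mem_dualAnnihilator]
    intro z hz
    exact h z z.2 hz
  rw [← LinearMap.range_dualMap_eq_dualAnnihilator_ker D'] at hw
  obtain ⟨b, hb⟩ := hw
  exact ⟨b, fun z hz => congrArg (fun f => f ⟨z, hz⟩) hb⟩

/-- finite dimensional duality -/
lemma duality {F : Type*} [Field F] {α : Type*} (ω : List α → F) (I A : Set (List α))
    (h : ¬ ∃ z ∈ Sup F I, bd z ∈ Sup F A ∧ ev ω z = 1) :
    ∃ b : List α → F, (∀ l ∈ A, b l = 0) ∧ ∀ l ∈ I, ev b (bdL l) = ω l := by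
  obtain ⟨b, hb⟩ := factor_dual (V := Ch F α) (Sup F I) ((Sup F A).mkQ ∘ₗ bd) (ev ω) (by
    intro z hz h0
    by_contra hne
    apply h
    refine ⟨(ev ω z)⁻¹ • z, Submodule.smul_mem _ _ hz, ?_, ?_⟩
    · rw [map_smul]
      apply Submodule.smul_mem
      simpa using h0
    · rw [map_smul]
      exact inv_mul_cancel₀ hne)
  refine ⟨fun l => b ((Sup F A).mkQ (Finsupp.single l 1)), ?_, ?_⟩
  · intro l hl
    have : (Sup F A).mkQ (Finsupp.single l 1) = 0 := by
      rw [Submodule.mkQ_apply, Submodule.Quotient.mk_eq_zero]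
      exact single_mem_sup hl 1
    simp only [this, map_zero]
  · intro l hl
    have h1 : (ev (fun l => b ((Sup F A).mkQ (Finsupp.single l 1))) : Ch F α →ₗ[F] F) = b ∘ₗ (Sup F A).mkQ := by
      apply ch_ext; intro l; simp
    have h2 := hb (Finsupp.single l 1) (single_mem_sup hl 1)
    rw [h1]
    simpa using h2

/-- finite nets compatible with labels -/
lemma net {K : Type*} [MetricSpace K] [CompactSpace K] {L : Type*} [Finite L] (lam : K → L) (A : Set K)
    (ε : ℝ) (hε : 0 < ε) : ∃ ν : K → K, (Set.range ν).Finite ∧ (∀ x, dist (ν x) x < ε) ∧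
      (∀ x, lam (ν x) = lam x) ∧ ∀ x ∈ A, ν x ∈ A := by
  classical
  obtain ⟨t, -, ht, hcov⟩ := Metric.totallyBounded_iff.1 (isCompact_univ (X := K)).totallyBounded (ε / 2) (by linarith)
    |>.imp fun t h => (⟨Set.subset_univ t, h.1, h.2⟩ : t ⊆ Set.univ ∧ t.Finite ∧ _)
  have : ∀ x : K, ∃ y : t, dist x y < ε / 2 := by
    intro x
    have := hcov (Set.mem_univ x)
    simp only [Set.mem_iUnion, Metric.mem_ball] at this
    obtain ⟨y, hy, h⟩ := this
    exact ⟨⟨y, hy⟩, h⟩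
  choose q hq using this
  have : Finite t := ht
  let Q : K → t × L × Prop := fun x => (q x, lam x, x ∈ A)
  let ν : K → K := fun x => (⟨x, rfl⟩ : ∃ y, Q y = Q x).choose
  have hν : ∀ x, Q (ν x) = Q x := fun x => (⟨x, rfl⟩ : ∃ y, Q y = Q x).choose_spec
  have hext : ∃ g : t × L × Prop → K, ∀ x, ν x = g (Q x) := by
    rcases isEmpty_or_nonempty K with h | h
    · exact ⟨fun p => h.elim p.1, fun x => h.elim x⟩
    · refine ⟨fun p => if h : ∃ y, Q y = p then h.choose else Classical.arbitrary K, fun x => ?_⟩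
      have : ∃ y, Q y = Q x := ⟨x, rfl⟩
      simp only [this, dif_pos]
      rfl
  obtain ⟨g, hg⟩ := hext
  refine ⟨ν, ?_, ?_, ?_, ?_⟩
  · have : Set.range ν ⊆ Set.range g := by
      rintro _ ⟨x, rfl⟩; rw [hg]; exact ⟨_, rfl⟩
    exact (Set.finite_range g).subset this
  · intro x
    have h1 : q (ν x) = q x := congrArg Prod.fst (hν x)
    have h2 := hq (ν x)
    have h3 := hq x
    rw [h1] at h2
    have := dist_triangle_right (ν x) x (q x : K)
    linarith
  · intro x
    exact congrArg (fun p => p.2.1) (hν x)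
  · intro x hx
    have : (ν x ∈ A) = (x ∈ A) := congrArg (fun p => p.2.2) (hν x)
    rw [this]; exact hx

lemma small_mono {X : Type*} [PseudoMetricSpace X] {ε ε' : ℝ} (h : ε ≤ ε') {l : List X} (hl : Small ε l) :
    Small ε' l := fun x hx y hy => lt_of_lt_of_le (hl x hx y hy) h

lemma small_sub {X : Type*} [PseudoMetricSpace X] {ε : ℝ} {l l' : List X} (h : ∀ x ∈ l', x ∈ l) (hl : Small ε l) :
    Small ε l' := fun x hx y hy => hl x (h x hx) y (h y hy)

/-- the conclusion of the algebraic part -/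
def Good (K : Type*) [MetricSpace K] (m : ℕ) : Prop :=
  ∃ (k : ℕ) (ε : ℝ), m ≤ k + 1 ∧ 0 < ε ∧ ∀ n : ℕ, ∀ γ : Set (Set (Fin n → K)), 
    ((∀ U ∈ γ, IsOpen U) ∧ ⋃₀ γ = Set.univ) → (∀ U ∈ γ, ∀ x ∈ U, ∀ y ∈ U, dist x y < ε) →
    ∃ f : Fin (n * k + 1) → Set (Fin n → K),
      Function.Injective f ∧ (∀ i, f i ∈ γ) ∧ (⋂ i, f i).Nonempty

lemma not_nodup_of_consec {α β : Type*} (f : α → β) (l₁ : List α) (x : α) (l₂ : List α) :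
    ¬ ((l₁ ++ x :: x :: l₂).map f).Nodup := by
  simp [List.nodup_append]

theorem part2 {K : Type*} [MetricSpace K] [CompactSpace K] (m : ℕ) (hm : 1 ≤ m)
    (lam : K → Fin (m + 1)) (A : ℝ → Set K) (τ : ℝ) (hτ : 0 < τ)
    (F1 : ∀ η, 0 < η → η < τ → ∃ ε > 0, ∀ S : Set K, (∀ x ∈ S, x ∈ A η) → 
      (∀ x ∈ S, ∀ y ∈ S, dist x y < ε) → ∃ j, ∀ x ∈ S, lam x ≠ j)
    (F2 : ∀ η η', η < η' → ∃ ε > 0, ∀ x ∈ A η, ∀ y, dist x y < ε → y ∈ A η')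
    (NoC : ∀ η, 0 < η → η < τ → ∀ ε > 0, ¬ ∃ c : List K → ℤ, 
      (∀ l : List K, l.length = m → Small ε l → (∀ x ∈ l, x ∈ A η) → c l = 0) ∧
      (∀ l : List K, l.length = m + 1 → Small ε l → ev c (bdL l) = uL m lam l)) :
    Good K m := by
  classical
  obtain ⟨lo⟩ : Nonempty (LinearOrder K) := ⟨(exists_wellFoundedLT K).choose⟩
  let T : ℕ → Prop := fun N => ∃ η, 0 < η ∧ η < τ ∧ ∃ ε > 0, ∃ c : List K → ℤ, 
      (∀ l : List K, l.length = m → Small ε l → (∀ x ∈ l, x ∈ A η) → c l = 0) ∧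
      (∀ l : List K, l.length = m + 1 → Small ε l → ev c (bdL l) = N * uL m lam l)
  by_cases hT : ∃ N, 1 ≤ N ∧ T N
  · -- torsion case
    obtain ⟨N, ⟨hN1, hN⟩, hmin⟩ : ∃ N, (1 ≤ N ∧ T N) ∧ ∀ N' < N, ¬ (1 ≤ N' ∧ T N') :=
      ⟨Nat.find hT, Nat.find_spec hT, fun N' h => Nat.find_min hT h⟩
    obtain ⟨η, hη0, hητ, ε, hε, c, hc0, hc⟩ := hN
    have hNne : N ≠ 1 := by
      rintro rfl
      exact NoC η hη0 hητ ε hε ⟨c, hc0, fun l h1 h2 => by simpa using hc l h1 h2⟩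
    let p := N.minFac
    have hp : Fact p.Prime := ⟨Nat.minFac_prime hNne⟩
    obtain ⟨N', hN'⟩ := Nat.minFac_dvd N
    have hp2 : 2 ≤ p := hp.1.two_le
    have hN'1 : 1 ≤ N' := by
      rcases Nat.eq_zero_or_pos N' with h | h
      · rw [h] at hN'; omega
      · exact h
    have hN'lt : N' < N := by
      have : N = p * N' := hN'
      nlinarith
    let f : List K → ℤ := fun l => ev c (altL l)
    have hf0 : ∀ l : List K, l.length = m → Small ε l → (∀ x ∈ l, x ∈ A η) → f l = 0 := by
      intro l h1 h2 h3
      refine ev_eq_zero ?_ (altL_mem l)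
      rintro l' ⟨h4, -⟩
      exact hc0 l' (by rw [h4.length_eq, h1]) (small_sub (fun x hx => h4.mem_iff.1 hx) h2) 
        (fun x hx => h3 x (h4.mem_iff.1 hx))
    have hf : ∀ l : List K, l.length = m + 1 → Small ε l → ev f (bdL l) = N * uL m lam l := by
      intro l h1 h2
      rw [ev_alt, ← bd_altL, ← uL_alt]
      have : ev c (bd (altL l)) = ((N : ℤ) • ev (uL m lam)) (altL l) := by
        refine map_congr_of_single (ev c ∘ₗ bd) _ (fun l' hl' => ?_) (altL_mem l)
        have := hc l' (by rw [hl'.1.length_eq, h1]) (small_sub (fun x hx => hl'.1.mem_iff.1 hx) h2)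
        simp [this]
      rw [this]; simp
    obtain ⟨ε', hε', hAA⟩ := F2 (η / 2) η (by linarith)
    have hn : ∀ l₁ x l₂, ((f (l₁ ++ x :: x :: l₂) : ℤ) : ZMod p) = 0 := by
      intro l₁ x l₂
      have := not_nodup_of_consec id l₁ x l₂
      rw [List.map_id] at this
      simp [f, altL_eq_zero this]
    refine ⟨m - 1, min ε ε' / 4, by omega, by positivity, fun n γ hγ hmesh => ?_⟩
    refine pow_cover (R := ZMod p) (A (η / 2)) (A η) (m - 1) (min ε ε') (by positivity) 
      (fun l => ((f l : ℤ) : ZMod p)) ?_ hn ?_ ?_ ?_ n γ hγ hmesh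
    · intro x hx y hxy
      exact hAA x hx y (lt_of_lt_of_le hxy (min_le_right _ _))
    · intro l h1 h2
      rw [ev_bdL_cast, hf l (by omega) (small_mono (min_le_left _ _) h2)]
      have : (N : ZMod p) = 0 := (ZMod.natCast_eq_zero_iff N p).2 (Nat.minFac_dvd N)
      simp [this]
    · intro l h1 h2 h3
      rw [hf0 l (by omega) (small_mono (min_le_left _ _) h2) h3]; simp
    · intro ρ hρ
      by_contra hno
      obtain ⟨b, hb0, hb⟩ := duality (fun l => ((f l : ℤ) : ZMod p)) 
        {l : List K | l.length = m - 1 + 1 ∧ Small (min ρ ε) l} {l : List K | ∀ x ∈ l, x ∈ A (η / 2)} (by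
          rintro ⟨z, hz1, hz2, hz3⟩
          refine hno ⟨z, sup_mono hz1 ?_, hz2, hz3⟩
          rintro l ⟨h1, h2⟩
          exact ⟨h1, small_mono (min_le_left _ _) h2⟩)
      let bt : List K → ℤ := fun l => ((b l).val : ℤ)
      have hbt : ∀ l, ((bt l : ℤ) : ZMod p) = b l := by
        intro l; simp [bt]
      have hdiv : ∀ l : List K, l.length = m → Small (min ρ ε) l → ∃ q, f l - ev bt (bdL l) = p * q := by
        intro l h1 h2
        have h3 := hb l ⟨by omega, h2⟩
        have h4 : ev b (bdL l) = ((ev bt (bdL l) : ℤ) : ZMod p) := by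
          rw [← ev_bdL_cast]; simp only [hbt]
        have h5 : ((f l - ev bt (bdL l) : ℤ) : ZMod p) = 0 := by
          push_cast; rw [← h4, h3]; simp
        exact (ZMod.intCast_zmod_eq_zero_iff_dvd _ p).1 h5
      let c2 : List K → ℤ := fun l => (f l - ev bt (bdL l)) / p
      have hp0 : (p : ℤ) ≠ 0 := by exact_mod_cast hp.1.ne_zero
      have hc2 : ∀ l : List K, l.length = m → Small (min ρ ε) l → p * c2 l = f l - ev bt (bdL l) := by
        intro l h1 h2
        obtain ⟨q, hq⟩ := hdiv l h1 h2
        simp only [c2]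
        rw [hq, Int.mul_ediv_cancel_left _ hp0]
      apply hmin N' hN'lt
      refine ⟨hN'1, η / 2, by linarith, by linarith, min ρ ε, by positivity, c2, ?_, ?_⟩
      · intro l h1 h2 h3
        have e1 : f l = 0 := hf0 l h1 (small_mono (min_le_right _ _) h2) (fun x hx => 
          hAA x (h3 x hx) x (by simpa using hε'))
        have e2 : ev bt (bdL l) = 0 := by
          refine ev_eq_zero ?_ (bdL_mem l)
          rintro l' ⟨h4, -⟩
          simp [bt, hb0 l' (fun x hx => h3 x (h4.subset hx))]
        simp [c2, e1, e2]
      · intro l h1 h2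
        apply mul_left_cancel₀ hp0
        rw [← ev_mul, ← mul_assoc]
        have : ev (fun l => (p : ℤ) * c2 l) (bdL l) = ev (fun l => f l - ev bt (bdL l)) (bdL l) := by
          refine ev_congr ?_ (bdL_mem l)
          rintro l' ⟨h3, h4⟩
          exact hc2 l' (by omega) (small_sub (fun x hx => h3.subset hx) h2)
        rw [this, ev_sub, hf l h1 (small_mono (min_le_right _ _) h2)]
        have h5 : ev (fun l => ev bt (bdL l)) (bdL l) = 0 := by
          have : (ev (fun l => ev bt (bdL l)) : Ch ℤ K →ₗ[ℤ] ℤ) = ev bt ∘ₗ bd := by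
            apply ch_ext; intro l; simp
          rw [this, LinearMap.comp_apply, bd_bdL, map_zero]
        rw [h5, sub_zero]
        congr 1
        exact_mod_cast hN'
  · -- rational case
    obtain ⟨ε, hε, hmiss⟩ := F1 (τ / 2) (by linarith) (by linarith)
    obtain ⟨ε', hε', hAA⟩ := F2 (τ / 4) (τ / 2) (by linarith)
    refine ⟨m, min ε ε' / 4, by omega, by positivity, fun n γ hγ hmesh => ?_⟩
    refine pow_cover (R := ℚ) (A (τ / 4)) (A (τ / 2)) m (min ε ε') (by positivity) 
      (fun l => ((uL m lam l : ℤ) : ℚ)) ?_ ?_ ?_ ?_ ?_ n γ hγ hmesh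
    · intro x hx y hxy
      exact hAA x hx y (lt_of_lt_of_le hxy (min_le_right _ _))
    · intro l₁ x l₂
      rw [uL_zero _ _ _ (not_nodup_of_consec _ _ _ _)]; simp
    · intro l h1 h2
      rw [ev_bdL_cast, uL_bd]; simp
    · intro l h1 h2 h3
      obtain ⟨j, hj⟩ := hmiss {x | x ∈ l} h3 (fun x hx y hy => lt_of_lt_of_le (h2 x hx y hy) (min_le_left _ _))
      rw [uL_zero m lam l (not_nodup_of_miss m lam l h1 j hj)]; simp
    · intro ρ hρ
      by_contra hno
      obtain ⟨b, hb0, hb⟩ := duality (fun l => ((uL m lam l : ℤ) : ℚ)) 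
        {l : List K | l.length = m + 1 ∧ Small ρ l} {l : List K | ∀ x ∈ l, x ∈ A (τ / 4)} hno
      obtain ⟨ν, hfin, hν, hνl, hνA⟩ := net lam (A (τ / 4)) (ρ / 3) (by linarith)
      have hfinL : {l : List K | ∃ l' : List K, l'.length = m ∧ l = l'.map ν}.Finite := by
        have : Finite (Set.range ν) := hfin
        refine ((List.finite_length_eq (Set.range ν) m).image (List.map Subtype.val)).subset ?_
        rintro l ⟨l', h1, rfl⟩
        refine ⟨l'.map (Set.rangeFactorization ν), by simpa using h1, ?_⟩
        rw [List.map_map]; rfl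
      let D : ℕ := ∏ l ∈ hfinL.toFinset, (b l).den
      have hD1 : 1 ≤ D := Finset.prod_pos fun l _ => (b l).pos
      have hintg : ∀ l : List K, l.length = m → ∃ q : ℤ, (q : ℚ) = D * b (l.map ν) := by
        intro l hl
        have : (b (l.map ν)).den ∣ D := Finset.dvd_prod_of_mem _ (by simpa using ⟨l, hl, rfl⟩)
        obtain ⟨e, he⟩ := this
        refine ⟨e * (b (l.map ν)).num, ?_⟩
        rw [he]; push_cast
        rw [mul_comm ((b (l.map ν)).den : ℚ), mul_assoc, Rat.den_mul_eq_num]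
      apply hT
      refine ⟨D, hD1, τ / 4, by linarith, by linarith, ρ / 3, by linarith, 
        fun l => (D * b (l.map ν)).num, ?_, ?_⟩
      · intro l h1 h2 h3
        have : b (l.map ν) = 0 := by
          apply hb0
          intro x hx
          rw [List.mem_map] at hx
          obtain ⟨x, hx, rfl⟩ := hx
          exact hνA x (h3 x hx)
        simp [this]
      · intro l h1 h2
        have e1 : ev (fun l => (((D * b (l.map ν)).num : ℤ) : ℚ)) (bdL l) 
          = ev (fun l => (D : ℚ) * b (l.map ν)) (bdL l) := by
          refine ev_congr ?_ (bdL_mem l)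
          rintro l' ⟨h3, h4⟩
          obtain ⟨q, hq⟩ := hintg l' (by omega)
          rw [← hq]; simp
        rw [ev_bdL_cast, ev_mul, ← ev_mp ν b, mp_bdL, hb (l.map ν)] at e1
        · have e2 : uL m lam (l.map ν) = uL m lam l := by
            simp only [uL, List.map_map]
            congr 3
            funext x; exact hνl x
          rw [e2] at e1
          exact_mod_cast e1
        · refine ⟨by simpa using h1, ?_⟩
          intro x hx y hy
          rw [List.mem_map] at hx hy
          obtain ⟨x, hx, rfl⟩ := hx
          obtain ⟨y, hy, rfl⟩ := hy
          have h3 := h2 x hx y hy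
          have h4 := hν x
          have h5 := hν y
          have h6 := dist_triangle4 (ν x) x y (ν y)
          rw [dist_comm y] at h6
          linarith

end WD

namespace WD
open MeanDimPaper

section tops
variable {V : Type*} [Fintype V] [DecidableEq V]

/-- the weight of the top set `F` -/
noncomputable def tt (s : V → ℝ) (F : Finset V) : ℝ :=
  (∏ v ∈ F, ∏ w ∈ Fᶜ, max (s v - s w) 0) * ∏ v ∈ F, max (s v) 0

lemma tt_nonneg (s : V → ℝ) (F : Finset V) : 0 ≤ tt s F := by
  unfold tt
  apply mul_nonneg
  · exact Finset.prod_nonneg fun v _ => Finset.prod_nonneg fun w _ => le_max_right _ _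
  · exact Finset.prod_nonneg fun v _ => le_max_right _ _

lemma tt_pos_iff (s : V → ℝ) (F : Finset V) :
    0 < tt s F ↔ (∀ v ∈ F, ∀ w, w ∉ F → s w < s v) ∧ ∀ v ∈ F, 0 < s v := by
  constructor
  · intro h
    have h0 : tt s F ≠ 0 := h.ne'
    unfold tt at h0
    rw [mul_ne_zero_iff, Finset.prod_ne_zero_iff, Finset.prod_ne_zero_iff] at h0
    refine ⟨fun v hv w hw => ?_, fun v hv => ?_⟩
    · have := h0.1 v hv
      rw [Finset.prod_ne_zero_iff] at this
      have := this w (by simpa using hw)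
      by_contra hc
      push Not at hc
      exact this (max_eq_right (by linarith))
    · have := h0.2 v hv
      by_contra hc
      push Not at hc
      exact this (max_eq_right hc)
  · rintro ⟨h1, h2⟩
    unfold tt
    apply mul_pos
    · refine Finset.prod_pos fun v hv => Finset.prod_pos fun w hw => ?_
      have := h1 v hv w (by simpa using hw)
      exact lt_max_of_lt_left (by linarith)
    · exact Finset.prod_pos fun v hv => lt_max_of_lt_left (h2 v hv)

lemma tt_sub {s : V → ℝ} {F G : Finset V} (hF : 0 < tt s F) (hG : 0 < tt s G)
    (h : F.card ≤ G.card) : F ⊆ G := by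
  rw [tt_pos_iff] at hF hG
  intro v hv
  by_contra hvG
  have : ∃ w ∈ G, w ∉ F := by
    by_contra hc
    push Not at hc
    have : G ⊂ F := ⟨hc, fun hs => hvG (hs hv)⟩
    have := Finset.card_lt_card this
    omega
  obtain ⟨w, hw, hwF⟩ := this
  have h1 := hF.1 v hv w hwF
  have h2 := hG.1 w hw v hvG
  linarith

lemma tt_eq {s : V → ℝ} {F G : Finset V} (hF : 0 < tt s F) (hG : 0 < tt s G)
    (h : F.card = G.card) : F = G :=
  Finset.Subset.antisymm (tt_sub hF hG h.le) (tt_sub hG hF h.ge)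

lemma tt_exists (s : V → ℝ) (h : ∃ v, 0 < s v) : ∃ F : Finset V, F.Nonempty ∧ 0 < tt s F := by
  obtain ⟨v0, hv0⟩ := h
  obtain ⟨v, -, hv⟩ := Finset.exists_max_image Finset.univ s ⟨v0, Finset.mem_univ _⟩
  have hmax : ∀ w, s w ≤ s v := fun w => hv w (Finset.mem_univ _)
  refine ⟨Finset.univ.filter fun w => s w = s v, ⟨v, by simp⟩, ?_⟩
  rw [tt_pos_iff]
  refine ⟨fun a ha w hw => ?_, fun a ha => ?_⟩
  · simp only [Finset.mem_filter, Finset.mem_univ, true_and] at ha hw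
    rw [ha]
    exact lt_of_le_of_ne (hmax w) hw
  · simp only [Finset.mem_filter, Finset.mem_univ, true_and] at ha
    rw [ha]
    exact lt_of_lt_of_le hv0 (hmax v0)

lemma tt_continuous {K : Type*} [TopologicalSpace K] {s : V → K → ℝ} (hs : ∀ v, Continuous (s v))
    (F : Finset V) : Continuous fun x => tt (fun v => s v x) F := by
  unfold tt
  refine Continuous.mul ?_ ?_
  · refine continuous_finsetProd _ fun v _ => continuous_finsetProd _ fun w _ => ?_
    exact ((hs v).sub (hs w)).max continuous_const
  · exact continuous_finsetProd _ fun v _ => (hs v).max continuous_const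

/-- the sum of weights of top sets of a given cardinality -/
noncomputable def TT (s : V → ℝ) (j : ℕ) : ℝ :=
  ∑ F ∈ Finset.univ.filter (fun F : Finset V => F.card = j + 1), tt s F

lemma TT_nonneg (s : V → ℝ) (j : ℕ) : 0 ≤ TT s j :=
  Finset.sum_nonneg fun F _ => tt_nonneg s F

lemma TT_pos_iff (s : V → ℝ) (j : ℕ) : 0 < TT s j ↔ ∃ F : Finset V, F.card = j + 1 ∧ 0 < tt s F := by
  unfold TT
  rw [Finset.sum_pos_iff_of_nonneg (fun F _ => tt_nonneg s F)]
  simp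

lemma TT_continuous {K : Type*} [TopologicalSpace K] {s : V → K → ℝ} (hs : ∀ v, Continuous (s v))
    (j : ℕ) : Continuous fun x => TT (fun v => s v x) j := by
  unfold TT
  exact continuous_finsetSum _ fun F _ => tt_continuous hs F

lemma TT_eq {s : V → ℝ} {F : Finset V} {j : ℕ} (hF : 0 < tt s F) (h : F.card = j + 1) :
    TT s j = tt s F := by
  unfold TT
  apply Finset.sum_eq_single
  · intro G hG hne
    by_contra h0
    have hG' : 0 < tt s G := lt_of_le_of_ne (tt_nonneg s G) (Ne.symm h0)
    apply hne
    apply tt_eq hG' hF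
    simp only [Finset.mem_filter, Finset.mem_univ, true_and] at hG
    omega
  · intro hn
    simp [h] at hn

lemma tt_card {s : V → ℝ} {F : Finset V} (hF : 0 < tt s F) :
    F.card ≤ (Finset.univ.filter fun v => 0 < s v).card := by
  apply Finset.card_le_card
  intro v hv
  simp only [Finset.mem_filter, Finset.mem_univ, true_and]
  exact ((tt_pos_iff s F).1 hF).2 v hv

lemma TT_exists (s : V → ℝ) (m : ℕ) (h : ∃ v, 0 < s v)
    (hc : (Finset.univ.filter fun v => 0 < s v).card ≤ m + 1) : ∃ j : Fin (m + 1), 0 < TT s j := by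
  obtain ⟨F, hne, hF⟩ := tt_exists s h
  have h1 := tt_card hF
  have h2 := hne.card_pos
  refine ⟨⟨F.card - 1, by omega⟩, ?_⟩
  rw [TT_pos_iff]
  refine ⟨F, ?_, hF⟩
  simp only
  omega

end tops


/-- covers to functions -/
lemma exists_part {K : Type u} [MetricSpace K] [CompactSpace K] (m : ℕ) (hd : topDim K ≤ m)
    (α : Set (Set K)) (hα : MeanDimPaper.IsOpenCover α) :
    ∃ (V : Type u) (_ : Fintype V) (s : V → K → ℝ), (∀ v, Continuous (s v)) ∧
      (∀ v x, 0 ≤ s v x) ∧ (∀ x, ∃ v, 0 < s v x) ∧ (∀ v, ∃ U ∈ α, ∀ x, 0 < s v x → x ∈ U) ∧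
      ∀ x, (Finset.univ.filter fun v => 0 < s v x).card ≤ m + 1 := by
  classical
  have h1 : covD α ≤ m := le_trans (le_iSup₂ (f := fun (α : Set (Set K)) (_ : α ∈ {α : Set (Set K) | MeanDimPaper.IsOpenCover α}) => covD α) α hα) hd
  have h2 : covD α < ((m + 1 : ℕ) : ℕ∞) := lt_of_le_of_lt h1 (by exact_mod_cast Nat.lt_succ_self m)
  unfold covD at h2
  simp only [iInf_lt_iff] at h2
  obtain ⟨β, ⟨⟨hβo, hβc⟩, hβr⟩, hβ⟩ := h2
  obtain ⟨T, hT, hTf, hTc⟩ := (isCompact_univ (X := K)).elim_finite_subcover_image (b := β) (c := id)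
    (fun U hU => hβo U hU) (by
      intro x _
      have : x ∈ ⋃₀ β := by rw [hβc]; trivial
      obtain ⟨U, hU, hx⟩ := this
      simp only [Set.mem_iUnion]
      exact ⟨U, hU, hx⟩)
  have : Finite T := hTf
  have : Fintype T := Fintype.ofFinite T
  have key : ∀ U : T, ∃ s : K → ℝ, Continuous s ∧ (∀ x, 0 ≤ s x) ∧ ∀ x, 0 < s x ↔ x ∈ (U : Set K) := by
    intro U
    by_cases hU : (U : Set K)ᶜ = ∅
    · refine ⟨fun _ => 1, continuous_const, fun _ => zero_le_one, fun x => ?_⟩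
      have : (U : Set K) = Set.univ := by rwa [Set.compl_empty_iff] at hU
      simp [this]
    · refine ⟨fun x => Metric.infDist x (U : Set K)ᶜ, Metric.continuous_infDist_pt _, fun x => Metric.infDist_nonneg, fun x => ?_⟩
      have hcl : IsClosed (U : Set K)ᶜ := (hβo U (hT U.2)).isClosed_compl
      have := hcl.notMem_iff_infDist_pos (Set.nonempty_iff_ne_empty.2 hU) (x := x)
      rw [← this]
      simp
  choose s hs1 hs2 hs3 using key
  refine ⟨T, inferInstance, s, hs1, hs2, ?_, ?_, ?_⟩
  · intro x
    have := hTc (Set.mem_univ x)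
    simp only [Set.mem_iUnion] at this
    obtain ⟨U, hU, hx⟩ := this
    exact ⟨⟨U, hU⟩, (hs3 ⟨U, hU⟩ x).2 hx⟩
  · intro v
    obtain ⟨U, hU, hsub⟩ := hβr v (hT v.2)
    exact ⟨U, hU, fun x hx => hsub ((hs3 v x).1 hx)⟩
  · intro x
    by_contra hc
    push Not at hc
    obtain ⟨W, hW, hWc⟩ := Finset.exists_subset_card_eq (s := Finset.univ.filter fun v => 0 < s v x) (n := m + 2) (by omega)
    let g := W.equivFinOfCardEq hWc
    have : ((m + 1 : ℕ) : ℕ∞) ≤ ord β := by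
      unfold ord
      refine le_iSup₂ (f := fun (n : ℕ) (_ : n ∈ {n : ℕ | ∃ f : Fin (n + 1) → Set K,
        Function.Injective f ∧ (∀ i, f i ∈ β) ∧ (⋂ i, f i).Nonempty}) => (n : ℕ∞)) (m + 1) ?_
      refine ⟨fun i => ((g.symm i : T) : Set K), ?_, ?_, ?_⟩
      · intro a b hab
        exact g.symm.injective (Subtype.ext (Subtype.ext hab))
      · intro i
        exact hT (g.symm i : T).2
      · refine ⟨x, Set.mem_iInter.2 fun i => ?_⟩
        have := hW (g.symm i).2
        simp only [Finset.mem_filter, Finset.mem_univ, true_and] at this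
        exact (hs3 _ x).1 this
    exact absurd hβ (not_lt.2 this)

/-- no map missing labels refines the coarse partition -/
lemma main1 {K : Type*} [MetricSpace K] (m : ℕ) (hm : 1 ≤ m)
    (α : Set (Set K)) (hα : (m : ℕ∞) ≤ covD α) {V : Type*} [Fintype V] [DecidableEq V]
    (s : V → K → ℝ) (hs : ∀ v, Continuous (s v)) (hsub : ∀ v, ∃ U ∈ α, ∀ x, 0 < s v x → x ∈ U)
    (ℓ : K → Fin (m + 1) → ℝ) (hc : Continuous ℓ) (hpos : ∀ x, ∃ j, 0 < ℓ x j)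
    (hz : ∀ x, ∃ j, ℓ x j = 0) (hT : ∀ x j, 0 < ℓ x j → 0 < TT (fun v => s v x) j) : False := by
  let W : Fin (m + 1) → Finset V → Set K := fun j F => {x | 0 < tt (fun v => s v x) F ∧ 0 < ℓ x j}
  let β : Set (Set K) := {U | ∃ j : Fin (m + 1), ∃ F : Finset V, F.card = j + 1 ∧ U = W j F}
  have hβ : MeanDimPaper.IsOpenCover β := by
    constructor
    · rintro U ⟨j, F, -, rfl⟩
      exact (isOpen_lt continuous_const (tt_continuous hs F)).inter
        (isOpen_lt continuous_const ((continuous_apply j).comp hc))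
    · rw [Set.eq_univ_iff_forall]
      intro x
      obtain ⟨j, hj⟩ := hpos x
      obtain ⟨F, hF, hF'⟩ := (TT_pos_iff _ _).1 (hT x j hj)
      exact ⟨W j F, ⟨j, F, hF, rfl⟩, hF', hj⟩
  have hr : Refines β α := by
    rintro U ⟨j, F, hF, rfl⟩
    have : F.Nonempty := by rw [← Finset.card_pos]; omega
    obtain ⟨v, hv⟩ := this
    obtain ⟨U, hU, h⟩ := hsub v
    exact ⟨U, hU, fun x hx => h x (((tt_pos_iff _ _).1 hx.1).2 v hv)⟩
  have ho : ord β ≤ ((m - 1 : ℕ) : ℕ∞) := by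
    unfold ord
    refine iSup₂_le ?_
    rintro n ⟨f, hf, hfβ, x, hx⟩
    choose j F hF hfe using hfβ
    have hxm : ∀ i, x ∈ W (j i) (F i) := fun i => by rw [← hfe]; exact Set.mem_iInter.1 hx i
    obtain ⟨j0, hj0⟩ := hz x
    have hji : Function.Injective j := by
      intro a b hab
      apply hf
      have hFF : F a = F b := tt_eq (hxm a).1 (hxm b).1 (by rw [hF, hF, hab])
      rw [hfe, hfe, hab, hFF]
    have hns : ¬ Function.Surjective j := by
      intro hsur
      obtain ⟨i, hi⟩ := hsur j0
      have := (hxm i).2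
      rw [hi, hj0] at this
      exact lt_irrefl _ this
    have h1 : n + 1 ≤ m + 1 := by simpa using Fintype.card_le_of_injective j hji
    have h2 : n ≠ m := by
      rintro rfl
      exact hns (Finite.injective_iff_surjective.1 hji)
    exact_mod_cast (by omega : n ≤ m - 1)
  have h3 : covD α ≤ ord β := iInf₂_le β ⟨hβ, hr⟩
  have h4 : (m : ℕ∞) ≤ ((m - 1 : ℕ) : ℕ∞) := hα.trans (h3.trans ho)
  have : m ≤ m - 1 := by exact_mod_cast h4
  omega

end WD

namespace WD

/-- gluing over finitely many closed pieces -/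
lemma glue {K Y ι : Type*} [TopologicalSpace K] [TopologicalSpace Y] [Nonempty Y] [Finite ι] (E : ι → Set K)
    (hE : ∀ i, IsClosed (E i)) (g : ι → K → Y) (hg : ∀ i, ContinuousOn (g i) (E i))
    (hag : ∀ i j x, x ∈ E i → x ∈ E j → g i x = g j x) :
    ∃ f : K → Y, ContinuousOn f (⋃ i, E i) ∧ ∀ i, ∀ x ∈ E i, f x = g i x := by
  classical
  let f : K → Y := fun x => if h : ∃ i, x ∈ E i then g h.choose x else Classical.arbitrary Y
  have hf : ∀ i, ∀ x ∈ E i, f x = g i x := by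
    intro i x hx
    have h : ∃ i, x ∈ E i := ⟨i, hx⟩
    simp only [f, h, dif_pos]
    exact hag _ _ x h.choose_spec hx
  refine ⟨f, ?_, hf⟩
  apply (locallyFinite_of_finite E).continuousOn_iUnion hE
  intro i
  exact (hg i).congr (hf i)

lemma tietze {K : Type*} [TopologicalSpace K] [NormalSpace K] {C : Set K} (hC : IsClosed C) (f : K → ℝ)
    (hf : ContinuousOn f C) : ∃ g : K → ℝ, Continuous g ∧ ∀ x ∈ C, g x = f x := by
  obtain ⟨g, hg⟩ := ContinuousMap.exists_restrict_eq hC (⟨C.domRestrict f, hf.domRestrict⟩ : C(C, ℝ))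
  refine ⟨g, g.continuous, fun x hx => ?_⟩
  exact congrArg (fun h => h ⟨x, hx⟩) hg

/-- the extension lemma -/
lemma ext_lemma {K E : Type*} [TopologicalSpace K] [NormalSpace K] [NormedAddCommGroup E] [NormedSpace ℝ E]
    {C : Set K} (hC : IsClosed C) (g0 g1 : K → E) (h0 : Continuous g0)
    (hne : ∀ x ∈ C, ∀ s : ℝ, 0 ≤ s → s ≤ 1 → (1 - s) • g0 x + s • g1 x ≠ 0)
    (h : ∃ g : K → E, Continuous g ∧ (∀ x, g x ≠ 0) ∧ ∀ x ∈ C, g x = g1 x) :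
    ∃ g : K → E, Continuous g ∧ (∀ x, g x ≠ 0) ∧ ∀ x ∈ C, g x = g0 x := by
  obtain ⟨g, hg, hgne, hgC⟩ := h
  let B : Set K := Prod.fst '' {p : K × Set.Icc (0 : ℝ) 1 | (1 - (p.2 : ℝ)) • g0 p.1 + (p.2 : ℝ) • g p.1 = 0}
  have hB : IsClosed B := by
    apply isClosedMap_fst_of_compactSpace
    apply isClosed_eq _ continuous_const
    fun_prop
  have hd : Disjoint C B := by
    rw [Set.disjoint_left]
    rintro x hx ⟨⟨y, s⟩, hs, rfl⟩
    apply hne y hx s s.2.1 s.2.2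
    rw [← hgC y hx]
    exact hs
  obtain ⟨u, hu0, hu1, hu⟩ := exists_continuous_zero_one_of_isClosed hC hB hd
  refine ⟨fun x => (1 - u x) • g0 x + u x • g x, ?_, ?_, ?_⟩
  · fun_prop
  · intro x hx
    have hxB : x ∈ B := ⟨(x, ⟨u x, hu x⟩), hx, rfl⟩
    have : u x = 1 := hu1 hxB
    simp only [this, sub_self, zero_smul, one_smul, zero_add] at hx
    exact hgne x hx
  · intro x hx
    have : u x = 0 := hu0 hx
    simp [this]

/-- third differences -/
def G (M : ℕ) (t : Fin (M + 3) → ℝ) : Fin M → ℝ := fun i =>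
  t ⟨i + 3, by omega⟩ - 3 * t ⟨i + 2, by omega⟩ + 3 * t ⟨i + 1, by omega⟩ - t ⟨i, by omega⟩

lemma quad {M : ℕ} {t : Fin (M + 3) → ℝ} (h : G M t = 0) :
    ∃ a b c : ℝ, ∀ i : Fin (M + 3), t i = a + b * (i : ℕ) + c * (i : ℕ) ^ 2 := by
  set c := (t ⟨2, by omega⟩ - 2 * t ⟨1, by omega⟩ + t ⟨0, by omega⟩) / 2 with hc
  refine ⟨t ⟨0, by omega⟩, t ⟨1, by omega⟩ - t ⟨0, by omega⟩ - c, c, ?_⟩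
  rintro ⟨i, hi⟩
  induction i using Nat.strong_induction_on with
  | _ i ih =>
    match i, hi, ih with
    | 0, _, _ => simp
    | 1, _, _ => simp; ring
    | 2, _, _ => simp [hc]; ring
    | i + 3, hi, ih =>
      have h3 := congrFun h ⟨i, by omega⟩
      simp only [G, Pi.zero_apply] at h3
      have e0 := ih i (by omega) (by omega)
      have e1 := ih (i + 1) (by omega) (by omega)
      have e2 := ih (i + 2) (by omega) (by omega)
      simp only at e0 e1 e2 ⊢
      rw [e0, e1, e2] at h3
      push_cast at h3 ⊢
      linear_combination h3

/-- nonnegative nonzero quadratics -/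
structure IsQ {M : ℕ} (t : Fin (M + 3) → ℝ) : Prop where
  nn : ∀ i, 0 ≤ t i
  ne : ∃ i, t i ≠ 0
  gz : G M t = 0

lemma quad_three {M : ℕ} {t : Fin (M + 3) → ℝ} (h : IsQ t) {i j k : Fin (M + 3)} (hij : i ≠ j)
    (hik : i ≠ k) (hjk : j ≠ k) (hi : t i = 0) (hj : t j = 0) (hk : t k = 0) : False := by
  obtain ⟨a, b, c, hq⟩ := quad h.gz
  obtain ⟨l, hl⟩ := h.ne
  rw [hq] at hi hj hk
  have e1 : ((i : ℕ) : ℝ) - (j : ℕ) ≠ 0 := fun h => hij (Fin.ext (by exact_mod_cast sub_eq_zero.1 h))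
  have e2 : ((i : ℕ) : ℝ) - (k : ℕ) ≠ 0 := fun h => hik (Fin.ext (by exact_mod_cast sub_eq_zero.1 h))
  have e3 : ((j : ℕ) : ℝ) - (k : ℕ) ≠ 0 := fun h => hjk (Fin.ext (by exact_mod_cast sub_eq_zero.1 h))
  have f1 : b + c * ((i : ℕ) + (j : ℕ)) = 0 := by
    apply mul_left_cancel₀ e1; linear_combination hi - hj
  have f2 : b + c * ((i : ℕ) + (k : ℕ)) = 0 := by
    apply mul_left_cancel₀ e2; linear_combination hi - hk
  have f3 : c = 0 := by
    apply mul_left_cancel₀ e3; linear_combination f1 - f2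
  subst f3
  have f4 : b = 0 := by linarith
  subst f4
  apply hl
  rw [hq]
  linarith

lemma quad_two {M : ℕ} {t : Fin (M + 3) → ℝ} (h : IsQ t) {i j : Fin (M + 3)} (hij : i < j)
    (hi : t i = 0) (hj : t j = 0) : (j : ℕ) = i + 1 ∨ ((i : ℕ) = 0 ∧ (j : ℕ) = M + 2) := by
  by_contra hcon
  push Not at hcon
  obtain ⟨hc1, hc2⟩ := hcon
  obtain ⟨a, b, c, hq⟩ := quad h.gz
  have hij' : (i : ℕ) < j := hij
  have hi' := hi
  have hj' := hj
  rw [hq] at hi hj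
  have e1 : ((i : ℕ) : ℝ) - (j : ℕ) ≠ 0 := by
    have : ((i : ℕ) : ℝ) < (j : ℕ) := by exact_mod_cast hij'
    linarith
  have f1 : b + c * ((i : ℕ) + (j : ℕ)) = 0 := by
    apply mul_left_cancel₀ e1; linear_combination hi - hj
  have hf : ∀ k : Fin (M + 3), t k = c * (((k : ℕ) - (i : ℕ)) * ((k : ℕ) - (j : ℕ))) := by
    intro k
    rw [hq]
    linear_combination hi + ((k : ℕ) - (i : ℕ)) * f1
  have n1 := h.nn ⟨i + 1, by omega⟩
  have p1 : 0 < t ⟨i + 1, by omega⟩ := by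
    refine lt_of_le_of_ne n1 fun h0 => ?_
    refine quad_three h (i := i) (j := j) (k := ⟨i + 1, by omega⟩) ?_ ?_ ?_ hi' hj' h0.symm
    · exact ne_of_lt hij
    · intro hh; have := congrArg Fin.val hh; simp at this
    · intro hh; have := congrArg Fin.val hh; simp only at this; omega
  rw [hf] at p1
  push_cast at p1
  have hj2 : ((i : ℕ) : ℝ) + 1 < (j : ℕ) := by
    have : (i : ℕ) + 1 < j := by omega
    exact_mod_cast this
  have hcneg : c < 0 := by nlinarith
  by_cases hi0 : (i : ℕ) = 0
  · have hjM : (j : ℕ) < M + 2 := by have := hc2 hi0; omega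
    have n2 := h.nn ⟨M + 2, by omega⟩
    rw [hf] at n2
    have a1 : ((j : ℕ) : ℝ) < (M + 2 : ℕ) := by exact_mod_cast hjM
    have a2 : ((i : ℕ) : ℝ) < (M + 2 : ℕ) := by linarith
    simp only at n2
    nlinarith [mul_pos (sub_pos.2 a1) (sub_pos.2 a2)]
  · have n2 := h.nn ⟨0, by omega⟩
    rw [hf] at n2
    have a1 : (0 : ℝ) < (i : ℕ) := by exact_mod_cast Nat.pos_of_ne_zero hi0
    have a2 : (0 : ℝ) < (j : ℕ) := by linarith
    simp only [Nat.cast_zero] at n2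
    nlinarith [mul_pos a1 a2]

/-- edge coordinate -/
noncomputable def hh {M : ℕ} (t : Fin (M + 3) → ℝ) (j : Fin (M + 3)) : ℝ :=
  t (j - 1) / (t (j - 1) + t (j + 1))

lemma fin_one_ne {M : ℕ} : (1 : Fin (M + 3)) ≠ 0 := by
  intro h; have := congrArg Fin.val h; simp at this

lemma fin_two_ne {M : ℕ} : (1 + 1 : Fin (M + 3)) ≠ 0 := by
  intro h; have := congrArg Fin.val h
  rw [Fin.val_add, Fin.val_one, Nat.mod_eq_of_lt (by omega)] at this
  simp at this

lemma Q_den {M : ℕ} {t : Fin (M + 3) → ℝ} (h : IsQ t) {j : Fin (M + 3)} (hj : t j = 0) :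
    0 < t (j - 1) + t (j + 1) := by
  have h1 := h.nn (j - 1)
  have h2 := h.nn (j + 1)
  by_contra hc
  have e1 : t (j - 1) = 0 := by linarith
  have e2 : t (j + 1) = 0 := by linarith
  refine quad_three h (i := j - 1) (j := j) (k := j + 1) ?_ ?_ ?_ e1 hj e2
  · intro hh; exact fin_one_ne (sub_eq_self.1 hh)
  · intro hh
    apply fin_two_ne (M := M)
    have := congrArg (fun x => x - (j - 1)) hh
    simp only [sub_self] at this
    rw [this]; abel
  · intro hh; exact fin_one_ne (left_eq_add.1 hh)

lemma fin_succ_eq {M : ℕ} {i j : Fin (M + 3)} (h : (j : ℕ) = i + 1) : i + 1 = j := by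
  apply Fin.ext
  rw [Fin.val_add, Fin.val_one, Nat.mod_eq_of_lt (by omega), h]

lemma fin_last_eq {M : ℕ} {i j : Fin (M + 3)} (hi : (i : ℕ) = 0) (hj : (j : ℕ) = M + 2) : j + 1 = i := by
  have h1 : j = Fin.last (M + 2) := Fin.ext hj
  have h2 : i = 0 := Fin.ext hi
  rw [h1, h2]
  exact Fin.last_add_one (M + 2)

lemma hh_one {M : ℕ} {t : Fin (M + 3) → ℝ} (h : IsQ t) {j i : Fin (M + 3)} (hj : t j = 0) (hi : t i = 0)
    (hij : j + 1 = i) : hh t j = 1 := by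
  have h1 := Q_den h hj
  unfold hh
  rw [hij, hi, add_zero] at h1 ⊢
  exact div_self h1.ne'

lemma hh_zero {M : ℕ} {t : Fin (M + 3) → ℝ} {j i : Fin (M + 3)} (hi : t i = 0)
    (hij : i + 1 = j) : hh t j = 0 := by
  have : j - 1 = i := by rw [← hij]; abel
  unfold hh
  rw [this, hi, zero_div]

lemma hh_zero_one {M : ℕ} {t : Fin (M + 3) → ℝ} (h : IsQ t) {j i : Fin (M + 3)} (hj : t j = 0) (hi : t i = 0)
    (hij : i ≠ j) : hh t j = 0 ∨ hh t j = 1 := by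
  rcases lt_or_gt_of_ne hij with hl | hl
  · rcases quad_two h hl hi hj with h1 | ⟨h1, h2⟩
    · exact Or.inl (hh_zero hi (fin_succ_eq h1))
    · exact Or.inr (hh_one h hj hi (fin_last_eq h1 h2))
  · rcases quad_two h hl hj hi with h1 | ⟨h1, h2⟩
    · exact Or.inr (hh_one h hj hi (fin_succ_eq h1))
    · exact Or.inl (hh_zero hi (fin_last_eq h1 h2))

/-- partial alternating sums -/
def Sp {M : ℕ} (c : Fin (M + 3) → ℤ) (n : ℕ) : ℤ :=
  ∑ i ∈ Finset.univ.filter (fun i : Fin (M + 3) => (i : ℕ) < n), (-1) ^ (i : ℕ) * c i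

lemma Sp_succ {M : ℕ} (c : Fin (M + 3) → ℤ) (i : Fin (M + 3)) :
    Sp c (i + 1) = Sp c i + (-1) ^ (i : ℕ) * c i := by
  unfold Sp
  have : Finset.univ.filter (fun k : Fin (M + 3) => (k : ℕ) < i + 1) =
      insert i (Finset.univ.filter (fun k : Fin (M + 3) => (k : ℕ) < i)) := by
    ext k
    simp only [Finset.mem_filter, Finset.mem_univ, true_and, Finset.mem_insert, Fin.ext_iff]
    omega
  rw [this, Finset.sum_insert (by simp), add_comm]

/-- the angle function -/
lemma theta {K : Type*} [TopologicalSpace K] [NormalSpace K] {M : ℕ} (t : K → Fin (M + 3) → ℝ)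
    (ht : Continuous t) (hnn : ∀ x i, 0 ≤ t x i) (hne : ∀ x, ∃ i, t x i ≠ 0) (c : Fin (M + 3) → ℤ)
    (hc : ∑ i : Fin (M + 3), (-1) ^ (i : ℕ) * c i = 0) :
    ∃ θ : K → ℝ, Continuous θ ∧ ∀ x j, G M (t x) = 0 → t x j = 0 →
      θ x = Sp c j + (-1) ^ (j : ℕ) * c j * hh (t x) j := by
  have hti : ∀ i, Continuous fun x => t x i := fun i => (continuous_apply i).comp ht
  have hG : Continuous fun x => G M (t x) := by
    unfold G
    exact continuous_pi fun i => (((hti _).sub (continuous_const.mul (hti _))).add (continuous_const.mul (hti _))).sub (hti _)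
  let E : Fin (M + 3) → Set K := fun j => {x | G M (t x) = 0 ∧ t x j = 0}
  have hE : ∀ j, IsClosed (E j) := fun j =>
    (isClosed_eq hG continuous_const).inter (isClosed_eq (hti j) continuous_const)
  have hQ : ∀ x, G M (t x) = 0 → IsQ (t x) := fun x hx => ⟨hnn x, hne x, hx⟩
  have hlt : ∀ i j x, i < j → x ∈ E i → x ∈ E j →
      (Sp c i + (-1) ^ (i : ℕ) * c i * hh (t x) i : ℝ) = Sp c j + (-1) ^ (j : ℕ) * c j * hh (t x) j := by
    intro i j x hij hi hj
    rcases quad_two (hQ x hi.1) hij hi.2 hj.2 with h1 | ⟨h1, h2⟩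
    · rw [hh_one (hQ x hi.1) hi.2 hj.2 (fin_succ_eq h1), hh_zero hi.2 (fin_succ_eq h1), h1, Sp_succ]
      push_cast; ring
    · rw [hh_zero hj.2 (fin_last_eq h1 h2), hh_one (hQ x hi.1) hj.2 hi.2 (fin_last_eq h1 h2)]
      have e1 : Sp c i = 0 := by rw [h1]; simp [Sp]
      have e2 : Sp c (j + 1) = 0 := by
        rw [← hc, Sp]
        congr 1
        ext k
        simp only [Finset.mem_filter, Finset.mem_univ, true_and, iff_true]
        omega
      rw [Sp_succ] at e2
      have e3 : (Sp c j : ℝ) + (-1) ^ (j : ℕ) * c j = 0 := by exact_mod_cast e2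
      rw [e1]
      push_cast
      linarith
  obtain ⟨f, hf, hfe⟩ := glue E hE (fun j x => (Sp c j + (-1) ^ (j : ℕ) * c j * hh (t x) j : ℝ))
    (by
      intro j
      refine continuousOn_const.add (continuousOn_const.mul ?_)
      unfold hh
      refine ContinuousOn.div (hti _).continuousOn ((hti _).add (hti _)).continuousOn ?_
      intro x hx
      exact (Q_den (hQ x hx.1) hx.2).ne')
    (by
      intro i j x hi hj
      rcases lt_trichotomy i j with h | h | h
      · exact hlt i j x h hi hj
      · rw [h]
      · exact (hlt j i x h hj hi).symm)
  obtain ⟨g, hg, hgf⟩ := tietze (isClosed_iUnion_of_finite hE) f hf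
  refine ⟨g, hg, fun x j h1 h2 => ?_⟩
  rw [hgf x (Set.mem_iUnion.2 ⟨j, h1, h2⟩), hfe j x ⟨h1, h2⟩]

end WD

namespace WD

/-- the circle parametrization -/
noncomputable def cs (r : ℝ) : ℝ × ℝ := (Real.cos (2 * Real.pi * r), Real.sin (2 * Real.pi * r))

lemma cs_int_add (n : ℤ) (r : ℝ) : cs (n + r) = cs r := by
  unfold cs
  have : 2 * Real.pi * (n + r) = 2 * Real.pi * r + n * (2 * Real.pi) := by ring
  rw [this, Real.cos_add_int_mul_two_pi, Real.sin_add_int_mul_two_pi]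

lemma cs_int (n : ℤ) : cs n = (1, 0) := by
  have := cs_int_add n 0
  rw [add_zero] at this
  rw [this]; simp [cs]

lemma cs_cont : Continuous cs := by
  unfold cs; fun_prop

lemma cs_sq (r : ℝ) : (cs r).1 ^ 2 + (cs r).2 ^ 2 = 1 := by
  simp [cs]

lemma G_cont {K : Type*} [TopologicalSpace K] {M : ℕ} (t : K → Fin (M + 3) → ℝ)
    (hti : ∀ i, Continuous fun x => t x i) : Continuous fun x => G M (t x) := by
  unfold G
  exact continuous_pi fun i => (((hti _).sub (continuous_const.mul (hti _))).add (continuous_const.mul (hti _))).sub (hti _)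

lemma zmap {K : Type*} [TopologicalSpace K] [NormalSpace K] {M : ℕ} {V : Type*} [Fintype V] [DecidableEq V]
    (s : V → K → ℝ) (hs : ∀ v, Continuous (s v)) (t : K → Fin (M + 3) → ℝ)
    (ht : ∀ x j, t x j = TT (fun v => s v x) j) (hne : ∀ x, ∃ j, t x j ≠ 0)
    (c : (Fin (M + 3) → Finset V) → Fin (M + 3) → ℤ)
    (hdep : ∀ φ φ' j, (∀ i, i ≠ j → φ i = φ' i) → c φ j = c φ' j)
    (hcoc : ∀ x φ, (∀ j : Fin (M + 3), (φ j).card = (j : ℕ) + 1 ∧ 0 < tt (fun v => s v x) (φ j)) →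
      ∑ i : Fin (M + 3), (-1) ^ (i : ℕ) * c φ i = 0) :
    ∃ z : K → ℝ × ℝ, Continuous z ∧ ∀ x, G M (t x) = 0 → (z x).1 ^ 2 + (z x).2 ^ 2 = 1 ∧
      ∀ φ j, t x j = 0 → (∀ i, t x i ≠ 0 → (φ i).card = (i : ℕ) + 1 ∧ 0 < tt (fun v => s v x) (φ i)) →
        z x = cs ((-1) ^ (j : ℕ) * c φ j * hh (t x) j) := by
  classical
  have hti : ∀ i, Continuous fun x => t x i := fun i => by
    simp only [ht]; exact TT_continuous hs i
  have htc : Continuous t := continuous_pi hti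
  have hnn : ∀ x i, 0 ≤ t x i := fun x i => by rw [ht]; exact TT_nonneg _ _
  have hQ : ∀ x, G M (t x) = 0 → IsQ (t x) := fun x hx => ⟨hnn x, hne x, hx⟩
  have hG := G_cont t hti
  have hth : ∀ φ : {φ : Fin (M + 3) → Finset V // ∑ i : Fin (M + 3), (-1) ^ (i : ℕ) * c φ i = 0},
      ∃ θ : K → ℝ, Continuous θ ∧ ∀ x j, G M (t x) = 0 → t x j = 0 →
      θ x = Sp (c φ) j + (-1) ^ (j : ℕ) * c φ j * hh (t x) j :=
    fun φ => theta t htc hnn hne (c φ) φ.2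
  choose θ hθ hθv using hth
  let KK : (Fin (M + 3) → Finset V) → Set K := fun φ =>
    {x | G M (t x) = 0 ∧ ∀ i : Fin (M + 3), ∀ F : Finset V, F.card = (i : ℕ) + 1 → F ≠ φ i → tt (fun v => s v x) F = 0}
  have hKK : ∀ φ, IsClosed (KK φ) := by
    intro φ
    refine (isClosed_eq hG continuous_const).inter ?_
    have : {x | ∀ i : Fin (M + 3), ∀ F : Finset V, F.card = (i : ℕ) + 1 → F ≠ φ i → tt (fun v => s v x) F = 0} =
        ⋂ (i : Fin (M + 3)) (F : Finset V) (_ : F.card = (i : ℕ) + 1) (_ : F ≠ φ i),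
          {x | tt (fun v => s v x) F = 0} := by
      ext x; simp
    change IsClosed {x | ∀ i : Fin (M + 3), ∀ F : Finset V, F.card = (i : ℕ) + 1 → F ≠ φ i → tt (fun v => s v x) F = 0}
    rw [this]
    exact isClosed_iInter fun i => isClosed_iInter fun F => isClosed_iInter fun _ => isClosed_iInter fun _ =>
      isClosed_eq (tt_continuous hs F) continuous_const
  have hcomp : ∀ φ x, x ∈ KK φ → ∀ i, t x i ≠ 0 → (φ i).card = (i : ℕ) + 1 ∧ 0 < tt (fun v => s v x) (φ i) := by
    intro φ x hx i hi
    have h1 : 0 < t x i := lt_of_le_of_ne (hnn x i) (Ne.symm hi)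
    rw [ht, TT_pos_iff] at h1
    obtain ⟨F, hF, hFp⟩ := h1
    have : F = φ i := by
      by_contra hcon
      exact hFp.ne' (hx.2 i F hF hcon)
    rw [← this]; exact ⟨hF, hFp⟩
  have hcomp' : ∀ φ x, G M (t x) = 0 → (∀ i, t x i ≠ 0 → (φ i).card = (i : ℕ) + 1 ∧ 0 < tt (fun v => s v x) (φ i)) →
      x ∈ KK φ := by
    intro φ x hx h
    refine ⟨hx, fun i F hF hne => ?_⟩
    by_contra h0
    have hp : 0 < tt (fun v => s v x) F := lt_of_le_of_ne (tt_nonneg _ _) (Ne.symm h0)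
    have hi : t x i ≠ 0 := by
      rw [ht]; exact ((TT_pos_iff _ _).2 ⟨F, hF, hp⟩).ne'
    obtain ⟨h1, h2⟩ := h i hi
    exact hne (tt_eq hp h2 (by rw [hF, h1]))
  have huniq : ∀ φ φ' x i, x ∈ KK φ → x ∈ KK φ' → t x i ≠ 0 → φ i = φ' i := by
    intro φ φ' x i h h' hi
    have a := hcomp φ x h i hi
    have b := hcomp φ' x h' i hi
    exact tt_eq a.2 b.2 (by rw [a.1, b.1])
  let val : (Fin (M + 3) → Finset V) → Fin (M + 3) → K → ℝ × ℝ := fun φ j x =>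
    cs ((-1) ^ (j : ℕ) * c φ j * hh (t x) j)
  have hval1 : ∀ φ j i x, G M (t x) = 0 → t x j = 0 → t x i = 0 → i ≠ j → val φ j x = (1, 0) := by
    intro φ j i x hx hj hi hij
    rcases hh_zero_one (hQ x hx) hj hi hij with h | h
    · simp only [val, h, mul_zero]
      simpa using cs_int 0
    · simp only [val, h, mul_one]
      have := cs_int ((-1) ^ (j : ℕ) * c φ j)
      push_cast at this
      exact this
  have hval2 : ∀ φ φ' j j' x, x ∈ KK φ → x ∈ KK φ' → t x j = 0 → t x j' = 0 → val φ j x = val φ' j' x := by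
    intro φ φ' j j' x h h' hj hj'
    by_cases hjj : j = j'
    · subst hjj
      by_cases hex : ∃ i, i ≠ j ∧ t x i = 0
      · obtain ⟨i, hij, hi⟩ := hex
        rw [hval1 φ j i x h.1 hj hi hij, hval1 φ' j i x h.1 hj hi hij]
      · push Not at hex
        simp only [val]
        rw [hdep φ φ' j fun i hi => huniq φ φ' x i h h' (hex i hi)]
    · rw [hval1 φ j j' x h.1 hj hj' (Ne.symm hjj), hval1 φ' j' j x h.1 hj' hj hjj]
  let ι := {φ : Fin (M + 3) → Finset V // ∑ i : Fin (M + 3), (-1) ^ (i : ℕ) * c φ i = 0} ⊕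
    ((Fin (M + 3) → Finset V) × Fin (M + 3))
  let E : ι → Set K := Sum.elim (fun φ => KK φ) (fun p => KK p.1 ∩ {x | t x p.2 = 0})
  let g : ι → K → ℝ × ℝ := Sum.elim (fun φ x => cs (θ φ x)) (fun p x => val p.1 p.2 x)
  have hlr : ∀ φ : {φ : Fin (M + 3) → Finset V // ∑ i : Fin (M + 3), (-1) ^ (i : ℕ) * c φ i = 0},
      ∀ j x, G M (t x) = 0 → t x j = 0 → cs (θ φ x) = val φ j x := by
    intro φ j x hx hj
    rw [hθv φ x j hx hj, cs_int_add]
  obtain ⟨f, hf, hfe⟩ := glue E (by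
      rintro (φ | p)
      · exact hKK φ
      · exact (hKK p.1).inter (isClosed_eq (hti p.2) continuous_const)) g (by
      rintro (φ | p)
      · exact (cs_cont.comp (hθ φ)).continuousOn
      · refine cs_cont.comp_continuousOn (continuousOn_const.mul ?_)
        unfold hh
        refine ContinuousOn.div (hti _).continuousOn ((hti _).add (hti _)).continuousOn ?_
        intro x hx
        exact (Q_den (hQ x hx.1.1) hx.2).ne') (by
      rintro (φ | p) (φ' | p') x h h'
      · by_cases hex : ∃ j, t x j = 0
        · obtain ⟨j, hj⟩ := hex
          have e1 := hlr φ j x h.1 hj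
          have e2 := hlr φ' j x h.1 hj
          have e3 := hval2 φ φ' j j x h h' hj hj
          simp only [g, Sum.elim_inl]
          rw [e1, e2, e3]
        · push Not at hex
          have : φ = φ' := Subtype.ext (funext fun i => huniq φ φ' x i h h' (hex i))
          rw [this]
      · simp only [g, Sum.elim_inl, Sum.elim_inr]
        rw [hlr φ p'.2 x h.1 h'.2]
        exact hval2 _ _ _ _ x h h'.1 h'.2 h'.2
      · simp only [g, Sum.elim_inl, Sum.elim_inr]
        rw [hlr φ' p.2 x h'.1 h.2]
        exact hval2 _ _ _ _ x h.1 h' h.2 h.2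
      · simp only [g, Sum.elim_inr]
        exact hval2 _ _ _ _ x h.1 h'.1 h.2 h'.2)
  have hEcl : IsClosed (⋃ i, E i) := isClosed_iUnion_of_finite (by
      rintro (φ | p)
      · exact hKK φ
      · exact (hKK p.1).inter (isClosed_eq (hti p.2) continuous_const))
  have hcov : ∀ x, G M (t x) = 0 → ∃ i, x ∈ E i := by
    intro x hx
    let φ : Fin (M + 3) → Finset V := fun i =>
      if h : ∃ F : Finset V, F.card = (i : ℕ) + 1 ∧ 0 < tt (fun v => s v x) F then h.choose else ∅
    have hφ : ∀ i, t x i ≠ 0 → (φ i).card = (i : ℕ) + 1 ∧ 0 < tt (fun v => s v x) (φ i) := by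
      intro i hi
      have h1 : 0 < t x i := lt_of_le_of_ne (hnn x i) (Ne.symm hi)
      rw [ht, TT_pos_iff] at h1
      simp only [φ, h1, dif_pos]
      exact h1.choose_spec
    have hxK := hcomp' φ x hx hφ
    by_cases hex : ∃ j, t x j = 0
    · obtain ⟨j, hj⟩ := hex
      exact ⟨Sum.inr (φ, j), hxK, hj⟩
    · push Not at hex
      exact ⟨Sum.inl ⟨φ, hcoc x φ fun j => hφ j (hex j)⟩, hxK⟩
  obtain ⟨z1, hz1, hz1e⟩ := tietze hEcl (fun x => (f x).1) (continuous_fst.comp_continuousOn hf)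
  obtain ⟨z2, hz2, hz2e⟩ := tietze hEcl (fun x => (f x).2) (continuous_snd.comp_continuousOn hf)
  have hz : ∀ i, ∀ x ∈ E i, (z1 x, z2 x) = g i x := by
    intro i x hx
    rw [hz1e x (Set.mem_iUnion.2 ⟨i, hx⟩), hz2e x (Set.mem_iUnion.2 ⟨i, hx⟩), ← hfe i x hx]
  refine ⟨fun x => (z1 x, z2 x), hz1.prodMk hz2, fun x hx => ⟨?_, ?_⟩⟩
  · obtain ⟨i, hi⟩ := hcov x hx
    have e := hz i x hi
    change (z1 x, z2 x).1 ^ 2 + (z1 x, z2 x).2 ^ 2 = 1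
    rw [e]
    rcases i with φ | p
    · exact cs_sq _
    · exact cs_sq _
  · intro φ j hj hφ
    exact hz (Sum.inr (φ, j)) x ⟨hcomp' φ x hx hφ, hj⟩

end WD

namespace WD

/-- forget the last coordinate -/
def hat {M : ℕ} (l : Fin (M + 3) → ℝ) : Fin (M + 3) → ℝ := fun i => if i = Fin.last (M + 2) then 0 else l i

/-- target space -/
abbrev EE (M : ℕ) := (Fin M → ℝ) × (ℝ × ℝ)

/-- second to last index -/
def pen (M : ℕ) : Fin (M + 3) := ⟨M + 1, by omega⟩

/-- the real part of the label map -/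
def wre {M : ℕ} (l : Fin (M + 3) → ℝ) : ℝ := l (Fin.last (M + 2)) - ∑ i : Fin (M + 3), hat l i

lemma hat_add {M : ℕ} (a b : Fin (M + 3) → ℝ) : hat (a + b) = hat a + hat b := by
  ext i; simp only [hat, Pi.add_apply]; split_ifs <;> simp

lemma hat_smul {M : ℕ} (r : ℝ) (a : Fin (M + 3) → ℝ) : hat (r • a) = r • hat a := by
  ext i; simp only [hat, Pi.smul_apply, smul_eq_mul]; split_ifs <;> simp

lemma G_add {M : ℕ} (a b : Fin (M + 3) → ℝ) : G M (a + b) = G M a + G M b := by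
  ext i; simp only [G, Pi.add_apply]; ring

lemma G_smul {M : ℕ} (r : ℝ) (a : Fin (M + 3) → ℝ) : G M (r • a) = r • G M a := by
  ext i; simp only [G, Pi.smul_apply, smul_eq_mul]; ring

lemma wre_add {M : ℕ} (a b : Fin (M + 3) → ℝ) : wre (a + b) = wre a + wre b := by
  simp only [wre, hat_add, Pi.add_apply, Finset.sum_add_distrib]; ring

lemma wre_smul {M : ℕ} (r : ℝ) (a : Fin (M + 3) → ℝ) : wre (r • a) = r * wre a := by
  simp only [wre, hat_smul, Pi.smul_apply, smul_eq_mul, ← Finset.mul_sum]; ring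

/-- the linear label map -/
def PP (M : ℕ) : (Fin (M + 3) → ℝ) →ₗ[ℝ] EE M where
  toFun l := (G M (hat l), (wre l, (-1) ^ M * (l 0 - l (pen M))))
  map_add' a b := by
    refine Prod.ext ?_ (Prod.ext ?_ ?_)
    · exact (by rw [hat_add, G_add] : G M (hat (a + b)) = G M (hat a) + G M (hat b))
    · exact wre_add a b
    · simp only [Prod.snd_add, Pi.add_apply]; ring
  map_smul' r a := by
    refine Prod.ext ?_ (Prod.ext ?_ ?_)
    · exact (by rw [hat_smul, G_smul] : G M (hat (r • a)) = r • G M (hat a))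
    · exact wre_smul r a
    · simp only [Prod.smul_snd, Pi.smul_apply, smul_eq_mul, RingHom.id_apply]; ring

lemma PP_apply {M : ℕ} (l : Fin (M + 3) → ℝ) :
    PP M l = (G M (hat l), (wre l, (-1) ^ M * (l 0 - l (pen M)))) := rfl

/-- the quadratic spanning the kernel -/
def kq (M : ℕ) (i : Fin (M + 3)) : ℝ := ((M : ℝ) + 2 - (i : ℕ)) * ((i : ℕ) + 1)

lemma kq_pos {M : ℕ} {i : Fin (M + 3)} (h : i ≠ Fin.last (M + 2)) : 0 < kq M i := by
  have h1 : (i : ℕ) < M + 2 := by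
    have : (i : ℕ) ≠ M + 2 := fun hh => h (Fin.ext hh)
    omega
  have h2 : ((i : ℕ) : ℝ) < M + 2 := by exact_mod_cast h1
  unfold kq
  apply mul_pos
  · linarith
  · positivity

lemma kq_last {M : ℕ} : kq M (Fin.last (M + 2)) = 0 := by
  unfold kq
  simp

/-- kernel vector -/
def kk (M : ℕ) (i : Fin (M + 3)) : ℝ := if i = Fin.last (M + 2) then ∑ j, kq M j else kq M i

lemma zero_ne_last {M : ℕ} : (0 : Fin (M + 3)) ≠ Fin.last (M + 2) := by
  intro h; have := congrArg Fin.val h; simp at this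

lemma pen_ne_last {M : ℕ} : pen M ≠ Fin.last (M + 2) := by
  intro h; have := congrArg Fin.val h; simp [pen] at this

lemma kq_nonneg {M : ℕ} (i : Fin (M + 3)) : 0 ≤ kq M i := by
  by_cases h : i = Fin.last (M + 2)
  · rw [h, kq_last]
  · exact (kq_pos h).le

lemma kk_pos {M : ℕ} (i : Fin (M + 3)) : 0 < kk M i := by
  unfold kk
  split_ifs with h
  · exact Finset.sum_pos' (fun j _ => kq_nonneg j) ⟨0, Finset.mem_univ _, kq_pos zero_ne_last⟩
  · exact kq_pos h

lemma hat_kk {M : ℕ} : hat (kk M) = kq M := by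
  ext i
  unfold hat kk
  split_ifs with h
  · rw [h, kq_last]
  · rfl

lemma PP_kk {M : ℕ} : PP M (kk M) = 0 := by
  rw [PP_apply, hat_kk]
  refine Prod.ext ?_ (Prod.ext ?_ ?_)
  · ext i
    simp only [G, kq]
    push_cast
    simp only [Prod.fst_zero, Pi.zero_apply]
    ring
  · simp only [wre, hat_kk]
    simp [kk]
  · have h1 : kk M 0 = kq M 0 := by simp [kk]
    have h2 : kk M (pen M) = kq M (pen M) := by simp [kk, pen_ne_last]
    simp only [h1, h2]
    simp [kq, pen]
    ring

lemma ker_hat {M : ℕ} {l : Fin (M + 3) → ℝ} (hG : G M (hat l) = 0) (h0 : l 0 = l (pen M)) :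
    ∃ a : ℝ, ∀ i, i ≠ Fin.last (M + 2) → l i = a * kq M i := by
  obtain ⟨a, b, c, hq⟩ := quad hG
  have e1 := hq (Fin.last (M + 2))
  have e2 := hq 0
  have e3 := hq (pen M)
  simp only [hat, if_true, zero_ne_last, if_false, pen_ne_last] at e1 e2 e3
  simp only [Fin.val_last, Fin.val_zero, pen] at e1 e2 e3
  push_cast at e1 e2 e3
  have e4 : b + c * (M + 1) = 0 := by
    have : (M : ℝ) + 1 ≠ 0 := by positivity
    apply mul_left_cancel₀ this
    have h0' : l 0 = l ⟨M + 1, by omega⟩ := h0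
    linear_combination e2 - e3 - h0'
  refine ⟨-c, fun i hi => ?_⟩
  have e5 := hq i
  simp only [hat, hi, if_false] at e5
  rw [e5, kq]
  linear_combination -e1 + ((i : ℕ) - ((M : ℝ) + 2)) * e4

lemma PP_ker {M : ℕ} {l : Fin (M + 3) → ℝ} (h : PP M l = 0) : ∃ a : ℝ, l = a • kk M := by
  rw [PP_apply] at h
  have h1 : G M (hat l) = 0 := congrArg Prod.fst h
  have h2 : wre l = 0 := congrArg (fun p => p.2.1) h
  have h3 : (-1) ^ M * (l 0 - l (pen M)) = 0 := congrArg (fun p => p.2.2) h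
  have h4 : l 0 = l (pen M) := by
    rcases mul_eq_zero.1 h3 with h | h
    · exact absurd h (pow_ne_zero _ (by norm_num))
    · linarith
  obtain ⟨a, ha⟩ := ker_hat h1 h4
  refine ⟨a, funext fun i => ?_⟩
  by_cases hi : i = Fin.last (M + 2)
  · subst hi
    have : hat l = fun i => a * kq M i := by
      ext i
      by_cases hi : i = Fin.last (M + 2)
      · simp [hat, hi, kq_last]
      · simp [hat, hi, ha i hi]
    unfold wre at h2
    rw [this, ← Finset.mul_sum] at h2
    simp only [kk, Pi.smul_apply, if_true, smul_eq_mul]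
    linarith
  · simp only [kk, Pi.smul_apply, hi, if_false, smul_eq_mul]
    exact ha i hi

lemma PP_surj {M : ℕ} : Function.Surjective (PP M) := by
  rw [← LinearMap.range_eq_top]
  apply Submodule.eq_top_of_finrank_eq
  have h1 := LinearMap.finrank_range_add_finrank_ker (PP M)
  have h2 : LinearMap.ker (PP M) = Submodule.span ℝ {kk M} := by
    ext l
    rw [LinearMap.mem_ker, Submodule.mem_span_singleton]
    constructor
    · intro h
      obtain ⟨a, ha⟩ := PP_ker h
      exact ⟨a, ha.symm⟩
    · rintro ⟨a, rfl⟩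
      rw [map_smul, PP_kk, smul_zero]
  have hk : kk M ≠ 0 := fun h => (kk_pos (M := M) 0).ne' (congrFun h 0)
  rw [h2, finrank_span_singleton hk] at h1
  simp only [Module.finrank_prod, Module.finrank_fintype_fun_eq_card, Fintype.card_fin, Module.finrank_self] at h1 ⊢
  omega

/-- the retraction onto nonnegative label vectors with a zero coordinate -/
lemma retr (M : ℕ) : ∃ ρ : EE M → Fin (M + 3) → ℝ, Continuous ρ ∧ (∀ e j, 0 ≤ ρ e j) ∧
    (∀ e, ∃ j, ρ e j = 0) ∧ (∀ e, e ≠ 0 → ∃ j, 0 < ρ e j) ∧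
    ∀ l : Fin (M + 3) → ℝ, (∀ j, 0 ≤ l j) → ∀ j, ρ (PP M l) j ≤ l j := by
  obtain ⟨S, hS⟩ := LinearMap.exists_rightInverse_of_surjective (PP M) (LinearMap.range_eq_top.2 PP_surj)
  have hS' : ∀ e, PP M (S e) = e := fun e => congrArg (fun f => f e) hS
  have hSc : Continuous S := S.continuous_of_finiteDimensional
  have hne : (Finset.univ : Finset (Fin (M + 3))).Nonempty := ⟨0, Finset.mem_univ _⟩
  let μ : (Fin (M + 3) → ℝ) → ℝ := fun l => Finset.univ.inf' hne fun i => l i / kk M i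
  have hμc : Continuous μ := by
    apply Continuous.finset_inf'_apply
    intro i _
    exact (continuous_apply i).div_const _
  have hμle : ∀ l i, μ l ≤ l i / kk M i := fun l i => Finset.inf'_le _ (Finset.mem_univ i)
  have hμeq : ∀ l, ∃ i, μ l = l i / kk M i := fun l => by
    obtain ⟨i, -, hi⟩ := Finset.exists_mem_eq_inf' hne fun i => l i / kk M i
    exact ⟨i, hi⟩
  have hμadd : ∀ l a, μ (l + a • kk M) = μ l + a := by
    intro l a
    have hterm : ∀ i, (l + a • kk M) i / kk M i = l i / kk M i + a := by
      intro i
      have := (kk_pos (M := M) i).ne'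
      simp only [Pi.add_apply, Pi.smul_apply, smul_eq_mul]
      field_simp
    apply le_antisymm
    · obtain ⟨i, hi⟩ := hμeq l
      rw [hi, ← hterm]; exact hμle _ i
    · obtain ⟨i, hi⟩ := hμeq (l + a • kk M)
      rw [hi, hterm]; linarith [hμle l i]
  refine ⟨fun e j => S e j - kk M j * μ (S e), ?_, ?_, ?_, ?_, ?_⟩
  · refine continuous_pi fun j => ?_
    exact ((continuous_apply j).comp hSc).sub (continuous_const.mul (hμc.comp hSc))
  · intro e j
    have := hμle (S e) j
    rw [le_div_iff₀ (kk_pos j)] at this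
    linarith
  · intro e
    obtain ⟨i, hi⟩ := hμeq (S e)
    refine ⟨i, ?_⟩
    have := (kk_pos (M := M) i).ne'
    simp only
    rw [hi]
    field_simp
    ring
  · intro e he
    by_contra hcon
    push Not at hcon
    apply he
    have : S e = μ (S e) • kk M := by
      ext j
      have h1 := hcon j
      have h2 := hμle (S e) j
      rw [le_div_iff₀ (kk_pos j)] at h2
      simp only [Pi.smul_apply, smul_eq_mul]
      linarith
    rw [← hS' e, this, map_smul, PP_kk, smul_zero]
  · intro l hl j
    have h1 : PP M (S (PP M l) - l) = 0 := by rw [map_sub, hS', sub_self]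
    obtain ⟨a, ha⟩ := PP_ker h1
    have h2 : S (PP M l) = l + a • kk M := by rw [← ha]; abel
    simp only [h2, hμadd]
    have h3 : 0 ≤ μ l := by
      obtain ⟨i, hi⟩ := hμeq l
      rw [hi]; exact div_nonneg (hl i) (kk_pos i).le
    simp only [Pi.add_apply, Pi.smul_apply, smul_eq_mul]
    nlinarith [mul_nonneg (kk_pos j).le h3]

end WD

namespace WD

lemma cs_neg (r : ℝ) : cs (-r) = ((cs r).1, -(cs r).2) := by
  unfold cs
  simp

lemma sp_sign {a b : ℝ} (ha : 0 < a) (hb : 0 < b) {s : ℝ} (hs0 : 0 ≤ s) (hs1 : s ≤ 1)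
    (h : (1 - s) * (a - b) + s * (cs (b / (b + a))).2 = 0) : a = b := by
  have hab : 0 < b + a := by linarith
  have hpi := Real.pi_pos
  simp only [cs] at h
  rcases lt_trichotomy a b with hlt | heq | hgt
  · exfalso
    have h1 : 1 / 2 < b / (b + a) := by rw [div_lt_div_iff₀ (by norm_num) hab]; linarith
    have h2 : b / (b + a) < 1 := by rw [div_lt_one hab]; linarith
    have hsin : Real.sin (2 * Real.pi * (b / (b + a))) < 0 := by
      have := Real.sin_pos_of_pos_of_lt_pi (x := 2 * Real.pi * (b / (b + a)) - Real.pi) (by nlinarith) (by nlinarith)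
      rw [Real.sin_sub_pi] at this
      linarith
    rcases hs0.eq_or_lt with h0 | h0
    · subst h0; linarith
    · nlinarith [mul_nonneg (sub_nonneg.2 hs1) (sub_nonneg.2 hlt.le), mul_pos h0 (neg_pos.2 hsin)]
  · exact heq
  · exfalso
    have h1 : b / (b + a) < 1 / 2 := by rw [div_lt_div_iff₀ hab (by norm_num)]; linarith
    have h2 : 0 < b / (b + a) := div_pos hb hab
    have hsin : 0 < Real.sin (2 * Real.pi * (b / (b + a))) :=
      Real.sin_pos_of_pos_of_lt_pi (by positivity) (by nlinarith)
    rcases hs0.eq_or_lt with h0 | h0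
    · subst h0; linarith
    · nlinarith [mul_nonneg (sub_nonneg.2 hs1) (sub_nonneg.2 hgt.le), mul_pos h0 hsin]

lemma cs_half : (cs (1 / 2)).1 = -1 := by
  simp only [cs]
  rw [show 2 * Real.pi * (1 / 2) = Real.pi by ring, Real.cos_pi]

lemma sp_lemma {a b : ℝ} (ha : 0 < a) (hb : 0 < b) {s : ℝ} (hs0 : 0 ≤ s) (hs1 : s ≤ 1) (M : ℕ)
    (h : (1 - s) * ((-1) ^ M * (a - b)) + s * (cs ((-1) ^ M * (b / (b + a)))).2 = 0) :
    a = b ∧ (cs ((-1) ^ M * (b / (b + a)))).1 = -1 := by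
  have hab : a = b := by
    rcases neg_one_pow_eq_or ℝ M with h1 | h1
    · rw [h1, one_mul, one_mul] at h
      exact sp_sign ha hb hs0 hs1 h
    · rw [h1, neg_one_mul, neg_one_mul, cs_neg] at h
      apply sp_sign ha hb hs0 hs1
      simp only at h
      linarith
  refine ⟨hab, ?_⟩
  subst hab
  have : a / (a + a) = 1 / 2 := by field_simp; norm_num
  rw [this]
  rcases neg_one_pow_eq_or ℝ M with h1 | h1
  · rw [h1, one_mul, cs_half]
  · rw [h1, neg_one_mul, cs_neg, cs_half]

lemma hopf_ext {K : Type*} [TopologicalSpace K] [NormalSpace K] [CompactSpace K] {M : ℕ} {C : Set K} (hC : IsClosed C)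
    (ℓ t : K → Fin (M + 3) → ℝ) (z : K → ℝ × ℝ) (hℓ : Continuous ℓ) (ht : Continuous t) (hz : Continuous z)
    (h1 : ∀ x, G M (t x) = 0 → (z x).1 ^ 2 + (z x).2 ^ 2 = 1)
    (hnn : ∀ x i, 0 ≤ ℓ x i)
    (h2 : ∀ x ∈ C, PP M (ℓ x) ≠ 0)
    (hns : ∀ x ∈ C, (∃ i, i ≠ Fin.last (M + 2) ∧ ℓ x i = 0) → G M (t x) = 0 → z x = (1, 0))
    (hsp : ∀ x ∈ C, (∀ i, i ≠ Fin.last (M + 2) → ℓ x i ≠ 0) → t x = ℓ x ∧ ℓ x (Fin.last (M + 2)) = 0 ∧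
      (G M (t x) = 0 → z x = cs ((-1) ^ M * hh (t x) (Fin.last (M + 2))))) :
    ∃ g : K → EE M, Continuous g ∧ (∀ x, g x ≠ 0) ∧ ∀ x ∈ C, g x = PP M (ℓ x) := by
  have hΛ : Continuous fun x => PP M (ℓ x) := (PP M).continuous_of_finiteDimensional.comp hℓ
  have hti : ∀ i, Continuous fun x => t x i := fun i => (continuous_apply i).comp ht
  have hℓi : ∀ i, Continuous fun x => ℓ x i := fun i => (continuous_apply i).comp hℓ
  have hGc := G_cont t hti
  let φ : K → EE M := fun x => (G M (t x), z x)
  have hφ : Continuous φ := hGc.prodMk hz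
  have hφne : ∀ x, φ x ≠ 0 := by
    intro x hx
    have e1 : G M (t x) = 0 := congrArg Prod.fst hx
    have e2 : z x = 0 := congrArg Prod.snd hx
    have := h1 x e1
    rw [e2] at this
    simp at this
  let η : K → ℝ := fun x => ‖(PP M (ℓ x)).1‖ + |(PP M (ℓ x)).2.2| + (|(PP M (ℓ x)).2.1| + (PP M (ℓ x)).2.1)
  have hη : Continuous η := by
    have a1 := continuous_fst.comp hΛ
    have a2 := continuous_fst.comp (continuous_snd.comp hΛ)
    have a3 := continuous_snd.comp (continuous_snd.comp hΛ)
    exact (a1.norm.add a3.abs).add (a2.abs.add a2)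
  have hη0 : ∀ x, 0 ≤ η x := fun x => by
    have a1 := norm_nonneg (PP M (ℓ x)).1
    have a2 := abs_nonneg (PP M (ℓ x)).2.2
    have a3 := neg_abs_le (PP M (ℓ x)).2.1
    simp only [η]; linarith
  have hηz : ∀ x, η x = 0 → (PP M (ℓ x)).1 = 0 ∧ (PP M (ℓ x)).2.2 = 0 ∧ (PP M (ℓ x)).2.1 ≤ 0 := fun x hx => by
    have a1 := norm_nonneg (PP M (ℓ x)).1
    have a2 := abs_nonneg (PP M (ℓ x)).2.2
    have a3 := neg_abs_le (PP M (ℓ x)).2.1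
    simp only [η] at hx
    refine ⟨norm_eq_zero.1 (by linarith), abs_eq_zero.1 (by linarith), ?_⟩
    by_contra hc
    push Not at hc
    rw [abs_of_pos hc] at hx
    linarith
  have hηz' : ∀ x, (PP M (ℓ x)).1 = 0 → (PP M (ℓ x)).2.2 = 0 → (PP M (ℓ x)).2.1 ≤ 0 → η x = 0 := fun x e1 e2 e3 => by
    simp only [η, e1, e2, abs_of_nonpos e3]; simp
  let NS : Set K := C ∩ ⋃ i : {i : Fin (M + 3) // i ≠ Fin.last (M + 2)}, {x | ℓ x i = 0}
  have hNS : IsCompact NS := by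
    apply IsClosed.isCompact
    exact hC.inter (isClosed_iUnion_of_finite fun i => isClosed_eq (hℓi i) continuous_const)
  have hNSi : ∀ x ∈ NS, ∃ i, i ≠ Fin.last (M + 2) ∧ ℓ x i = 0 := by
    rintro x ⟨-, hx⟩
    obtain ⟨i, hi⟩ := Set.mem_iUnion.1 hx
    exact ⟨i, i.2, hi⟩
  have hsgn : ∀ a : ℝ, (-1) ^ M * a = 0 → a = 0 := fun a h => by
    rcases mul_eq_zero.1 h with h | h
    · exact absurd h (pow_ne_zero _ (by norm_num))
    · exact h
  have hNSpos : ∀ x ∈ NS, 0 < η x := by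
    intro x hx
    refine lt_of_le_of_ne (hη0 x) fun h0 => ?_
    obtain ⟨e1, e2, e3⟩ := hηz x h0.symm
    obtain ⟨i, hi, hi0⟩ := hNSi x hx
    apply h2 x hx.1
    rw [PP_apply] at e1 e2 e3
    simp only at e1 e2 e3
    obtain ⟨a, ha⟩ := ker_hat e1 (sub_eq_zero.1 (hsgn _ e2))
    have ha0 : a = 0 := by
      have := ha i hi
      rw [hi0] at this
      rcases mul_eq_zero.1 this.symm with h | h
      · exact h
      · exact absurd h (kq_pos hi).ne'
    have hhat : hat (ℓ x) = 0 := by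
      ext j
      by_cases hj : j = Fin.last (M + 2)
      · simp [hat, hj]
      · simp [hat, hj, ha j hj, ha0]
    have e4 : wre (ℓ x) = 0 := by
      have := hnn x (Fin.last (M + 2))
      unfold wre at e3 ⊢
      rw [hhat] at e3 ⊢
      simp only [Pi.zero_apply, Finset.sum_const_zero, sub_zero] at e3 ⊢
      linarith
    rw [PP_apply, e1, e2, e4]
    rfl
  obtain ⟨η0, hη0p, hη0le⟩ := hNS.exists_forall_le' hη.continuousOn hNSpos
  obtain ⟨B1, hB1⟩ := (isCompact_univ (X := K)).exists_bound_of_continuousOn (f := fun x => (PP M (ℓ x)).2.1)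
    (continuous_fst.comp (continuous_snd.comp hΛ)).continuousOn
  obtain ⟨B2, hB2⟩ := (isCompact_univ (X := K)).exists_bound_of_continuousOn (f := fun x => (z x).1)
    (continuous_fst.comp hz).continuousOn
  let B : ℝ := max 0 (max B1 B2)
  let N : ℝ := (B + 1) / η0
  have hN : 0 < N := div_pos (by have := le_max_left 0 (max B1 B2); simp only [B]; linarith) hη0p
  have hNη : ∀ x ∈ NS, B < N * η x := by
    intro x hx
    have := hη0le x hx
    have h3 : N * η0 = B + 1 := by simp only [N]; field_simp
    nlinarith [mul_le_mul_of_nonneg_left this hN.le]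
  have hb1 : ∀ x, -B ≤ (PP M (ℓ x)).2.1 := fun x => by
    have a1 := hB1 x (Set.mem_univ x)
    rw [Real.norm_eq_abs] at a1
    have a2 := neg_abs_le (PP M (ℓ x)).2.1
    have a3 := (le_max_left B1 B2).trans (le_max_right 0 (max B1 B2))
    simp only [B]; linarith
  have hb2 : ∀ x, -B ≤ (z x).1 := fun x => by
    have a1 := hB2 x (Set.mem_univ x)
    rw [Real.norm_eq_abs] at a1
    have a2 := neg_abs_le (z x).1
    have a3 := (le_max_right B1 B2).trans (le_max_right 0 (max B1 B2))
    simp only [B]; linarith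
  let e : K → EE M := fun x => (0, (N * η x, 0))
  have he : Continuous e := continuous_const.prodMk ((continuous_const.mul hη).prodMk continuous_const)
  -- information at special points
  have hspec : ∀ x ∈ C, x ∉ NS → t x = ℓ x ∧ (PP M (ℓ x)).1 = G M (t x) ∧ (PP M (ℓ x)).2.1 < 0 ∧
      0 < t x 0 ∧ 0 < t x (pen M) ∧ (PP M (ℓ x)).2.2 = (-1) ^ M * (t x 0 - t x (pen M)) ∧
      (G M (t x) = 0 → z x = cs ((-1) ^ M * (t x (pen M) / (t x (pen M) + t x 0)))) := by
    intro x hx hxN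
    have hne : ∀ i, i ≠ Fin.last (M + 2) → ℓ x i ≠ 0 := by
      intro i hi h0
      exact hxN ⟨hx, Set.mem_iUnion.2 ⟨⟨i, hi⟩, h0⟩⟩
    have hpos : ∀ i, i ≠ Fin.last (M + 2) → 0 < ℓ x i := fun i hi => lt_of_le_of_ne (hnn x i) (Ne.symm (hne i hi))
    obtain ⟨a1, a2, a3⟩ := hsp x hx hne
    have hhat : hat (ℓ x) = ℓ x := by
      ext i
      by_cases hi : i = Fin.last (M + 2)
      · simp [hat, hi, a2]
      · simp [hat, hi]
    have hsum : 0 < ∑ i, ℓ x i := Finset.sum_pos' (fun j _ => hnn x j) ⟨0, Finset.mem_univ _, hpos 0 zero_ne_last⟩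
    refine ⟨a1, ?_, ?_, ?_, ?_, ?_, ?_⟩
    · rw [PP_apply, hhat, a1]
    · rw [PP_apply]
      simp only [wre, hhat, a2]
      linarith
    · rw [a1]; exact hpos 0 zero_ne_last
    · rw [a1]; exact hpos _ pen_ne_last
    · rw [PP_apply, a1]
    · intro hg
      rw [a3 hg]
      have b1 : (Fin.last (M + 2) : Fin (M + 3)) + 1 = 0 := Fin.last_add_one (M + 2)
      have b2 : (Fin.last (M + 2) : Fin (M + 3)) - 1 = pen M := by
        have : pen M + 1 = Fin.last (M + 2) := fin_succ_eq (by simp [pen])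
        rw [← this]; abel
      unfold hh
      rw [b1, b2]
  -- third homotopy
  have s3 : ∃ g : K → EE M, Continuous g ∧ (∀ x, g x ≠ 0) ∧ ∀ x ∈ C, g x = φ x + e x := by
    refine ext_lemma hC (fun x => φ x + e x) φ (hφ.add he) ?_ ⟨φ, hφ, hφne, fun _ _ => rfl⟩
    intro x hx s hs0 hs1 h0
    have c1 : (1 - s) • (G M (t x) + 0) + s • G M (t x) = 0 := congrArg Prod.fst h0
    have c2 : (1 - s) * ((z x).1 + N * η x) + s * (z x).1 = 0 := congrArg (fun p => p.2.1) h0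
    have c3 : (1 - s) * ((z x).2 + 0) + s * (z x).2 = 0 := congrArg (fun p => p.2.2) h0
    have g0 : G M (t x) = 0 := by
      rw [add_zero, ← add_smul] at c1
      simpa using c1
    have z20 : (z x).2 = 0 := by linarith
    have hq := h1 x g0
    rw [z20] at hq
    have hz1 : (z x).1 = -((1 - s) * (N * η x)) := by linarith
    have hz1le : (z x).1 ≤ 0 := by
      rw [hz1]
      have := mul_nonneg (sub_nonneg.2 hs1) (mul_nonneg hN.le (hη0 x))
      linarith
    by_cases hxN : x ∈ NS
    · have := hns x hx (hNSi x hxN) g0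
      rw [this] at hz1le
      norm_num at hz1le
    · obtain ⟨a1, a2, a3, a4, a5, a6, a7⟩ := hspec x hx hxN
      have a8 := a7 g0
      have := sp_lemma a4 a5 (s := 1) zero_le_one le_rfl M (by rw [← a8, z20]; ring)
      have hη00 : η x = 0 := hηz' x (by rw [a2, g0]) (by rw [a6, this.1]; ring) a3.le
      rw [hη00] at hz1
      rw [hz1] at hq
      simp at hq
  have s2 : ∃ g : K → EE M, Continuous g ∧ (∀ x, g x ≠ 0) ∧ ∀ x ∈ C, g x = PP M (ℓ x) + e x := by
    refine ext_lemma hC (fun x => PP M (ℓ x) + e x) (fun x => φ x + e x) (hΛ.add he) ?_ s3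
    intro x hx s hs0 hs1 h0
    have c1 : (1 - s) • ((PP M (ℓ x)).1 + 0) + s • (G M (t x) + 0) = 0 := congrArg Prod.fst h0
    have c2 : (1 - s) * ((PP M (ℓ x)).2.1 + N * η x) + s * ((z x).1 + N * η x) = 0 := congrArg (fun p => p.2.1) h0
    have c3 : (1 - s) * ((PP M (ℓ x)).2.2 + 0) + s * ((z x).2 + 0) = 0 := congrArg (fun p => p.2.2) h0
    by_cases hxN : x ∈ NS
    · have d1 := hNη x hxN
      have d2 := hb1 x
      have d3 := hb2 x
      rcases hs0.eq_or_lt with h0 | h0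
      · subst h0; linarith
      · nlinarith [mul_nonneg (sub_nonneg.2 hs1) (by linarith : 0 ≤ (PP M (ℓ x)).2.1 + N * η x),
          mul_pos h0 (by linarith : 0 < (z x).1 + N * η x)]
    · obtain ⟨a1, a2, a3, a4, a5, a6, a7⟩ := hspec x hx hxN
      have g0 : G M (t x) = 0 := by
        rw [a2, add_zero, ← add_smul] at c1
        simpa using c1
      have a8 := a7 g0
      rw [a6, a8, add_zero, add_zero] at c3
      have := sp_lemma a4 a5 hs0 hs1 M c3
      have hη00 : η x = 0 := hηz' x (by rw [a2, g0]) (by rw [a6, this.1]; ring) a3.le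
      rw [hη00, a8, this.2] at c2
      rcases hs0.eq_or_lt with h0 | h0
      · subst h0; linarith
      · nlinarith [mul_nonneg (sub_nonneg.2 hs1) (neg_nonneg.2 a3.le)]
  refine ext_lemma hC (fun x => PP M (ℓ x)) (fun x => PP M (ℓ x) + e x) hΛ ?_ s2
  intro x hx s hs0 hs1 h0
  have c1 : (1 - s) • (PP M (ℓ x)).1 + s • ((PP M (ℓ x)).1 + 0) = 0 := congrArg Prod.fst h0
  have c2 : (1 - s) * (PP M (ℓ x)).2.1 + s * ((PP M (ℓ x)).2.1 + N * η x) = 0 := congrArg (fun p => p.2.1) h0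
  have c3 : (1 - s) * (PP M (ℓ x)).2.2 + s * ((PP M (ℓ x)).2.2 + 0) = 0 := congrArg (fun p => p.2.2) h0
  have g0 : (PP M (ℓ x)).1 = 0 := by
    rw [add_zero, ← add_smul] at c1
    simpa using c1
  have g2 : (PP M (ℓ x)).2.2 = 0 := by linarith
  have g1 : (PP M (ℓ x)).2.1 = -(s * (N * η x)) := by linarith
  have hη00 : η x = 0 := by
    apply hηz' x g0 g2
    rw [g1]
    have := mul_nonneg hs0 (mul_nonneg hN.le (hη0 x))
    linarith
  rw [hη00] at g1
  apply h2 x hx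
  refine Prod.ext g0 (Prod.ext ?_ g2)
  rw [g1]; simp

end WD

namespace WD

lemma ev_bdL_ofFn {α : Type*} {n : ℕ} (c : List α → ℤ) (g : Fin (n + 1) → α) :
    ev c (bdL (List.ofFn g)) = ∑ j : Fin (n + 1), (-1) ^ (j : ℕ) * c (List.ofFn fun i : Fin n => g (j.succAbove i)) := by
  induction n generalizing c with
  | zero =>
    simp [bdL]
  | succ n ih =>
    rw [List.ofFn_succ, bdL, map_sub, ev_single, ev_pre, ih]
    rw [Fin.sum_univ_succ (n := n + 1)]
    simp only [Fin.val_zero, pow_zero, one_mul, Fin.succAbove_zero, Fin.val_succ, sub_eq_add_neg, ← Finset.sum_neg_distrib]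
    congr 1
    apply Finset.sum_congr rfl
    intro j _
    rw [List.ofFn_succ (f := fun i => g (j.succ.succAbove i))]
    simp only [Fin.succ_succAbove_succ, Fin.succ_succAbove_zero, pow_succ]
    ring

lemma eL_zero {m : ℕ} {l : List (Fin (m + 1))} {i : Fin (m + 1)} (hi : i ≠ Fin.last m) (h : i ∉ l) :
    eL m l = 0 := by
  by_contra h0
  have h1 := altL_mem (R := ℤ) l
  have h2 : tgt m ∈ {l' : List (Fin (m + 1)) | l'.Perm l ∧ l'.Pairwise (· < ·)} := by
    apply (Finsupp.mem_supported ℤ _).1 h1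
    rw [Finset.mem_coe, Finsupp.mem_support_iff]
    exact h0
  apply h
  rw [← h2.1.mem_iff]
  unfold tgt
  rw [List.mem_map]
  exact ⟨i.castPred hi, List.mem_finRange _, by simp⟩

lemma eL_tgt (m : ℕ) : eL m (tgt m) = 1 := by
  unfold eL
  rw [altL_sorted]
  · simp
  · unfold tgt
    rw [List.pairwise_map]
    exact (List.pairwise_lt_finRange m).imp (fun h => h)

section pointwise
variable {V : Type*} [Fintype V] [DecidableEq V] {M : ℕ} (L : Finset V → Fin (M + 3))

/-- label weights -/
noncomputable def ell (s : V → ℝ) (i : Fin (M + 3)) : ℝ :=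
  ∑ F ∈ Finset.univ.filter (fun F : Finset V => F.Nonempty ∧ L F = i), tt s F

lemma ell_nonneg (s : V → ℝ) (i : Fin (M + 3)) : 0 ≤ ell L s i :=
  Finset.sum_nonneg fun F _ => tt_nonneg s F

lemma ell_pos_iff (s : V → ℝ) (i : Fin (M + 3)) :
    0 < ell L s i ↔ ∃ F : Finset V, (F.Nonempty ∧ L F = i) ∧ 0 < tt s F := by
  unfold ell
  rw [Finset.sum_pos_iff_of_nonneg (fun F _ => tt_nonneg s F)]
  simp

lemma ell_continuous {K : Type*} [TopologicalSpace K] {s : V → K → ℝ} (hs : ∀ v, Continuous (s v))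
    (i : Fin (M + 3)) : Continuous fun x => ell L (fun v => s v x) i := by
  unfold ell
  exact continuous_finsetSum _ fun F _ => tt_continuous hs F

lemma ell_special (hL : ∀ F G : Finset V, F.Nonempty → F ⊆ G → L F ≤ L G) (s : V → ℝ)
    (hc : (Finset.univ.filter fun v => 0 < s v).card ≤ M + 2)
    (h : ∀ i, i ≠ Fin.last (M + 2) → ell L s i ≠ 0) (F : Finset V) (hF : F.Nonempty) (hFt : 0 < tt s F) :
    F.card = (L F : ℕ) + 1 := by
  have h1 : ∀ i : Fin (M + 2), ∃ F : Finset V, (F.Nonempty ∧ L F = i.castSucc) ∧ 0 < tt s F := fun i =>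
    (ell_pos_iff L s _).1 (lt_of_le_of_ne (ell_nonneg L s _) (h i.castSucc (Fin.castSucc_lt_last i).ne).symm)
  choose P hP hPt using h1
  have hle : ∀ G : Finset V, 0 < tt s G → G.card ≤ M + 2 := fun G hG => (tt_card hG).trans hc
  have hmono : ∀ i j, i < j → (P i).card < (P j).card := by
    intro i j hij
    by_contra hcon
    have := hL _ _ (hP j).1 (tt_sub (hPt j) (hPt i) (not_lt.1 hcon))
    rw [(hP i).2, (hP j).2] at this
    exact absurd hij (not_lt.2 (Fin.castSucc_le_castSucc_iff.1 this))
  have hpos : ∀ i, 0 < (P i).card := fun i => (hP i).1.card_pos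
  let f : Fin (M + 2) → Fin (M + 2) := fun i => ⟨(P i).card - 1, by have := hle _ (hPt i); have := hpos i; omega⟩
  have hf : StrictMono f := by
    intro i j hij
    have := hmono i j hij
    have := hpos i
    show (P i).card - 1 < (P j).card - 1
    omega
  have hid : f = id := by
    apply (StrictMono.range_inj hf strictMono_id).1
    rw [(Finite.injective_iff_surjective.1 hf.injective).range_eq]
    simp
  have hFc := hF.card_pos
  have hFl := hle F hFt
  let k : Fin (M + 2) := ⟨F.card - 1, by omega⟩
  have hk : (P k).card = F.card := by
    have e : (f k : ℕ) = k := by rw [hid]; rfl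
    have e' : (P k).card - 1 = F.card - 1 := e
    have := hpos k
    omega
  have : P k = F := tt_eq (hPt k) hFt hk
  rw [← this, (hP k).2, this]
  show F.card = F.card - 1 + 1
  omega

lemma ell_eq_TT (s : V → ℝ) (h : ∀ F : Finset V, F.Nonempty → 0 < tt s F → F.card = (L F : ℕ) + 1)
    (i : Fin (M + 3)) : TT s i = ell L s i := by
  unfold TT ell
  rw [Finset.sum_filter, Finset.sum_filter]
  apply Finset.sum_congr rfl
  intro F _
  rcases (tt_nonneg s F).eq_or_lt with h0 | h0
  · simp [← h0]
  · congr 1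
    rw [eq_iff_iff]
    constructor
    · intro h1
      have hF : F.Nonempty := by rw [← Finset.card_pos]; omega
      have := h F hF h0
      exact ⟨hF, Fin.ext (by omega)⟩
    · rintro ⟨h1, rfl⟩
      exact h F h1 h0

end pointwise
end WD

namespace WD
open MeanDimPaper

theorem part1 {K : Type u} [MetricSpace K] [CompactSpace K] [Nonempty K] (M : ℕ) (hd : topDim K ≤ ((M + 2 : ℕ) : ℕ∞))
    (lam : K → Fin (M + 3)) (A : Set K) (ε : ℝ) (hε : 0 < ε)
    (hmiss : ∀ S : Set K, (∀ x ∈ S, x ∈ A) → (∀ x ∈ S, ∀ y ∈ S, dist x y < ε) → ∃ j, ∀ x ∈ S, lam x ≠ j)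
    (c' : List K → ℤ) (h0 : ∀ l : List K, l.length = M + 3 → Small ε l → ev c' (bdL l) = 0)
    (hA : ∀ l : List K, l.length = M + 2 → Small ε l → (∀ x ∈ l, x ∈ A) → c' l = eL (M + 2) (l.map lam)) :
    ∃ ℓ' : K → Fin (M + 3) → ℝ, Continuous ℓ' ∧ (∀ x, ∃ j, 0 < ℓ' x j) ∧ (∀ x, ∃ j, ℓ' x j = 0) ∧
      ∀ x j, 0 < ℓ' x j → (∃ y, y ∉ A ∧ dist x y < ε) ∨ (∃ y, dist x y < ε ∧ lam y = j) := by
  classical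
  obtain ⟨V, _, s, hs, hs0, hsp, hsub, hcard⟩ := exists_part (M + 2) hd {U | ∃ p : K, U = Metric.ball p (ε / 4)} (by
    constructor
    · rintro U ⟨p, rfl⟩; exact Metric.isOpen_ball
    · rw [Set.eq_univ_iff_forall]
      intro x
      exact ⟨_, ⟨x, rfl⟩, Metric.mem_ball_self (by linarith)⟩)
  have hpt : ∀ v, ∃ p : K, ∀ x, 0 < s v x → dist x p < ε / 4 := by
    intro v
    obtain ⟨U, ⟨p, rfl⟩, h⟩ := hsub v
    exact ⟨p, fun x hx => h x hx⟩
  choose pt hpt using hpt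
  have hVne : Nonempty V := ⟨(hsp (Classical.arbitrary K)).choose⟩
  have htop : ∀ F : Finset V, ∃ v, F.Nonempty → v ∈ F ∧ ∀ w ∈ F, lam (pt w) ≤ lam (pt v) := by
    intro F
    by_cases hF : F.Nonempty
    · obtain ⟨v, hv, h⟩ := Finset.exists_max_image F (fun w => lam (pt w)) hF
      exact ⟨v, fun _ => ⟨hv, h⟩⟩
    · exact ⟨Classical.arbitrary V, fun h => absurd h hF⟩
  choose top htop using htop
  let sv : Finset V → K := fun F => pt (top F)
  let L : Finset V → Fin (M + 3) := fun F => lam (sv F)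
  have hL : ∀ F G : Finset V, F.Nonempty → F ⊆ G → L F ≤ L G := by
    intro F G hF hFG
    exact (htop G (hF.mono hFG)).2 _ (hFG (htop F hF).1)
  let t : K → Fin (M + 3) → ℝ := fun x j => TT (fun v => s v x) j
  let ℓ : K → Fin (M + 3) → ℝ := fun x j => ell L (fun v => s v x) j
  have htc : Continuous t := continuous_pi fun j => TT_continuous hs j
  have hℓc : Continuous ℓ := continuous_pi fun j => ell_continuous L hs j
  have hℓ0 : ∀ x i, 0 ≤ ℓ x i := fun x i => ell_nonneg L _ i
  have ht0 : ∀ x i, 0 ≤ t x i := fun x i => TT_nonneg _ _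
  have hne : ∀ x, ∃ j, t x j ≠ 0 := by
    intro x
    obtain ⟨j, hj⟩ := TT_exists (fun v => s v x) (M + 2) (hsp x) (hcard x)
    exact ⟨j, hj.ne'⟩
  -- representative points are close
  have hsvd : ∀ x (F : Finset V), F.Nonempty → 0 < tt (fun v => s v x) F → 0 < s (top F) x ∧ dist x (sv F) < ε / 4 := by
    intro x F hF hFt
    have := ((tt_pos_iff _ _).1 hFt).2 _ (htop F hF).1
    exact ⟨this, hpt _ _ this⟩
  have hsmall : ∀ x (S : Set (Finset V)), (∀ F ∈ S, F.Nonempty ∧ 0 < tt (fun v => s v x) F) →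
      ∀ F ∈ S, ∀ F' ∈ S, dist (sv F) (sv F') < ε := by
    intro x S hS F hF F' hF'
    have h1 := (hsvd x F (hS F hF).1 (hS F hF).2).2
    have h2 := (hsvd x F' (hS F' hF').1 (hS F' hF').2).2
    have := dist_triangle_left (sv F) (sv F') x
    linarith
  let c : (Fin (M + 3) → Finset V) → Fin (M + 3) → ℤ := fun φ j =>
    c' (List.ofFn fun i : Fin (M + 2) => sv (φ (j.succAbove i)))
  have hdep : ∀ φ φ' j, (∀ i, i ≠ j → φ i = φ' i) → c φ j = c φ' j := by
    intro φ φ' j h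
    show c' _ = c' _
    congr 2
    funext i
    rw [h _ (Fin.succAbove_ne j i)]
  have hcoc : ∀ x φ, (∀ j : Fin (M + 3), (φ j).card = (j : ℕ) + 1 ∧ 0 < tt (fun v => s v x) (φ j)) →
      ∑ i : Fin (M + 3), (-1) ^ (i : ℕ) * c φ i = 0 := by
    intro x φ hφ
    have := ev_bdL_ofFn c' (fun i => sv (φ i))
    rw [h0 _ (by simp)] at this
    · exact this.symm
    · intro a ha b hb
      rw [List.mem_ofFn] at ha hb
      obtain ⟨i, rfl⟩ := ha
      obtain ⟨j, rfl⟩ := hb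
      refine hsmall x (Set.range φ) ?_ _ ⟨i, rfl⟩ _ ⟨j, rfl⟩
      rintro F ⟨k, rfl⟩
      refine ⟨?_, (hφ k).2⟩
      rw [← Finset.card_pos, (hφ k).1]; omega
  obtain ⟨z, hzc, hz⟩ := zmap s hs t (fun _ _ => rfl) hne c hdep hcoc
  let KA : Set K := {x | ∀ v, pt v ∉ A → s v x = 0}
  let supp : K → Finset V := fun x => Finset.univ.filter fun v => 0 < s v x
  have hmsupp : ∀ x v, v ∈ supp x ↔ 0 < s v x := fun x v => by simp [supp]
  let FF : Set (Finset V) := {F | (∃ x, F = supp x) ∧ ∃ v ∈ F, pt v ∉ A}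
  let KB : Set K := ⋃ F ∈ FF, {x | ∀ v, v ∉ F → s v x = 0}
  have hKAc : IsClosed KA := by
    have : KA = ⋂ v, ⋂ (_ : pt v ∉ A), {x | s v x = 0} := by ext x; simp [KA]
    rw [this]
    exact isClosed_iInter fun v => isClosed_iInter fun _ => isClosed_eq (hs v) continuous_const
  have hKBc : IsClosed KB := by
    apply Set.Finite.isClosed_biUnion (Set.toFinite _)
    intro F _
    have : {x | ∀ v, v ∉ F → s v x = 0} = ⋂ v, ⋂ (_ : v ∉ F), {x | s v x = 0} := by ext x; simp
    rw [this]
    exact isClosed_iInter fun v => isClosed_iInter fun _ => isClosed_eq (hs v) continuous_const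
  have hcov : ∀ x, x ∈ KA ∨ x ∈ KB := by
    intro x
    by_cases h : x ∈ KA
    · exact Or.inl h
    · right
      have : ∃ v, pt v ∉ A ∧ s v x ≠ 0 := by
        by_contra hcon
        push Not at hcon
        exact h hcon
      obtain ⟨v, hv, hvx⟩ := this
      have hvp : 0 < s v x := lt_of_le_of_ne (hs0 v x) hvx.symm
      refine Set.mem_biUnion (x := supp x) ⟨⟨x, rfl⟩, v, (hmsupp x v).2 hvp, hv⟩ ?_
      intro w hw
      rw [hmsupp] at hw
      exact le_antisymm (not_lt.1 hw) (hs0 w x)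
  have hKB : ∀ x ∈ KB, ∃ v, pt v ∉ A ∧ dist x (pt v) < ε := by
    intro x hx
    simp only [KB, Set.mem_iUnion] at hx
    obtain ⟨F, ⟨⟨x', rfl⟩, v, hv, hvA⟩, hxF⟩ := hx
    refine ⟨v, hvA, ?_⟩
    obtain ⟨w, hw⟩ := hsp x
    have hw' : 0 < s w x' := by
      by_contra hcon
      have := hxF w (by rw [hmsupp]; exact hcon)
      linarith
    rw [hmsupp] at hv
    have e1 := hpt w x hw
    have e2 := hpt w x' hw'
    have e3 := hpt v x' hv
    have e4 := dist_triangle x (pt w) (pt v)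
    have e5 := dist_triangle_left (pt w) (pt v) x'
    linarith
  have hKAsv : ∀ x ∈ KA, ∀ F : Finset V, F.Nonempty → 0 < tt (fun v => s v x) F → sv F ∈ A := by
    intro x hx F hF hFt
    by_contra hcon
    have h1 := hx _ hcon
    have h2 := (hsvd x F hF hFt).1
    linarith
  have hCcard : ∀ x ∈ KA ∩ KB, (supp x).card ≤ M + 2 := by
    rintro x ⟨hxA, hxB⟩
    simp only [KB, Set.mem_iUnion] at hxB
    obtain ⟨F, ⟨⟨x', rfl⟩, v, hv, hvA⟩, hxF⟩ := hxB
    have hss : supp x ⊂ supp x' := by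
      rw [Finset.ssubset_iff_of_subset]
      · refine ⟨v, hv, ?_⟩
        rw [hmsupp, hxA v hvA]; exact lt_irrefl _
      · intro w hw
        rw [hmsupp] at hw
        by_contra hcon
        have := hxF w hcon
        linarith
    have h1 := Finset.card_lt_card hss
    have h2 : (supp x').card ≤ M + 2 + 1 := hcard x'
    omega
  have hPP : ∀ x ∈ KA, PP M (ℓ x) ≠ 0 := by
    intro x hx hcon
    obtain ⟨a, ha⟩ := PP_ker hcon
    obtain ⟨F0, hF0, hF0t⟩ := tt_exists (fun v => s v x) (hsp x)
    have hp : 0 < ℓ x (L F0) := (ell_pos_iff L _ _).2 ⟨F0, ⟨hF0, rfl⟩, hF0t⟩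
    have hap : 0 < a := by
      rw [ha] at hp
      exact pos_of_mul_pos_left hp (kk_pos _).le
    have hall : ∀ j, 0 < ℓ x j := by
      intro j
      rw [ha]
      exact mul_pos hap (kk_pos j)
    obtain ⟨j, hj⟩ := hmiss (sv '' {F | F.Nonempty ∧ 0 < tt (fun v => s v x) F}) (by
        rintro _ ⟨F, hF, rfl⟩
        exact hKAsv x hx F hF.1 hF.2) (by
        rintro _ ⟨F, hF, rfl⟩ _ ⟨F', hF', rfl⟩
        exact hsmall x _ (fun F hF => hF) F hF F' hF')
    obtain ⟨F, hF, hFt⟩ := (ell_pos_iff L _ _).1 (hall j)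
    exact hj _ ⟨F, ⟨hF.1, hFt⟩, rfl⟩ hF.2
  have htlast : ∀ x ∈ KA ∩ KB, t x (Fin.last (M + 2)) = 0 := by
    intro x hx
    by_contra hcon
    obtain ⟨F, hF, hFt⟩ := (TT_pos_iff _ _).1 (lt_of_le_of_ne (ht0 x _) (Ne.symm hcon))
    have h1 := tt_card hFt
    have h2 := hCcard x hx
    have h3 : (supp x).card = (Finset.univ.filter fun v => 0 < s v x).card := rfl
    simp only [Fin.val_last] at hF
    omega
  have hflag : ∀ x, ∃ φ : Fin (M + 3) → Finset V, ∀ i, t x i ≠ 0 →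
      (φ i).card = (i : ℕ) + 1 ∧ 0 < tt (fun v => s v x) (φ i) := by
    intro x
    have : ∀ i, ∃ F : Finset V, t x i ≠ 0 → F.card = (i : ℕ) + 1 ∧ 0 < tt (fun v => s v x) F := by
      intro i
      by_cases h : t x i = 0
      · exact ⟨∅, fun h' => absurd h h'⟩
      · obtain ⟨F, hF⟩ := (TT_pos_iff _ _).1 (lt_of_le_of_ne (ht0 x _) (Ne.symm h))
        exact ⟨F, fun _ => hF⟩
    choose φ hφ using this
    exact ⟨φ, hφ⟩
  have hclast : ∀ x ∈ KA, ∀ φ : Fin (M + 3) → Finset V,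
      (∀ i, i ≠ Fin.last (M + 2) → (φ i).card = (i : ℕ) + 1 ∧ 0 < tt (fun v => s v x) (φ i)) →
      c φ (Fin.last (M + 2)) = eL (M + 2) ((List.finRange (M + 2)).map fun i => L (φ i.castSucc)) := by
    intro x hx φ hφ
    have hne' : ∀ i : Fin (M + 2), (φ i.castSucc).Nonempty := by
      intro i
      rw [← Finset.card_pos, (hφ i.castSucc (Fin.castSucc_lt_last i).ne).1]; omega
    have e : c φ (Fin.last (M + 2)) = c' (List.ofFn fun i : Fin (M + 2) => sv (φ i.castSucc)) := by
      show c' _ = _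
      simp only [Fin.succAbove_last]
    rw [e, hA]
    · rw [List.ofFn_eq_map, List.map_map]
      rfl
    · simp
    · intro a ha b hb
      rw [List.mem_ofFn] at ha hb
      obtain ⟨i, rfl⟩ := ha
      obtain ⟨j, rfl⟩ := hb
      refine hsmall x (Set.range fun i : Fin (M + 2) => φ i.castSucc) ?_ _ ⟨i, rfl⟩ _ ⟨j, rfl⟩
      rintro F ⟨k, rfl⟩
      exact ⟨hne' k, (hφ k.castSucc (Fin.castSucc_lt_last k).ne).2⟩
    · intro a ha
      rw [List.mem_ofFn] at ha
      obtain ⟨i, rfl⟩ := ha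
      exact hKAsv x hx _ (hne' i) (hφ i.castSucc (Fin.castSucc_lt_last i).ne).2
  obtain ⟨g, hgc, hgne, hg⟩ := hopf_ext (C := KA ∩ KB) (hKAc.inter hKBc) ℓ t z hℓc htc hzc
    (fun x hx => (hz x hx).1) hℓ0 (fun x hx => hPP x hx.1)
    (by
      rintro x hx ⟨i, hi, hli⟩ hG
      obtain ⟨φ, hφ⟩ := hflag x
      rw [(hz x hG).2 φ _ (htlast x hx) hφ]
      have hQ : IsQ (t x) := ⟨ht0 x, hne x, hG⟩
      by_cases hex : ∃ k, k ≠ Fin.last (M + 2) ∧ t x k = 0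
      · obtain ⟨k, hk, hk0⟩ := hex
        rcases hh_zero_one hQ (htlast x hx) hk0 hk with h | h
        · rw [h, mul_zero]
          have := cs_int 0
          simpa using this
        · rw [h, mul_one]
          have := cs_int ((-1) ^ ((Fin.last (M + 2) : Fin (M + 3)) : ℕ) * c φ (Fin.last (M + 2)))
          rw [← this]
          push_cast
          rfl
      · push Not at hex
        have hc0 : c φ (Fin.last (M + 2)) = 0 := by
          rw [hclast x hx.1 φ (fun i hi => hφ i (hex i hi))]
          apply eL_zero hi
          intro hmem
          rw [List.mem_map] at hmem
          obtain ⟨k, -, hk⟩ := hmem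
          have hφk := hφ k.castSucc (hex _ (Fin.castSucc_lt_last k).ne)
          have : 0 < ℓ x i := (ell_pos_iff L _ _).2 ⟨φ k.castSucc, ⟨by
            rw [← Finset.card_pos, hφk.1]; omega, hk⟩, hφk.2⟩
          linarith
        rw [hc0]
        have := cs_int 0
        simpa using this)
    (by
      intro x hx hall
      have hspec := ell_special L hL (fun v => s v x) (hCcard x hx) hall
      have htl : t x = ℓ x := funext fun i => ell_eq_TT L (fun v => s v x) hspec i
      refine ⟨htl, ?_, ?_⟩
      · rw [← htl]; exact htlast x hx
      · intro hG
        obtain ⟨φ, hφ⟩ := hflag x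
        rw [(hz x hG).2 φ _ (htlast x hx) hφ]
        have hφ' : ∀ i, i ≠ Fin.last (M + 2) → (φ i).card = (i : ℕ) + 1 ∧ 0 < tt (fun v => s v x) (φ i) := by
          intro i hi
          exact hφ i (by rw [htl]; exact hall i hi)
        have hc1 : c φ (Fin.last (M + 2)) = 1 := by
          rw [hclast x hx.1 φ hφ', ← eL_tgt (M + 2)]
          congr 1
          unfold tgt
          apply List.map_congr_left
          intro i _
          have h1 := hφ' i.castSucc (Fin.castSucc_lt_last i).ne
          have h2 := hspec (φ i.castSucc) (by rw [← Finset.card_pos, h1.1]; omega) h1.2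
          exact Fin.ext (by omega)
        rw [hc1, Fin.val_last, pow_add]
        norm_num)
  let E : Bool → Set K := fun b => if b then KA else KB
  let gg : Bool → K → EE M := fun b => if b then fun x => PP M (ℓ x) else g
  have hPc : Continuous fun x => PP M (ℓ x) := (PP M).continuous_of_finiteDimensional.comp hℓc
  obtain ⟨f, hfc, hf⟩ := glue E (fun b => by cases b <;> simp [E, hKAc, hKBc]) gg
    (fun b => by
      cases b
      · exact hgc.continuousOn
      · exact hPc.continuousOn)
    (by
      intro i j x hi hj
      cases i <;> cases j
      · rfl
      · exact hg x ⟨hj, hi⟩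
      · exact (hg x ⟨hi, hj⟩).symm
      · rfl)
  have hfA : ∀ x ∈ KA, f x = PP M (ℓ x) := fun x hx => hf true x hx
  have hfB : ∀ x ∈ KB, f x = g x := fun x hx => hf false x hx
  have hfcont : Continuous f := by
    rw [← continuousOn_univ]
    refine hfc.mono ?_
    intro x _
    rcases hcov x with h | h
    · exact Set.mem_iUnion.2 ⟨true, h⟩
    · exact Set.mem_iUnion.2 ⟨false, h⟩
  have hfne : ∀ x, f x ≠ 0 := by
    intro x
    rcases hcov x with h | h
    · rw [hfA x h]; exact hPP x h
    · rw [hfB x h]; exact hgne x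
  obtain ⟨ρ, hρc, hρ0, hρz, hρp, hρl⟩ := retr M
  refine ⟨fun x => ρ (f x), hρc.comp hfcont, fun x => hρp _ (hfne x), fun x => hρz _, ?_⟩
  intro x j hj
  rcases hcov x with h | h
  · right
    replace hj : 0 < ρ (f x) j := hj
    rw [hfA x h] at hj
    have := hρl (ℓ x) (hℓ0 x) j
    obtain ⟨F, hF, hFt⟩ := (ell_pos_iff L _ _).1 (lt_of_lt_of_le hj this)
    exact ⟨sv F, by linarith [(hsvd x F hF.1 hFt).2], hF.2⟩
  · left
    obtain ⟨v, hv, hvd⟩ := hKB x h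
    exact ⟨pt v, hv, hvd⟩

end WD

namespace WD
open MeanDimPaper

theorem good_of_dim {K : Type u} [MetricSpace K] [CompactSpace K] (M : ℕ) (hd : topDim K = ((M + 2 : ℕ) : ℕ∞)) :
    Good K (M + 2) := by
  classical
  obtain ⟨α, hα, hαD⟩ : ∃ α : Set (Set K), MeanDimPaper.IsOpenCover α ∧ ((M + 2 : ℕ) : ℕ∞) ≤ covD α := by
    by_contra hcon
    push Not at hcon
    have : topDim K ≤ ((M + 1 : ℕ) : ℕ∞) := by
      unfold topDim
      refine iSup₂_le fun α hα => ?_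
      have h := hcon α hα
      exact Order.le_of_lt_add_one (by exact_mod_cast h)
    rw [hd] at this
    have h2 : M + 2 ≤ M + 1 := by exact_mod_cast this
    omega
  obtain ⟨V, _, s, hs, hs0, hsp, hsub, hcard⟩ := exists_part (M + 2) hd.le α hα
  have hKne : Nonempty K := by
    by_contra hcon
    rw [not_nonempty_iff] at hcon
    exact main1 (M + 2) (by omega) α hαD s hs hsub (fun x => isEmptyElim x)
      (continuous_of_const fun x => isEmptyElim x) (fun x => isEmptyElim x) (fun x => isEmptyElim x) (fun x => isEmptyElim x)
  let T : K → Fin (M + 3) → ℝ := fun x j => TT (fun v => s v x) j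
  have hTc : Continuous T := continuous_pi fun j => TT_continuous hs j
  have hT0 : ∀ x j, 0 ≤ T x j := fun x j => TT_nonneg _ _
  have hTu : ∀ e > 0, ∃ δ > 0, ∀ x y, dist x y < δ → ∀ j, |T x j - T y j| < e := by
    intro e he
    obtain ⟨δ, hδ, h⟩ := Metric.uniformContinuous_iff.1 (CompactSpace.uniformContinuous_of_continuous hTc) e he
    refine ⟨δ, hδ, fun x y hxy j => ?_⟩
    have h1 := h hxy
    rw [dist_pi_lt_iff he] at h1
    exact h1 j
  have hmax : ∀ x, ∃ j, ∀ i, T x i ≤ T x j := fun x => Finite.exists_max (T x)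
  choose lam hlam using hmax
  obtain ⟨τ, hτ, hτl⟩ : ∃ τ > 0, ∀ x, τ ≤ T x (lam x) := by
    have hSc : Continuous fun x => ∑ j, T x j := continuous_finsetSum _ fun j _ => (continuous_apply j).comp hTc
    obtain ⟨x0, -, hx0⟩ := isCompact_univ.exists_isMinOn Set.univ_nonempty hSc.continuousOn
    have hpos : 0 < ∑ j, T x0 j := by
      obtain ⟨j, hj⟩ := TT_exists (fun v => s v x0) (M + 2) (hsp x0) (hcard x0)
      exact Finset.sum_pos' (fun j _ => hT0 x0 j) ⟨j, Finset.mem_univ _, hj⟩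
    refine ⟨(∑ j, T x0 j) / (M + 3), by positivity, fun x => ?_⟩
    have h1 : ∑ j, T x0 j ≤ ∑ j, T x j := hx0 (Set.mem_univ x)
    have h2 : ∑ j, T x j ≤ (Finset.univ : Finset (Fin (M + 3))).card • T x (lam x) :=
      Finset.sum_le_card_nsmul _ _ _ fun j _ => hlam x j
    rw [Finset.card_univ, Fintype.card_fin, nsmul_eq_mul] at h2
    push_cast at h2
    rw [div_le_iff₀ (by positivity)]
    linarith
  have F1 : ∀ η, 0 < η → η < τ → ∃ ε > 0, ∀ S : Set K, (∀ x ∈ S, x ∈ {x | ∃ j, T x j ≤ η}) →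
      (∀ x ∈ S, ∀ y ∈ S, dist x y < ε) → ∃ j, ∀ x ∈ S, lam x ≠ j := by
    intro η hη hητ
    obtain ⟨δ, hδ, h⟩ := hTu (τ - η) (by linarith)
    refine ⟨δ, hδ, fun S hS hSd => ?_⟩
    rcases S.eq_empty_or_nonempty with rfl | ⟨x0, hx0⟩
    · exact ⟨0, by simp⟩
    · obtain ⟨j, hj⟩ := hS x0 hx0
      refine ⟨j, fun x hx hxj => ?_⟩
      have h1 := abs_lt.1 (h x0 x (hSd x0 hx0 x hx) j)
      have h2 := hτl x
      rw [hxj] at h2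
      linarith [h1.1]
  refine part2 (M + 2) (by omega) lam (fun η => {x | ∃ j, T x j ≤ η}) τ hτ F1 ?_ ?_
  · intro η η' hηη
    obtain ⟨δ, hδ, h⟩ := hTu (η' - η) (by linarith)
    refine ⟨δ, hδ, ?_⟩
    rintro x ⟨j, hj⟩ y hxy
    refine ⟨j, ?_⟩
    have h1 := abs_lt.1 (h x y hxy j)
    linarith [h1.1]
  · rintro η hη hητ ε hε ⟨c, hc0, hc⟩
    obtain ⟨δ1, hδ1, h1⟩ := F1 η hη hητ
    obtain ⟨δ2, hδ2, h2⟩ := hTu η hη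
    let ε' := min ε (min δ1 δ2)
    have e1 : ε' ≤ ε := min_le_left _ _
    have e2 : ε' ≤ δ1 := (min_le_right _ _).trans (min_le_left _ _)
    have e3 : ε' ≤ δ2 := (min_le_right _ _).trans (min_le_right _ _)
    have hε' : 0 < ε' := lt_min hε (lt_min hδ1 hδ2)
    obtain ⟨ℓ', hℓc, hℓp, hℓz, hℓ⟩ := part1 M hd.le lam {x | ∃ j, T x j ≤ η} ε' hε'
      (fun S hS hSd => h1 S hS fun x hx y hy => lt_of_lt_of_le (hSd x hx y hy) e2)
      (fun l => eL (M + 2) (l.map lam) - c l)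
      (by
        intro l hl hsm
        rw [ev_sub (fun l => eL (M + 2) (l.map lam)) c, hc l hl (fun x hx y hy => lt_of_lt_of_le (hsm x hx y hy) e1),
          ← ev_mp, mp_bdL]
        exact sub_self _)
      (by
        intro l hl hsm hlA
        rw [hc0 l hl (fun x hx y hy => lt_of_lt_of_le (hsm x hx y hy) e1) hlA, sub_zero])
    refine main1 (M + 2) (by omega) α hαD s hs hsub ℓ' hℓc hℓp hℓz ?_
    intro x j hj
    have hgoal : ∀ y, dist x y < ε' → η < T y j → 0 < T x j := by
      intro y hxy hy
      have := abs_lt.1 (h2 x y (lt_of_lt_of_le hxy e3) j)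
      linarith [this.1]
    rcases hℓ x j hj with ⟨y, hyA, hxy⟩ | ⟨y, hxy, hyj⟩
    · apply hgoal y hxy
      by_contra hcon
      exact hyA ⟨j, not_lt.1 hcon⟩
    · apply hgoal y hxy
      have := hτl y
      rw [hyj] at this
      linarith

end WD

namespace MeanDimPaper

variable {X : Type*} [TopologicalSpace X]

theorem widim_pow_ge {K : Type*} [MetricSpace K] [CompactSpace K]
    (hfin : topDim K ≠ ⊤) :
    ∃ δ : ℝ, 0 < δ ∧ ∀ n : ℕ, 1 ≤ n →
      (n : ℕ∞) * (topDim K - 1) ≤ widim δ (fun x y : Fin n → K => dist x y) := by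
  obtain ⟨d, hd⟩ := ENat.ne_top_iff_exists.1 hfin
  by_cases hd2 : d ≤ 1
  · refine ⟨1, one_pos, fun n _ => ?_⟩
    have : topDim K - 1 = 0 := by
      rw [← hd]
      exact tsub_eq_zero_of_le (by exact_mod_cast hd2)
    rw [this, mul_zero]
    exact zero_le
  · obtain ⟨M, rfl⟩ : ∃ M, d = M + 2 := ⟨d - 2, by omega⟩
    obtain ⟨k, ε, hk, hε, hgood⟩ := WD.good_of_dim (K := K) M hd.symm
    refine ⟨ε, hε, fun n _ => ?_⟩
    unfold widim
    refine le_iInf₂ fun α hα => ?_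
    unfold covD
    refine le_iInf₂ fun β hβ => ?_
    obtain ⟨hαc, hαm⟩ := hα
    obtain ⟨hβc, hβr⟩ := hβ
    obtain ⟨D, hD⟩ : ∃ D : ℝ, ∀ x y : Fin n → K, dist x y ≤ D := by
      obtain ⟨D, hD⟩ := (Metric.isBounded_iff (s := (Set.univ : Set (Fin n → K)))).1 isCompact_univ.isBounded
      exact ⟨D, fun x y => hD (Set.mem_univ x) (Set.mem_univ y)⟩
    have hαd : ∀ U ∈ α, ∀ x ∈ U, ∀ y ∈ U, dist x y < ε := by
      intro U hU x hx y hy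
      have h1 : dist x y ≤ diamD (fun x y : Fin n → K => dist x y) U := by
        apply le_csSup
        · refine ⟨D, ?_⟩
          rintro r ⟨a, -, b, -, rfl⟩
          exact hD a b
        · exact ⟨x, hx, y, hy, rfl⟩
      have h2 : diamD (fun x y : Fin n → K => dist x y) U ≤ mesh (fun x y : Fin n → K => dist x y) α := by
        apply le_csSup
        · refine ⟨max D 0, ?_⟩
          rintro r ⟨W, -, rfl⟩
          apply Real.sSup_le
          · rintro r ⟨a, -, b, -, rfl⟩
            exact (hD a b).trans (le_max_left _ _)
          · exact le_max_right _ _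
        · exact ⟨U, hU, rfl⟩
      exact lt_of_le_of_lt (h1.trans h2) hαm
    obtain ⟨f, hf⟩ := hgood n β hβc (by
      intro U hU x hx y hy
      obtain ⟨W, hW, hUW⟩ := hβr U hU
      exact hαd W hW x (hUW hx) y (hUW hy))
    have h1 : ((n * k : ℕ) : ℕ∞) ≤ ord β := by
      unfold ord
      exact le_iSup₂ (f := fun (n' : ℕ) (_ : n' ∈ {n' : ℕ | ∃ f : Fin (n' + 1) → Set (Fin n → K),
        Function.Injective f ∧ (∀ i, f i ∈ β) ∧ (⋂ i, f i).Nonempty}) => (n' : ℕ∞)) (n * k) ⟨f, hf⟩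
    refine le_trans ?_ h1
    rw [← hd]
    have : n * (M + 2 - 1) ≤ n * k := Nat.mul_le_mul_left _ (by omega)
    exact_mod_cast this

end MeanDimPaper
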